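/- arXiv:1901.07304 — 2 statements merged into one kernel-verified Lean document; each statement's English description precedes it below -/
import Mathlib

section
/- Let (X,f) be a TDS, φ: X → ℝ continuous, and μ ∈ M(X,f). Then P_μ(f,φ) = ess sup{h_μ(x) + φ*(x) : x ∈ X}, with the essential supremum taken with respect to μ. If in addition μ is ergodic, then P_μ(f,φ,x) = P_μ(f,φ) = h_μ(f) + ∫_X φ dμ for μ-almost every x ∈ X. -/
open MeasureTheory Filter Set
open scoped ENNReal NNReal

namespace Paper

variable {X : Type*}

/-- Birkhoff sum `S_n φ(x) = ∑_{i<n} φ(f^i x)`. -/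
def birk (f : X → X) (φ : X → ℝ) (n : ℕ) (x : X) : ℝ :=
  ∑ i ∈ Finset.range n, φ (f^[i] x)

section Metric

variable [MetricSpace X]

/-- The Bowen ball `B_n(x, ε) = {y : d_n(x,y) < ε}`. -/
def bowenBall (f : X → X) (x : X) (n : ℕ) (ε : ℝ) : Set X :=
  {y | ∀ i < n, dist (f^[i] x) (f^[i] y) < ε}

/-- The number of indices `0 ≤ j ≤ n-1` with `dist (f^j x, f^j y) > ε`. -/
noncomputable def sepCount (f : X → X) (ε : ℝ) (n : ℕ) (x y : X) : ℕ :=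
  Nat.card {j : ℕ // j < n ∧ ε < dist (f^[j] x) (f^[j] y)}

/-- `A` is an `(n,ε)`-separated set. -/
def IsNSep (f : X → X) (n : ℕ) (ε : ℝ) (A : Set X) : Prop :=
  ∀ x ∈ A, ∀ y ∈ A, x ≠ y → ∃ j < n, ε < dist (f^[j] x) (f^[j] y)

/-- `A` is a `(δ,n,ε)`-separated set. -/
def IsDeltaSep (f : X → X) (δ : ℝ) (n : ℕ) (ε : ℝ) (A : Set X) : Prop :=
  ∀ x ∈ A, ∀ y ∈ A, x ≠ y → δ * n ≤ (sepCount f ε n x y : ℝ)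

end Metric

section Entropy

variable [MeasurableSpace X]

/-- A finite measurable partition of `X`. -/
def IsFinPartition (s : Finset (Set X)) : Prop :=
  (∀ A ∈ s, MeasurableSet A) ∧ ⋃₀ (s : Set (Set X)) = Set.univ ∧
    (s : Set (Set X)).Pairwise Disjoint

/-- The entropy `H(μ, ⋁_{i<n} f^{-i} ξ)` of the `n`-th dynamical refinement of the
partition `s` (with the convention `0 · log 0 = 0`). -/
noncomputable def dynH (f : X → X) (μ : Measure X) (s : Finset (Set X)) (n : ℕ) : ℝ :=
  -∑ w : Fin n → {A // A ∈ s},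
      (μ (⋂ i : Fin n, f^[(i : ℕ)] ⁻¹' ((w i : Set X)))).toReal *
        Real.log (μ (⋂ i : Fin n, f^[(i : ℕ)] ⁻¹' ((w i : Set X)))).toReal

/-- The Kolmogorov–Sinai entropy `h_μ(f)`, as an extended real:
`sup_ξ lim_n H(μ, ξ^n)/n`. -/
noncomputable def ksEntropy (f : X → X) (μ : Measure X) : EReal :=
  ⨆ (s : Finset (Set X)) (_ : IsFinPartition s),
    Filter.atTop.liminf (fun n : ℕ => ((dynH f μ s n / n : ℝ) : EReal))

end Entropy

section Pressure

variable [MetricSpace X] [MeasurableSpace X]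

/-- Brin–Katok local entropy `h_μ(x) = lim_{ε→0} liminf_n -(1/n) log μ(B_n(x,ε))`
(the limit in `ε` being a supremum by monotonicity). -/
noncomputable def localEntropy (f : X → X) (μ : Measure X) (x : X) : EReal :=
  ⨆ (ε : ℝ) (_ : 0 < ε),
    Filter.atTop.liminf (fun n : ℕ =>
      (((n : ℝ)⁻¹ : ℝ) : EReal) * (-(μ (bowenBall f x n ε)).log))

/-- The point-wise measure theoretic pressure
`P_μ(f,φ,x) = lim_{ε→0} liminf_n (1/n)[-log μ(B_n(x,ε)) + S_nφ(x)]`. -/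
noncomputable def ptPressure (f : X → X) (φ : X → ℝ) (μ : Measure X) (x : X) : EReal :=
  ⨆ (ε : ℝ) (_ : 0 < ε),
    Filter.atTop.liminf (fun n : ℕ =>
      (((n : ℝ)⁻¹ : ℝ) : EReal) * (-(μ (bowenBall f x n ε)).log + ((birk f φ n x : ℝ) : EReal)))

/-- `M(Z,φ,α,N,ε)`: infimum of `∑_i exp(-α n_i + S_{n_i}φ(x_i))` over countable covers
of `Z` by Bowen balls `B_{n_i}(x_i,ε)` with `n_i ≥ N`. -/
noncomputable def Mcov (f : X → X) (φ : X → ℝ) (Z : Set X) (α : ℝ) (N : ℕ) (ε : ℝ) : ℝ≥0∞ :=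
  ⨅ (c : ℕ → X × ℕ)
    (_ : (∀ i, N ≤ (c i).2) ∧ Z ⊆ ⋃ i, bowenBall f (c i).1 (c i).2 ε),
      ∑' i, ENNReal.ofReal (Real.exp (-α * ((c i).2 : ℝ) + birk f φ (c i).2 (c i).1))

/-- `m(Z,φ,α,ε) = lim_{N→∞} M(Z,φ,α,N,ε)` (a supremum, by monotonicity in `N`). -/
noncomputable def mZ (f : X → X) (φ : X → ℝ) (Z : Set X) (α : ℝ) (ε : ℝ) : ℝ≥0∞ :=
  ⨆ N : ℕ, Mcov f φ Z α N ε

/-- `P_Z(f,φ,ε) = inf {α : m(Z,φ,α,ε) = 0}`, the jump-up point of `α ↦ m(Z,φ,α,ε)`. -/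
noncomputable def PZeps (f : X → X) (φ : X → ℝ) (Z : Set X) (ε : ℝ) : EReal :=
  ⨅ (α : ℝ) (_ : mZ f φ Z α ε = 0), ((α : ℝ) : EReal)

/-- The topological pressure `P_Z(f,φ) = lim_{ε→0} P_Z(f,φ,ε)` on an arbitrary set `Z`
(the limit in `ε` being a supremum by monotonicity). -/
noncomputable def PZ (f : X → X) (φ : X → ℝ) (Z : Set X) : EReal :=
  ⨆ (ε : ℝ) (_ : 0 < ε), PZeps f φ Z ε

/-- The measure theoretic pressure
`P_μ(f,φ) = lim_{ε→0} inf {P_Z(f,φ,ε) : Z Borel, μ(Z) = 1}`. -/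
noncomputable def Pmu (f : X → X) (φ : X → ℝ) (μ : Measure X) : EReal :=
  ⨆ (ε : ℝ) (_ : 0 < ε),
    ⨅ (Z : Set X) (_ : MeasurableSet Z ∧ μ Z = 1), PZeps f φ Z ε

end Pressure

end Paper

open Paper

set_option linter.unusedSectionVars false
set_option linter.unusedVariables false
open MeasureTheory Filter Set
open scoped ENNReal NNReal
namespace Paper

section Birkhoff
variable {X : Type*} [MeasurableSpace X]

theorem birk_succ_left (f : X → X) (φ : X → ℝ) (n : ℕ) (x : X) :
    birk f φ (n+1) x = φ x + birk f φ n (f x) := by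
  unfold birk
  rw [Finset.sum_range_succ', add_comm]
  simp [Function.iterate_succ_apply]

theorem birk_succ_right (f : X → X) (φ : X → ℝ) (n : ℕ) (x : X) :
    birk f φ (n+1) x = birk f φ n x + φ (f^[n] x) := by
  unfold birk
  rw [Finset.sum_range_succ]

theorem birk_measurable {f : X → X} {φ : X → ℝ} (hf : Measurable f) (hφ : Measurable φ) (n : ℕ) :
    Measurable (birk f φ n) := by
  unfold birk
  exact Finset.measurable_sum _ (fun i _ => hφ.comp (hf.iterate i))

/-- Maximal partial sums. -/
noncomputable def maxS (f : X → X) (g : X → ℝ) : ℕ → X → ℝ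
  | 0, _ => 0
  | n+1, x => max 0 (g x + maxS f g n (f x))

theorem maxS_nonneg (f : X → X) (g : X → ℝ) (n : ℕ) (x : X) : 0 ≤ maxS f g n x := by
  cases n <;> simp [maxS]

theorem maxS_mono (f : X → X) (g : X → ℝ) (n : ℕ) : ∀ x, maxS f g n x ≤ maxS f g (n+1) x := by
  induction n with
  | zero => intro x; simp [maxS]
  | succ n ih =>
    intro x
    rw [maxS, maxS]
    have := ih (f x)
    gcongr

theorem birk_le_maxS (f : X → X) (g : X → ℝ) (n : ℕ) : ∀ x, birk f g n x ≤ maxS f g n x := by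
  induction n with
  | zero => intro x; simp [maxS, birk]
  | succ n ih =>
    intro x
    rw [maxS, birk_succ_left]
    have := ih (f x)
    exact le_max_of_le_right (by linarith)

theorem maxS_measurable {f : X → X} {g : X → ℝ} (hf : Measurable f) (hg : Measurable g) (n : ℕ) :
    Measurable (maxS f g n) := by
  induction n with
  | zero => exact measurable_const
  | succ n ih => exact measurable_const.max (hg.add (ih.comp hf))

theorem maxS_le {f : X → X} {g : X → ℝ} {C : ℝ} (hC : ∀ x, |g x| ≤ C) (n : ℕ) :
    ∀ x, maxS f g n x ≤ n * C := by
  induction n with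
  | zero => intro x; simp [maxS]
  | succ n ih =>
    intro x
    have h1 := ih (f x)
    have h2 := hC x
    have h3 := abs_nonneg (g x)
    have h4 := le_abs_self (g x)
    rw [maxS]
    push_cast
    refine max_le (by nlinarith [maxS_nonneg f g n (f x)]) (by linarith)

theorem integrable_of_bdd {ν : Measure X} [IsFiniteMeasure ν] {g : X → ℝ} (hg : Measurable g)
    {C : ℝ} (hC : ∀ x, |g x| ≤ C) : Integrable g ν :=
  Integrable.of_bound hg.aestronglyMeasurable C (ae_of_all _ hC)

theorem maximal_ineq {ν : Measure X} [IsFiniteMeasure ν] {f : X → X}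
    (hf : MeasurePreserving f ν ν) {g : X → ℝ} (hg : Measurable g) {C : ℝ} (hC : ∀ x, |g x| ≤ C)
    (hpos : ∀ᵐ x ∂ν, ∃ k, 0 < birk f g k x) : 0 ≤ ∫ x, g x ∂ν := by
  have hmeas : ∀ n, MeasurableSet {x | 0 < maxS f g n x} := fun n =>
    measurableSet_lt measurable_const (maxS_measurable hf.measurable hg n)
  have hMint : ∀ n, Integrable (maxS f g n) ν := fun n =>
    integrable_of_bdd (maxS_measurable hf.measurable hg n)
      (C := n * C) (fun x => by rw [abs_of_nonneg (maxS_nonneg f g n x)]; exact maxS_le hC n x)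
  have hgint : Integrable g ν := integrable_of_bdd hg hC
  have step : ∀ n, 0 ≤ ∫ x, {x | 0 < maxS f g n x}.indicator g x ∂ν := by
    intro n
    have h0 : ∫ x, (maxS f g n x - maxS f g n (f x)) ∂ν = 0 := by
      have hi2 : Integrable (fun x => maxS f g n (f x)) ν := hf.integrable_comp_of_integrable (hMint n)
      rw [integral_sub (hMint n) hi2]
      have := integral_map (μ := ν) (φ := f) hf.measurable.aemeasurable (f := maxS f g n)
        (maxS_measurable hf.measurable hg n).aestronglyMeasurable
      rw [hf.map_eq] at this
      linarith
    refine h0.symm.le.trans ?_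
    refine integral_mono ((hMint n).sub (hf.integrable_comp_of_integrable (hMint n)))
      (hgint.indicator (hmeas n)) (fun x => ?_)
    by_cases hx : 0 < maxS f g n x
    · have : x ∈ {x | 0 < maxS f g n x} := hx
      rw [indicator_of_mem this]
      cases n with
      | zero => simp [maxS] at hx
      | succ n =>
        have h1 := maxS_mono f g n (f x)
        have h2 : maxS f g (n+1) x = g x + maxS f g n (f x) := by
          rw [maxS] at hx ⊢
          rcases le_total 0 (g x + maxS f g n (f x)) with h | h
          · exact max_eq_right h
          · rw [max_eq_left h] at hx; exact absurd hx (lt_irrefl _)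
        show maxS f g (n+1) x - maxS f g (n+1) (f x) ≤ g x
        linarith
    · have : x ∉ {x | 0 < maxS f g n x} := hx
      rw [indicator_of_notMem this]
      have h1 := maxS_nonneg f g n (f x)
      show maxS f g n x - maxS f g n (f x) ≤ 0
      linarith
  have hlim : Tendsto (fun n => ∫ x, {x | 0 < maxS f g n x}.indicator g x ∂ν) atTop
      (nhds (∫ x, g x ∂ν)) := by
    refine tendsto_integral_of_dominated_convergence (fun _ => C)
      (fun n => (hg.indicator (hmeas n)).aestronglyMeasurable) (integrable_const _)
      (fun n => ae_of_all _ fun x => ?_) ?_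
    · rw [Real.norm_eq_abs]
      by_cases hx : x ∈ {x | 0 < maxS f g n x}
      · rw [indicator_of_mem hx]; exact hC x
      · rw [indicator_of_notMem hx, abs_zero]; exact (abs_nonneg _).trans (hC x)
    · filter_upwards [hpos] with x ⟨k, hk⟩
      refine tendsto_const_nhds.congr' ?_
      filter_upwards [eventually_ge_atTop k] with n hn
      have hmono : Monotone (fun n => maxS f g n x) := monotone_nat_of_le_succ (fun n => maxS_mono f g n x)
      have : x ∈ {x | 0 < maxS f g n x} := lt_of_lt_of_le hk ((birk_le_maxS f g k x).trans (hmono hn))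
      rw [indicator_of_mem this]
  exact ge_of_tendsto' hlim step

theorem birk_sub_const (f : X → X) (φ : X → ℝ) (b : ℝ) (n : ℕ) (x : X) :
    birk f (fun y => φ y - b) n x = birk f φ n x - n * b := by
  simp [birk, Finset.sum_sub_distrib]

theorem birk_neg (f : X → X) (φ : X → ℝ) (n : ℕ) (x : X) :
    birk f (fun y => - φ y) n x = - birk f φ n x := by
  simp [birk]

theorem inv_set_ineq {μ : Measure X} [IsFiniteMeasure μ] {f : X → X}
    (hf : MeasurePreserving f μ μ) {φ : X → ℝ} (hφ : Measurable φ) {C : ℝ} (hC : ∀ x, |φ x| ≤ C)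
    {A : Set X} (hA : MeasurableSet A) (hinv : f ⁻¹' A = A) {b : ℝ}
    (hb : ∀ x ∈ A, ∃ k : ℕ, k * b < birk f φ k x) :
    b * μ.real A ≤ ∫ x in A, φ x ∂μ := by
  have hr : MeasurePreserving f (μ.restrict A) (μ.restrict A) := by
    have := hf.restrict_preimage hA
    rwa [hinv] at this
  have := maximal_ineq hr (g := fun y => φ y - b) (hφ.sub_const b) (C := C + |b|)
    (fun x => (abs_sub _ _).trans (by linarith [hC x]))
    (by
      rw [ae_restrict_iff' hA]
      refine ae_of_all _ fun x hx => ?_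
      obtain ⟨k, hk⟩ := hb x hx
      exact ⟨k, by rw [birk_sub_const]; linarith⟩)
  rw [integral_sub (integrable_of_bdd hφ hC) (integrable_const _)] at this
  simp at this
  linarith

/-- The invariant set where the upper Birkhoff average exceeds `b`. -/
def upSet (f : X → X) (φ : X → ℝ) (b : ℝ) : Set X :=
  {x | ∃ m : ℕ, ∃ᶠ n : ℕ in atTop, b + 1 / ((m : ℝ) + 1) < birk f φ n x / n}

theorem upSet_measurable {f : X → X} {φ : X → ℝ} (hf : Measurable f) (hφ : Measurable φ) (b : ℝ) :
    MeasurableSet (upSet f φ b) := by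
  have : upSet f φ b = ⋃ m : ℕ, limsup (fun n : ℕ => {x | b + 1 / ((m : ℝ) + 1) < birk f φ n x / n}) atTop := by
    ext x
    simp only [upSet, mem_ofPred_eq, mem_iUnion]
    refine exists_congr fun m => ?_
    rw [mem_limsup_iff_frequently_mem]
    rfl
  rw [this]
  exact MeasurableSet.iUnion fun m => MeasurableSet.measurableSet_limsup fun n =>
    measurableSet_lt measurable_const ((birk_measurable hf hφ n).div_const _)

theorem birk_avg_comp_tendsto {f : X → X} {φ : X → ℝ} {C : ℝ} (hC : ∀ x, |φ x| ≤ C) (x : X) :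
    Tendsto (fun n : ℕ => birk f φ n (f x) / n - birk f φ n x / n) atTop (nhds 0) := by
  have h : ∀ n : ℕ, birk f φ n (f x) / n - birk f φ n x / n = (φ (f^[n] x) - φ x) / n := by
    intro n
    have h1 := birk_succ_left f φ n x
    have h2 := birk_succ_right f φ n x
    rw [← sub_div]
    congr 1
    linarith
  simp_rw [h]
  refine squeeze_zero_norm (a := fun n : ℕ => (2 * C) / n) (fun n => ?_) (tendsto_const_div_atTop_nhds_zero_nat _)
  rw [Real.norm_eq_abs, abs_div, Nat.abs_cast]
  gcongr
  exact (abs_sub _ _).trans (by linarith [hC x, hC (f^[n] x)])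

theorem upSet_inv {f : X → X} {φ : X → ℝ} {C : ℝ} (hC : ∀ x, |φ x| ≤ C) (b : ℝ) :
    f ⁻¹' (upSet f φ b) = upSet f φ b := by
  have key : ∀ u v : ℕ → ℝ, Tendsto (fun n => u n - v n) atTop (nhds 0) →
      (∃ m : ℕ, ∃ᶠ n : ℕ in atTop, b + 1 / ((m : ℝ) + 1) < u n) →
      (∃ m : ℕ, ∃ᶠ n : ℕ in atTop, b + 1 / ((m : ℝ) + 1) < v n) := by
    rintro u v huv ⟨m, hm⟩
    obtain ⟨k, hk⟩ := exists_nat_one_div_lt (show (0:ℝ) < 1 / ((m:ℝ)+1) by positivity)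
    refine ⟨k, ?_⟩
    have hev : ∀ᶠ n in atTop, u n - v n < 1 / ((m:ℝ)+1) - 1 / ((k:ℝ)+1) :=
      huv.eventually (gt_mem_nhds (by linarith))
    refine (hm.and_eventually hev).mono fun n hn => ?_
    linarith [hn.1, hn.2]
  ext x
  constructor
  · intro hx
    exact key _ _ (birk_avg_comp_tendsto hC x) hx
  · intro hx
    refine key _ _ ?_ hx
    have := (birk_avg_comp_tendsto hC (f := f) x).neg
    simpa using this

theorem mem_upSet_of_frequently {f : X → X} {φ : X → ℝ} {b b' : ℝ} (hb : b < b') {x : X}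
    (h : ∃ᶠ n : ℕ in atTop, b' < birk f φ n x / n) : x ∈ upSet f φ b := by
  obtain ⟨k, hk⟩ := exists_nat_one_div_lt (show (0:ℝ) < b' - b by linarith)
  exact ⟨k, h.mono fun n hn => by linarith⟩

theorem exists_of_mem_upSet {f : X → X} {φ : X → ℝ} {b : ℝ} {x : X} (hx : x ∈ upSet f φ b) :
    ∃ k : ℕ, k * b < birk f φ k x := by
  obtain ⟨m, hm⟩ := hx
  obtain ⟨n, hn, h1⟩ := (hm.and_eventually (eventually_ge_atTop 1)).exists
  refine ⟨n, ?_⟩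
  have hn0 : (0:ℝ) < n := by exact_mod_cast h1
  have : b < birk f φ n x / n := lt_trans (by have : (0:ℝ) < 1 / ((m:ℝ)+1) := by positivity
                                              linarith) hn
  rw [lt_div_iff₀ hn0] at this
  linarith

theorem birk_avg_abs_le {f : X → X} {φ : X → ℝ} {C : ℝ} (hC : ∀ x, |φ x| ≤ C) (n : ℕ) (x : X) :
    |birk f φ n x / n| ≤ C := by
  rcases Nat.eq_zero_or_pos n with h | h
  · subst h; simp; exact (abs_nonneg _).trans (hC x)
  rw [abs_div, Nat.abs_cast, div_le_iff₀ (by exact_mod_cast h)]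
  unfold birk
  refine (Finset.abs_sum_le_sum_abs _ _).trans ?_
  refine (Finset.sum_le_card_nsmul _ _ C fun i _ => hC _).trans ?_
  simp [mul_comm]

theorem birkhoff_ae_exists {μ : Measure X} [IsFiniteMeasure μ] {f : X → X}
    (hf : MeasurePreserving f μ μ) {φ : X → ℝ} (hφ : Measurable φ) {C : ℝ} (hC : ∀ x, |φ x| ≤ C) :
    ∀ᵐ x ∂μ, ∃ c, Tendsto (fun n : ℕ => birk f φ n x / n) atTop (nhds c) := by
  have hCn : ∀ x, |(fun y => - φ y) x| ≤ C := fun x => by simpa using hC x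
  have key : ∀ a b : ℚ, (a:ℝ) < b → μ (upSet f (fun y => - φ y) (-a) ∩ upSet f φ b) = 0 := by
    intro a b hab
    set A := upSet f (fun y => - φ y) (-a) ∩ upSet f φ b with hA
    have hAm : MeasurableSet A := (upSet_measurable hf.measurable hφ.neg _).inter (upSet_measurable hf.measurable hφ _)
    have hAi : f ⁻¹' A = A := by
      rw [hA, preimage_inter, upSet_inv hCn, upSet_inv hC]
    have h1 := inv_set_ineq hf hφ hC hAm hAi (b := b) (fun x hx => exists_of_mem_upSet hx.2)
    have h2 := inv_set_ineq hf (φ := fun y => - φ y) hφ.neg hCn hAm hAi (b := -a) (fun x hx => exists_of_mem_upSet hx.1)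
    rw [integral_neg] at h2
    have h3 : μ.real A = 0 := by
      have := measureReal_nonneg (μ := μ) (s := A)
      nlinarith
    rwa [measureReal_eq_zero_iff] at h3
  have hall : ∀ᵐ x ∂μ, ∀ a b : ℚ, (a:ℝ) < b → x ∉ upSet f (fun y => - φ y) (-a) ∩ upSet f φ b := by
    rw [ae_all_iff]; intro a
    rw [ae_all_iff]; intro b
    by_cases hab : (a:ℝ) < b
    · filter_upwards [measure_eq_zero_iff_ae_notMem.1 (key a b hab)] with x hx _ using hx
    · exact ae_of_all _ fun x h => absurd h hab
  filter_upwards [hall] with x hx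
  refine tendsto_of_no_upcrossings (s := Set.univ) dense_univ ?_ ?_ ?_
  · intro a _ b _ hab ⟨h1, h2⟩
    obtain ⟨p, hp1, hp2⟩ := exists_rat_btwn hab
    obtain ⟨q, hq1, hq2⟩ := exists_rat_btwn hp2
    refine hx p q (by exact_mod_cast hq1) ⟨mem_upSet_of_frequently (b' := -a) (by linarith) ?_, mem_upSet_of_frequently hq2 h2⟩
    refine h1.mono fun n hn => ?_
    rw [birk_neg, neg_div]
    linarith
  · exact isBoundedUnder_of ⟨C, fun n => (abs_le.1 (birk_avg_abs_le hC n x)).2⟩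
  · exact isBoundedUnder_of ⟨-C, fun n => (abs_le.1 (birk_avg_abs_le hC n x)).1⟩

theorem upSet_null_of_ergodic {μ : Measure X} [IsProbabilityMeasure μ] {f : X → X}
    (hf : Ergodic f μ) {φ : X → ℝ} (hφ : Measurable φ) {C : ℝ} (hC : ∀ x, |φ x| ≤ C)
    {b : ℝ} (hb : ∫ x, φ x ∂μ < b) : ∀ᵐ x ∂μ, x ∉ upSet f φ b := by
  rcases hf.toPreErgodic.ae_mem_or_ae_notMem (upSet_measurable hf.measurable hφ b) (upSet_inv hC b) with h | h
  · exfalso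
    have h1 := inv_set_ineq hf.toMeasurePreserving hφ hC (upSet_measurable hf.measurable hφ b)
      (upSet_inv hC b) (fun x hx => exists_of_mem_upSet hx)
    have h2 : upSet f φ b =ᵐ[μ] univ := eventuallyEq_univ.2 h
    rw [setIntegral_congr_set h2, measureReal_congr h2] at h1
    simp at h1
    linarith
  · exact h

theorem birkhoff_ergodic {μ : Measure X} [IsProbabilityMeasure μ] {f : X → X}
    (hf : Ergodic f μ) {φ : X → ℝ} (hφ : Measurable φ) {C : ℝ} (hC : ∀ x, |φ x| ≤ C) :
    ∀ᵐ x ∂μ, Tendsto (fun n : ℕ => birk f φ n x / n) atTop (nhds (∫ x, φ x ∂μ)) := by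
  have hCn : ∀ x, |(fun y => - φ y) x| ≤ C := fun x => by simpa using hC x
  have h1 : ∀ᵐ x ∂μ, ∀ m : ℕ, x ∉ upSet f φ (∫ x, φ x ∂μ + 1 / ((m:ℝ)+1)) :=
    ae_all_iff.2 fun m => upSet_null_of_ergodic hf hφ hC (by
      have : (0:ℝ) < 1 / ((m:ℝ)+1) := by positivity
      linarith)
  have h2 : ∀ᵐ x ∂μ, ∀ m : ℕ, x ∉ upSet f (fun y => - φ y) (∫ x, - φ x ∂μ + 1 / ((m:ℝ)+1)) :=
    ae_all_iff.2 fun m => upSet_null_of_ergodic hf (φ := fun y => - φ y) hφ.neg hCn (by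
      have : (0:ℝ) < 1 / ((m:ℝ)+1) := by positivity
      linarith)
  filter_upwards [h1, h2] with x hx1 hx2
  rw [integral_neg] at hx2
  rw [tendsto_order]
  constructor
  · intro a ha
    by_contra hcon
    obtain ⟨m, hm⟩ := exists_nat_one_div_lt (show (0:ℝ) < (∫ x, φ x ∂μ - a)/2 by linarith)
    refine hx2 m (mem_upSet_of_frequently (b' := -(a + 1/((m:ℝ)+1))) (by linarith) ?_)
    refine (not_eventually.1 hcon).mono fun n hn => ?_
    rw [birk_neg, neg_div]
    have : (0:ℝ) < 1 / ((m:ℝ)+1) := by positivity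
    linarith
  · intro a ha
    by_contra hcon
    obtain ⟨m, hm⟩ := exists_nat_one_div_lt (show (0:ℝ) < (a - ∫ x, φ x ∂μ)/2 by linarith)
    refine hx1 m (mem_upSet_of_frequently (b' := (a - 1/((m:ℝ)+1))) (by linarith) ?_)
    refine (not_eventually.1 hcon).mono fun n hn => ?_
    have : (0:ℝ) < 1 / ((m:ℝ)+1) := by positivity
    linarith

end Birkhoff
end Paper


set_option linter.unusedSectionVars false
set_option linter.unusedVariables false
open MeasureTheory Filter Set
open scoped ENNReal NNReal
namespace Paper

section PressureLemmas

theorem lt_term_iff {n : ℕ} (hn : n ≠ 0) {m : ℝ≥0∞} (hm : m ≠ ⊤) (b s : ℝ) :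
    (s : EReal) < (((n : ℝ)⁻¹ : ℝ) : EReal) * (-m.log + ((b : ℝ) : EReal)) ↔
      m < ENNReal.ofReal (Real.exp (-s * n + b)) := by
  have hn0 : (0:ℝ) < n := by exact_mod_cast Nat.pos_of_ne_zero hn
  rcases eq_or_ne m 0 with h0 | h0
  · subst h0
    rw [ENNReal.log_zero, EReal.neg_bot, EReal.top_add_coe,
      EReal.coe_mul_top_of_pos (inv_pos.2 hn0)]
    simp [EReal.coe_lt_top, Real.exp_pos]
  · have hpos : 0 < m.toReal := ENNReal.toReal_pos h0 hm
    rw [ENNReal.log_pos_real h0 hm, ← EReal.coe_neg, ← EReal.coe_add, ← EReal.coe_mul,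
      EReal.coe_lt_coe_iff, ENNReal.lt_ofReal_iff_toReal_lt hm, ← Real.log_lt_iff_lt_exp hpos,
      inv_mul_eq_div, lt_div_iff₀ hn0]
    constructor <;> intro h <;> linarith

variable {X : Type*} [MetricSpace X] [MeasurableSpace X]

/-- Fixed-scale pointwise pressure. -/
noncomputable def ptG (f : X → X) (φ : X → ℝ) (μ : Measure X) (ε : ℝ) (x : X) : EReal :=
    Filter.atTop.liminf (fun n : ℕ =>
      (((n : ℝ)⁻¹ : ℝ) : EReal) * (-(μ (bowenBall f x n ε)).log + ((birk f φ n x : ℝ) : EReal)))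

theorem ptPressure_eq (f : X → X) (φ : X → ℝ) (μ : Measure X) (x : X) :
    ptPressure f φ μ x = ⨆ (ε : ℝ) (_ : 0 < ε), ptG f φ μ ε x := rfl

theorem lt_ptG {f : X → X} {φ : X → ℝ} {μ : Measure X} [IsFiniteMeasure μ] {ε : ℝ} {x : X} {s : ℝ}
    (h : (s : EReal) < ptG f φ μ ε x) : ∀ᶠ n : ℕ in atTop,
      μ (bowenBall f x n ε) < ENNReal.ofReal (Real.exp (-s * n + birk f φ n x)) := by
  have := eventually_lt_of_lt_liminf h
  filter_upwards [this, eventually_ne_atTop 0] with n hn h0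
  exact (lt_term_iff h0 (measure_ne_top _ _) _ _).1 hn

theorem ptG_lt {f : X → X} {φ : X → ℝ} {μ : Measure X} [IsFiniteMeasure μ] {ε : ℝ} {x : X} {s : ℝ}
    (h : ptG f φ μ ε x < (s : EReal)) : ∃ᶠ n : ℕ in atTop,
      ENNReal.ofReal (Real.exp (-s * n + birk f φ n x)) ≤ μ (bowenBall f x n ε) := by
  have := frequently_lt_of_liminf_lt (by isBoundedDefault) h
  refine (this.and_eventually (eventually_ne_atTop 0)).mono fun n hn => ?_
  by_contra hcon
  have := (lt_term_iff hn.2 (measure_ne_top _ _) _ _).2 (not_le.1 hcon)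
  exact absurd this (not_lt.2 hn.1.le)

theorem bowenBall_mono {f : X → X} {x : X} {n : ℕ} {ε ε' : ℝ} (h : ε ≤ ε') :
    bowenBall f x n ε ⊆ bowenBall f x n ε' := fun y hy i hi => (hy i hi).trans_le h

theorem term_mono {n : ℕ} {m m' : ℝ≥0∞} (h : m ≤ m') (b : EReal) :
    (((n : ℝ)⁻¹ : ℝ) : EReal) * (-m'.log + b) ≤ (((n : ℝ)⁻¹ : ℝ) : EReal) * (-m.log + b) := by
  refine mul_le_mul_of_nonneg_left ?_ (by exact_mod_cast (inv_nonneg.2 (Nat.cast_nonneg n)))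
  refine add_le_add_left ?_ b
  exact EReal.neg_le_neg_iff.2 (ENNReal.log_le_log h)

theorem ptG_anti {f : X → X} {φ : X → ℝ} {μ : Measure X} {ε ε' : ℝ} {x : X} (h : ε ≤ ε') :
    ptG f φ μ ε' x ≤ ptG f φ μ ε x :=
  liminf_le_liminf (Eventually.of_forall fun n => term_mono (measure_mono (bowenBall_mono h)) _)

theorem bowenBall_isOpen {f : X → X} (hf : Continuous f) (x : X) (n : ℕ) (ε : ℝ) :
    IsOpen (bowenBall f x n ε) := by
  have : bowenBall f x n ε = ⋂ i ∈ Finset.range n, {y | dist (f^[i] x) (f^[i] y) < ε} := by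
    ext y; simp [bowenBall]
  rw [this]
  exact isOpen_biInter_finset fun i _ =>
    isOpen_lt (continuous_const.dist (hf.iterate i)) continuous_const

theorem massdist {f : X → X} {φ : X → ℝ} {μ : Measure X} {Z E : Set X} {ε α : ℝ} {N : ℕ}
    (hZ : μ Zᶜ = 0) (hE : μ E ≠ 0)
    (h : ∀ x n, N ≤ n → μ (bowenBall f x n ε ∩ E) ≤ ENNReal.ofReal (Real.exp (-α * n + birk f φ n x))) :
    (α : EReal) ≤ PZeps f φ Z ε := by
  unfold PZeps
  refine le_iInf₂ fun α' hα' => ?_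
  by_contra hcon
  rw [not_le, EReal.coe_lt_coe_iff] at hcon
  have h0 : Mcov f φ Z α' N ε = 0 := le_antisymm ((le_iSup (fun N => Mcov f φ Z α' N ε) N).trans hα'.le) zero_le
  refine hE (le_antisymm ?_ zero_le)
  rw [← h0]
  unfold Mcov
  refine le_iInf₂ fun c hc => ?_
  calc μ E ≤ μ ((⋃ i, bowenBall f (c i).1 (c i).2 ε ∩ E) ∪ Zᶜ) := by
        refine measure_mono fun x hx => ?_
        by_cases hxZ : x ∈ Z
        · left
          obtain ⟨i, hi⟩ := mem_iUnion.1 (hc.2 hxZ)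
          exact mem_iUnion.2 ⟨i, hi, hx⟩
        · exact Or.inr hxZ
    _ ≤ μ (⋃ i, bowenBall f (c i).1 (c i).2 ε ∩ E) + μ Zᶜ := measure_union_le _ _
    _ = μ (⋃ i, bowenBall f (c i).1 (c i).2 ε ∩ E) := by rw [hZ, add_zero]
    _ ≤ ∑' i, μ (bowenBall f (c i).1 (c i).2 ε ∩ E) := measure_iUnion_le _
    _ ≤ _ := by
        refine ENNReal.tsum_le_tsum fun i => (h _ _ (hc.1 i)).trans ?_
        gcongr

theorem birk_le_of_close {f : X → X} {φ : X → ℝ} {γ ε : ℝ}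
    (hγ : ∀ x y, dist x y < ε → |φ x - φ y| ≤ γ) {x y : X} {n : ℕ} (h : y ∈ bowenBall f x n ε) :
    birk f φ n y ≤ birk f φ n x + γ * n := by
  unfold birk
  have : ∑ i ∈ Finset.range n, φ (f^[i] y) ≤ ∑ i ∈ Finset.range n, (φ (f^[i] x) + γ) := by
    refine Finset.sum_le_sum fun i hi => ?_
    have := (abs_le.1 (hγ _ _ (h i (Finset.mem_range.1 hi)))).1
    linarith
  refine this.trans ?_
  rw [Finset.sum_add_distrib]
  simp [mul_comm]

theorem exists_mod [CompactSpace X] {φ : X → ℝ} (hφ : Continuous φ) {γ : ℝ} (hγ : 0 < γ) :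
    ∃ ε > 0, ∀ x y, dist x y < ε → |φ x - φ y| ≤ γ := by
  obtain ⟨ε, h0, h⟩ := Metric.uniformContinuous_iff.1 (CompactSpace.uniformContinuous_of_continuous hφ) γ hγ
  exact ⟨ε, h0, fun x y hxy => (h hxy).le⟩

theorem exists_ptG {f : X → X} {φ : X → ℝ} {μ : Measure X} {x : X} {s : EReal}
    (h : s < ptPressure f φ μ x) : ∃ k : ℕ, s < ptG f φ μ (1 / ((k:ℝ) + 1)) x := by
  rw [ptPressure_eq] at h
  obtain ⟨ε, h⟩ := lt_iSup_iff.1 h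
  obtain ⟨hε, h⟩ := lt_iSup_iff.1 h
  obtain ⟨k, hk⟩ := exists_nat_one_div_lt hε
  exact ⟨k, h.trans_le (ptG_anti hk.le)⟩

theorem essSup_le_Pmu [CompactSpace X] [BorelSpace X] {f : X → X} {φ : X → ℝ}
    (hφ : Continuous φ) {μ : Measure X} [IsProbabilityMeasure μ] :
    essSup (ptPressure f φ μ) μ ≤ Pmu f φ μ := by
  by_contra hcon
  rw [not_le] at hcon
  obtain ⟨q1, hq1, hq⟩ := EReal.lt_iff_exists_real_btwn.1 hcon
  obtain ⟨s, hq2, hs⟩ := EReal.lt_iff_exists_real_btwn.1 hq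
  rw [EReal.coe_lt_coe_iff] at hq2
  have hnull : μ {x | (s:EReal) < ptPressure f φ μ x} ≠ 0 := by
    intro h0
    refine absurd hs (not_lt.2 ?_)
    refine essSup_le_of_ae_le _ ?_
    filter_upwards [measure_eq_zero_iff_ae_notMem.1 h0] with x hx
    exact not_lt.1 hx
  have hk : ∃ k : ℕ, μ {x | (s:EReal) < ptG f φ μ (1 / ((k:ℝ) + 1)) x} ≠ 0 := by
    by_contra hall
    push Not at hall
    refine hnull (measure_mono_null ?_ (measure_iUnion_null hall))
    intro x hx
    exact mem_iUnion.2 (exists_ptG hx)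
  obtain ⟨k, hk⟩ := hk
  obtain ⟨ε1, hε1, hmod⟩ := exists_mod hφ (show 0 < s - q1 by linarith)
  set ε := min (1 / ((k:ℝ) + 1)) ε1 with hε
  have hε0 : 0 < ε := lt_min (by positivity) hε1
  have hN : ∃ N : ℕ, μ {x | ∀ n ≥ N, μ (bowenBall f x n ε) < ENNReal.ofReal (Real.exp (-s * n + birk f φ n x))} ≠ 0 := by
    by_contra hall
    push Not at hall
    refine hk (measure_mono_null ?_ (measure_iUnion_null hall))
    intro x hx
    have : (s:EReal) < ptG f φ μ ε x := lt_of_lt_of_le hx (ptG_anti (min_le_left _ _))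
    obtain ⟨N, hN⟩ := eventually_atTop.1 (lt_ptG this)
    exact mem_iUnion.2 ⟨N, hN⟩
  obtain ⟨N, hN⟩ := hN
  refine absurd hq1 (not_lt.2 ?_)
  unfold Pmu
  refine le_iSup₂_of_le (ε/2) (by linarith) ?_
  refine le_iInf₂ fun Z hZ => ?_
  refine massdist (N := N) ((prob_compl_eq_zero_iff hZ.1).2 hZ.2) hN fun x n hn => ?_
  rcases (bowenBall f x n (ε/2) ∩ {x | ∀ n ≥ N, μ (bowenBall f x n ε) < ENNReal.ofReal (Real.exp (-s * n + birk f φ n x))}).eq_empty_or_nonempty with he | ⟨y, hy1, hy2⟩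
  · rw [he]; simp
  · have hsub : bowenBall f x n (ε/2) ⊆ bowenBall f y n ε := by
      intro z hz i hi
      have h1 := hy1 i hi
      have h2 := hz i hi
      have h3 := dist_triangle_left (f^[i] y) (f^[i] z) (f^[i] x)
      linarith
    refine (measure_mono (inter_subset_left.trans hsub)).trans ((hy2 n hn).le.trans ?_)
    have := birk_le_of_close hmod (bowenBall_mono (f := f) (x := x) (n := n) (show ε/2 ≤ ε1 by
      have := min_le_right (1 / ((k:ℝ) + 1)) ε1
      linarith) hy1)
    refine ENNReal.ofReal_le_ofReal (Real.exp_le_exp.2 ?_)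
    nlinarith

theorem Mcov_le [CompactSpace X] [BorelSpace X] {f : X → X} (hf : Continuous f) {φ : X → ℝ}
    {μ : Measure X} [IsProbabilityMeasure μ] {Z : Set X} (hZ : Z.Nonempty) {ε s δ : ℝ}
    (hε : 0 < ε) (hδ : 0 < δ)
    (h : ∀ x ∈ Z, ∃ᶠ n : ℕ in atTop,
      ENNReal.ofReal (Real.exp (-s * n + birk f φ n x)) ≤ μ (bowenBall f x n (ε/3))) (N : ℕ) :
    Mcov f φ Z (s + δ) N ε ≤ ENNReal.ofReal (Real.exp (-δ * N)) *
      (1 + ∑' k : ℕ, ENNReal.ofReal (Real.exp (-δ)) ^ k) := by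
  set B : X × ℕ → Set X := fun p => bowenBall f p.1 p.2 (ε/3) with hB
  set t : Set (X × ℕ) := {p | p.1 ∈ Z ∧ N ≤ p.2 ∧
    ENNReal.ofReal (Real.exp (-s * p.2 + birk f φ p.2 p.1)) ≤ μ (B p)} with ht
  have hself : ∀ p : X × ℕ, p.1 ∈ B p := fun p i hi => by rw [dist_self]; linarith
  obtain ⟨u, hut, hdisj, hcov⟩ := Vitali.exists_disjoint_subfamily_covering_enlargement B t
    (fun p => (1/2:ℝ)^p.2) (3/2) (by norm_num) (fun a _ => by positivity) 1
    (fun a _ => pow_le_one₀ (by norm_num) (by norm_num)) (fun a _ => ⟨a.1, hself a⟩)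
  have hopen : ∀ p, IsOpen (B p) := fun p => bowenBall_isOpen hf _ _ _
  have huc : u.Countable := hdisj.countable_of_isOpen (fun p _ => hopen p) (fun a _ => ⟨a.1, hself a⟩)
  obtain ⟨x0, hx0⟩ := hZ
  have hseq : ∀ k : ℕ, ∃ n : ℕ, N + k ≤ n ∧
      ENNReal.ofReal (Real.exp (-s * n + birk f φ n x0)) ≤ μ (bowenBall f x0 n (ε/3)) := by
    intro k
    obtain ⟨n, h1, h2⟩ := ((h x0 hx0).and_eventually (eventually_ge_atTop (N+k))).exists
    exact ⟨n, h2, h1⟩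
  choose ns hns1 hns2 using hseq
  have : Countable u := huc.to_subtype
  obtain ⟨e⟩ : Nonempty (ℕ ≃ (u ⊕ ℕ)) := inferInstance
  set d : u ⊕ ℕ → X × ℕ := Sum.elim (fun p => p.1) (fun k => (x0, ns k)) with hd
  unfold Mcov
  refine iInf₂_le_of_le (fun i => d (e i)) ⟨?_, ?_⟩ ?_
  · intro i
    show N ≤ (d (e i)).2
    rcases e i with p | k
    · exact (hut p.2).2.1
    · exact (Nat.le_add_right N k).trans (hns1 k)
  · intro x hx
    obtain ⟨n, h1, h2⟩ := ((h x hx).and_eventually (eventually_ge_atTop N)).exists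
    obtain ⟨b, hb, ⟨z, hz1, hz2⟩, hle⟩ := hcov (x, n) ⟨hx, h2, h1⟩
    have hbn : b.2 ≤ n := by
      by_contra hlt
      rw [not_le] at hlt
      have h3 : (1/2:ℝ)^b.2 ≤ (1/2:ℝ)^(n+1) := pow_le_pow_of_le_one (by norm_num) (by norm_num) hlt
      have h4 : (0:ℝ) < (1/2:ℝ)^n := by positivity
      rw [pow_succ] at h3
      have h5 : (1/2:ℝ)^n ≤ 3/2 * (1/2:ℝ)^b.2 := hle
      linarith
    refine mem_iUnion.2 ⟨e.symm (Sum.inl ⟨b, hb⟩), ?_⟩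
    simp only [Equiv.apply_symm_apply, hd, Sum.elim_inl]
    intro i hi
    have h1 := hz1 i (lt_of_lt_of_le hi hbn)
    have h2 := hz2 i hi
    have h3 := dist_triangle_right (f^[i] b.1) (f^[i] x) (f^[i] z)
    simp only at h1
    linarith
  · have hpt : ∀ (x : X) (n : ℕ) (k : ℕ), N + k ≤ n →
        ENNReal.ofReal (Real.exp (-(s+δ) * n + birk f φ n x)) ≤
        ENNReal.ofReal (Real.exp (-δ * N)) * ENNReal.ofReal (Real.exp (-δ)) ^ k *
          ENNReal.ofReal (Real.exp (-s * n + birk f φ n x)) := by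
      intro x n k hk
      rw [← ENNReal.ofReal_pow (Real.exp_pos _).le, ← ENNReal.ofReal_mul (Real.exp_pos _).le,
        ← ENNReal.ofReal_mul (by positivity), ← Real.exp_nat_mul, ← Real.exp_add, ← Real.exp_add]
      refine ENNReal.ofReal_le_ofReal (Real.exp_le_exp.2 ?_)
      have : ((N:ℝ) + k) ≤ n := by exact_mod_cast hk
      nlinarith
    rw [Equiv.tsum_eq e (fun j => ENNReal.ofReal (Real.exp (-(s + δ) * ((d j).2 : ℝ) + birk f φ (d j).2 (d j).1))),
      Summable.tsum_sum ENNReal.summable ENNReal.summable, mul_add, mul_one]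
    refine add_le_add ?_ ?_
    · calc _ ≤ ∑' p : u, ENNReal.ofReal (Real.exp (-δ * N)) * μ (B p) := by
            refine ENNReal.tsum_le_tsum fun p => ?_
            refine (hpt p.1.1 p.1.2 0 (hut p.2).2.1).trans ?_
            rw [pow_zero, mul_one]
            exact mul_le_mul_right (hut p.2).2.2 _
        _ = ENNReal.ofReal (Real.exp (-δ * N)) * ∑' p : u, μ (B p) := ENNReal.tsum_mul_left
        _ ≤ ENNReal.ofReal (Real.exp (-δ * N)) * 1 := by
            refine mul_le_mul_right ?_ _
            refine (tsum_meas_le_meas_iUnion_of_disjoint μ (fun p : u => (hopen p.1).measurableSet) ?_).trans prob_le_one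
            exact hdisj.subtype _ _
        _ = _ := mul_one _
    · rw [← ENNReal.tsum_mul_left]
      refine ENNReal.tsum_le_tsum fun k => ?_
      refine (hpt x0 (ns k) k (hns1 k)).trans ?_
      calc _ ≤ ENNReal.ofReal (Real.exp (-δ * N)) * ENNReal.ofReal (Real.exp (-δ)) ^ k * 1 :=
            mul_le_mul_right ((hns2 k).trans prob_le_one) _
        _ = _ := mul_one _

theorem Mcov_mono {f : X → X} {φ : X → ℝ} {Z : Set X} {α ε : ℝ} {N N' : ℕ} (h : N ≤ N') :
    Mcov f φ Z α N ε ≤ Mcov f φ Z α N' ε := by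
  unfold Mcov
  exact le_iInf₂ fun c hc => iInf₂_le c ⟨fun i => h.trans (hc.1 i), hc.2⟩

theorem Pmu_le_essSup [CompactSpace X] [BorelSpace X] {f : X → X} (hf : Continuous f) {φ : X → ℝ}
    {μ : Measure X} [IsProbabilityMeasure μ] :
    Pmu f φ μ ≤ essSup (ptPressure f φ μ) μ := by
  by_contra hcon
  rw [not_le] at hcon
  obtain ⟨s, hs, hq⟩ := EReal.lt_iff_exists_real_btwn.1 hcon
  obtain ⟨q, hq2, hq⟩ := EReal.lt_iff_exists_real_btwn.1 hq
  rw [EReal.coe_lt_coe_iff] at hq2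
  unfold Pmu at hq
  obtain ⟨ε, hq⟩ := lt_iSup_iff.1 hq
  obtain ⟨hε, hq⟩ := lt_iSup_iff.1 hq
  have hae : ∀ᵐ x ∂μ, ∃ᶠ n : ℕ in atTop,
      ENNReal.ofReal (Real.exp (-s * n + birk f φ n x)) ≤ μ (bowenBall f x n (ε/3)) := by
    filter_upwards [ae_lt_of_essSup_lt hs] with x hx
    refine ptG_lt (lt_of_le_of_lt ?_ hx)
    rw [ptPressure_eq]
    exact le_iSup₂_of_le (ε/3) (by linarith) le_rfl
  set S : Set X := {x | ∃ᶠ n : ℕ in atTop,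
      ENNReal.ofReal (Real.exp (-s * n + birk f φ n x)) ≤ μ (bowenBall f x n (ε/3))} with hS
  have hS0 : μ Sᶜ = 0 := hae
  set Z : Set X := (toMeasurable μ Sᶜ)ᶜ with hZ
  have hZm : MeasurableSet Z := (measurableSet_toMeasurable _ _).compl
  have hZ1 : μ Z = 1 := by
    rw [hZ, prob_compl_eq_one_iff (measurableSet_toMeasurable _ _), measure_toMeasurable, hS0]
  have hZS : ∀ x ∈ Z, x ∈ S := by
    intro x hx
    by_contra hxS
    exact hx (subset_toMeasurable μ _ hxS)
  have hZne : Z.Nonempty := by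
    rw [nonempty_iff_ne_empty]
    intro h0
    rw [h0] at hZ1
    simp at hZ1
  refine absurd hq (not_lt.2 ?_)
  refine iInf₂_le_of_le Z ⟨hZm, hZ1⟩ ?_
  unfold PZeps
  refine iInf₂_le q ?_
  unfold mZ
  rw [ENNReal.iSup_eq_zero]
  intro N
  have hδ : 0 < q - s := by linarith
  have hb : ∀ N' ≥ N, Mcov f φ Z q N ε ≤ ENNReal.ofReal (Real.exp (-(q-s) * N')) *
      (1 + ∑' k : ℕ, ENNReal.ofReal (Real.exp (-(q-s))) ^ k) := by
    intro N' hN'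
    have := Mcov_le hf (φ := φ) hZne hε hδ hZS N'
    rw [add_sub_cancel] at this
    exact (Mcov_mono hN').trans this
  have hC : (1 + ∑' k : ℕ, ENNReal.ofReal (Real.exp (-(q-s))) ^ k) ≠ ⊤ := by
    rw [ENNReal.tsum_geometric]
    refine ENNReal.add_ne_top.2 ⟨ENNReal.one_ne_top, ENNReal.inv_ne_top.2 ?_⟩
    refine (tsub_pos_of_lt ?_).ne'
    rw [ENNReal.ofReal_lt_one, Real.exp_lt_one_iff]
    linarith
  have hlim : Tendsto (fun N' : ℕ => ENNReal.ofReal (Real.exp (-(q-s) * N')) *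
      (1 + ∑' k : ℕ, ENNReal.ofReal (Real.exp (-(q-s))) ^ k)) atTop (nhds 0) := by
    have h1 : Tendsto (fun N' : ℕ => Real.exp (-(q-s) * N')) atTop (nhds 0) := by
      refine Real.tendsto_exp_atBot.comp ?_
      exact (tendsto_natCast_atTop_atTop (R := ℝ)).const_mul_atTop_of_neg (by linarith)
    have h2 := ENNReal.tendsto_ofReal h1
    rw [ENNReal.ofReal_zero] at h2
    have h3 := ENNReal.Tendsto.mul_const h2 (Or.inr hC)
    rwa [zero_mul] at h3
  refine le_antisymm ?_ zero_le
  exact ge_of_tendsto hlim (eventually_atTop.2 ⟨N, hb⟩)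

theorem Pmu_eq_essSup [CompactSpace X] [BorelSpace X] {f : X → X} (hf : Continuous f) {φ : X → ℝ}
    (hφ : Continuous φ) {μ : Measure X} [IsProbabilityMeasure μ] :
    Pmu f φ μ = essSup (ptPressure f φ μ) μ :=
  le_antisymm (Pmu_le_essSup hf) (essSup_le_Pmu hφ)

end PressureLemmas
end Paper


set_option linter.unusedSectionVars false
set_option linter.unusedVariables false
open MeasureTheory Filter Set
open scoped ENNReal NNReal
namespace Paper
section P3
variable {X : Type*} [MetricSpace X] [MeasurableSpace X]

theorem birk_zero (f : X → X) (n : ℕ) (x : X) : birk f (fun _ => 0) n x = 0 := by simp [birk]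

theorem localEntropy_eq (f : X → X) (μ : Measure X) (x : X) :
    localEntropy f μ x = ptPressure f (fun _ => 0) μ x := by
  unfold localEntropy ptPressure
  simp [birk_zero]

theorem ptG_eq_add {f : X → X} {φ : X → ℝ} {μ : Measure X} {x : X} {c : ℝ} (ε : ℝ)
    (h : Tendsto (fun n : ℕ => birk f φ n x / (n:ℝ)) atTop (nhds c)) :
    ptG f φ μ ε x = ptG f (fun _ => 0) μ ε x + (c : EReal) := by
  have hv : Tendsto (fun n : ℕ => ((birk f φ n x / (n:ℝ) : ℝ) : EReal)) atTop (nhds (c : EReal)) :=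
    (continuous_coe_real_ereal.tendsto c).comp h
  have e : ptG f φ μ ε x = liminf ((fun n : ℕ => ((birk f φ n x / (n:ℝ) : ℝ) : EReal)) +
      (fun n : ℕ => (((n : ℝ)⁻¹ : ℝ) : EReal) * (-(μ (bowenBall f x n ε)).log))) atTop := by
    unfold ptG
    congr 1
    funext n
    simp only [Pi.add_apply]
    rw [EReal.left_distrib_of_nonneg_of_ne_top (by exact_mod_cast (inv_nonneg.2 (Nat.cast_nonneg n))) (EReal.coe_ne_top _),
      add_comm, ← EReal.coe_mul, div_eq_inv_mul]
  have e0 : ptG f (fun _ => 0) μ ε x = liminf (fun n : ℕ => (((n : ℝ)⁻¹ : ℝ) : EReal) * (-(μ (bowenBall f x n ε)).log)) atTop := by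
    unfold ptG
    simp [birk_zero]
  rw [e, e0]
  apply le_antisymm
  · have := EReal.liminf_add_le (u := (fun n : ℕ => ((birk f φ n x / (n:ℝ) : ℝ) : EReal)))
      (v := (fun n : ℕ => (((n : ℝ)⁻¹ : ℝ) : EReal) * (-(μ (bowenBall f x n ε)).log))) (f := atTop)
      (by left; rw [hv.limsup_eq]; exact EReal.coe_ne_bot _) (by left; rw [hv.limsup_eq]; exact EReal.coe_ne_top _)
    rw [hv.limsup_eq] at this
    rwa [add_comm _ (c:EReal)]
  · have := EReal.le_liminf_add (u := (fun n : ℕ => ((birk f φ n x / (n:ℝ) : ℝ) : EReal)))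
      (v := (fun n : ℕ => (((n : ℝ)⁻¹ : ℝ) : EReal) * (-(μ (bowenBall f x n ε)).log))) (f := atTop)
    rw [hv.liminf_eq] at this
    rwa [add_comm _ (c:EReal)]

theorem ptPressure_eq_add {f : X → X} {φ : X → ℝ} {μ : Measure X} {x : X} {c : ℝ}
    (h : Tendsto (fun n : ℕ => birk f φ n x / (n:ℝ)) atTop (nhds c)) :
    ptPressure f φ μ x = localEntropy f μ x + (c : EReal) := by
  rw [localEntropy_eq, ptPressure_eq, ptPressure_eq]
  apply le_antisymm
  · refine iSup₂_le fun ε hε => ?_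
    rw [ptG_eq_add ε h]
    exact add_le_add_left (le_iSup₂ (f := fun (ε:ℝ) (_ : 0 < ε) => ptG f (fun _ => 0) μ ε x) ε hε) _
  · rw [← EReal.le_sub_iff_add_le (by simp) (by simp)]
    refine iSup₂_le fun ε hε => ?_
    rw [EReal.le_sub_iff_add_le (by simp) (by simp), ← ptG_eq_add ε h]
    exact le_iSup₂ (f := fun (ε:ℝ) (_ : 0 < ε) => ptG f φ μ ε x) ε hε

theorem measurable_ptG [CompactSpace X] [BorelSpace X] {f : X → X} (hf : Continuous f) {μ : Measure X}
    [IsProbabilityMeasure μ] (ε : ℝ) : Measurable (ptG f (fun _ => 0) μ ε) := by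
  unfold ptG
  refine Measurable.liminf fun n => ?_
  have hb : Measurable (fun x => μ (bowenBall f x n ε)) := by
    have ho : IsOpen {p : X × X | ∀ i ∈ Finset.range n, dist (f^[i] p.1) (f^[i] p.2) < ε} := by
      have : {p : X × X | ∀ i ∈ Finset.range n, dist (f^[i] p.1) (f^[i] p.2) < ε} =
          ⋂ i ∈ Finset.range n, {p : X × X | dist (f^[i] p.1) (f^[i] p.2) < ε} := by
        ext p; simp
      rw [this]
      exact isOpen_biInter_finset fun i _ =>
        isOpen_lt (((hf.iterate i).comp continuous_fst).dist ((hf.iterate i).comp continuous_snd)) continuous_const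
    have := measurable_measure_prodMk_left (ν := μ) ho.measurableSet
    convert this using 3 with x
    ext y; simp [bowenBall]
  simp only [birk_zero]
  have ha : Antitone (fun m : ℝ≥0∞ => (((n : ℝ)⁻¹ : ℝ) : EReal) * (-m.log + ((0:ℝ):EReal))) :=
    fun m m' h => term_mono h _
  exact ha.measurable.comp hb

theorem ptG_comp_le [BorelSpace X] {f : X → X} (hf : Continuous f) {μ : Measure X}
    [IsProbabilityMeasure μ] (hinv : MeasurePreserving f μ μ) (ε : ℝ) (x : X) :
    ptG f (fun _ => 0) μ ε (f x) ≤ ptG f (fun _ => 0) μ ε x := by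
  by_contra hcon
  rw [not_le] at hcon
  obtain ⟨s, hs, hq⟩ := EReal.lt_iff_exists_real_btwn.1 hcon
  obtain ⟨q, hq2, hq⟩ := EReal.lt_iff_exists_real_btwn.1 hq
  have hsq : s < q := by exact_mod_cast hq2
  refine absurd hs (not_lt.2 ?_)
  have h1 := lt_ptG hq
  simp only [birk_zero] at h1
  have hlim : ∀ᶠ n : ℕ in atTop, s ≤ (q - s) * n := by
    have : Tendsto (fun n : ℕ => (q - s) * (n:ℝ)) atTop atTop :=
      tendsto_natCast_atTop_atTop.const_mul_atTop (by linarith)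
    exact this.eventually_ge_atTop s
  refine le_liminf_of_le (by isBoundedDefault) ?_
  obtain ⟨N, hN⟩ := eventually_atTop.1 (h1.and hlim)
  refine eventually_atTop.2 ⟨N + 1, fun n hn => ?_⟩
  obtain ⟨m, rfl⟩ : ∃ m, n = m + 1 := ⟨n - 1, by omega⟩
  obtain ⟨h2, h3⟩ := hN m (by omega)
  rw [birk_zero]
  refine le_of_lt ((lt_term_iff (by omega) (measure_ne_top _ _) _ _).2 ?_)
  have hsub : bowenBall f x (m+1) ε ⊆ f ⁻¹' (bowenBall f (f x) m ε) := by
    intro y hy i hi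
    have := hy (i+1) (by omega)
    simpa [Function.iterate_succ_apply] using this
  calc μ (bowenBall f x (m+1) ε) ≤ μ (f ⁻¹' (bowenBall f (f x) m ε)) := measure_mono hsub
    _ = μ (bowenBall f (f x) m ε) := hinv.measure_preimage (bowenBall_isOpen hf _ _ _).measurableSet.nullMeasurableSet
    _ < _ := h2
    _ ≤ _ := by
      refine ENNReal.ofReal_le_ofReal (Real.exp_le_exp.2 ?_)
      push_cast
      nlinarith

/-- In the ergodic case a strict lower bound of the essential supremum holds a.e. at one scale. -/
theorem exists_scale [CompactSpace X] [BorelSpace X] {f : X → X} (hf : Continuous f) {μ : Measure X}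
    [IsProbabilityMeasure μ] (herg : Ergodic f μ) {t : EReal} (h : t < essSup (localEntropy f μ) μ) :
    ∃ k : ℕ, ∀ᵐ x ∂μ, t < ptG f (fun _ => 0) μ (1 / ((k:ℝ)+1)) x := by
  have hm : ∀ k : ℕ, MeasurableSet {x | t < ptG f (fun _ => 0) μ (1 / ((k:ℝ)+1)) x} := fun k =>
    measurableSet_lt measurable_const (measurable_ptG hf _)
  by_contra hcon
  rw [not_exists] at hcon
  have h0 : ∀ k : ℕ, μ {x | t < ptG f (fun _ => 0) μ (1 / ((k:ℝ)+1)) x} = 0 := by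
    intro k
    rcases herg.ae_empty_or_univ_of_preimage_ae_le (hm k).nullMeasurableSet
      (Eventually.of_forall fun x hx => lt_of_lt_of_le hx (ptG_comp_le hf herg.toMeasurePreserving _ x)) with h1 | h1
    · exact measure_eq_zero_iff_ae_notMem.2 (by simpa using (eventuallyEq_empty.1 h1))
    · exact absurd (eventuallyEq_univ.1 h1) (hcon k)
  have h1 : ∀ᵐ x ∂μ, localEntropy f μ x ≤ t := by
    have : ∀ᵐ x ∂μ, ∀ k : ℕ, ¬ (t < ptG f (fun _ => 0) μ (1 / ((k:ℝ)+1)) x) := by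
      rw [ae_all_iff]
      intro k
      exact measure_eq_zero_iff_ae_notMem.1 (h0 k)
    filter_upwards [this] with x hx
    by_contra hlt
    rw [localEntropy_eq] at hlt
    obtain ⟨k, hk⟩ := exists_ptG (not_le.1 hlt)
    exact hx k hk
  exact absurd h (not_lt.2 (essSup_le_of_ae_le _ h1))

end P3
end Paper


set_option linter.unusedSectionVars false
set_option linter.unusedVariables false
open MeasureTheory Filter Set
open scoped ENNReal NNReal
namespace Paper
section P4
variable {X : Type*} [mX : MeasurableSpace X]
variable {α β : Type*} [Fintype α] [MeasurableSpace α] [MeasurableSingletonClass α]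
  [Fintype β] [MeasurableSpace β] [MeasurableSingletonClass β]

theorem integral_comp_fin {μ : Measure X} [IsFiniteMeasure μ] {N : X → β} (hN : Measurable N) (G : β → ℝ) :
    ∫ x, G (N x) ∂μ = ∑ w, μ.real (N ⁻¹' {w}) * G w := by
  have h1 := integral_map (μ := μ) hN.aemeasurable (f := G)
    (measurable_of_finite G).aestronglyMeasurable
  rw [← h1, integral_fintype Integrable.of_finite]
  refine Finset.sum_congr rfl fun w _ => ?_
  rw [smul_eq_mul, map_measureReal_apply hN (measurableSet_singleton w)]

theorem integrable_comp_fin {μ : Measure X} [IsFiniteMeasure μ] {N : X → β} (hN : Measurable N) (G : β → ℝ) :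
    Integrable (fun x => G (N x)) μ := by
  have : Integrable G (μ.map N) := Integrable.of_finite
  exact this.comp_measurable hN

/-- conditional probability of `A` given the value of `N`. -/
noncomputable def cprob (μ : Measure X) (A : Set X) (N : X → β) (w : β) : ℝ :=
  μ.real (A ∩ N ⁻¹' {w}) / μ.real (N ⁻¹' {w})

theorem cprob_nonneg (μ : Measure X) (A : Set X) (N : X → β) (w : β) : 0 ≤ cprob μ A N w :=
  div_nonneg measureReal_nonneg measureReal_nonneg

theorem cprob_le_one (μ : Measure X) [IsFiniteMeasure μ] (A : Set X) (N : X → β) (w : β) : cprob μ A N w ≤ 1 :=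
  div_le_one_of_le₀ (measureReal_mono inter_subset_right) measureReal_nonneg

theorem mul_cprob {μ : Measure X} [IsFiniteMeasure μ] (A : Set X) (N : X → β) (w : β) :
    μ.real (N ⁻¹' {w}) * cprob μ A N w = μ.real (A ∩ N ⁻¹' {w}) := by
  unfold cprob
  by_cases h : μ.real (N ⁻¹' {w}) = 0
  · rw [h, zero_mul]
    exact (le_antisymm ((measureReal_mono inter_subset_right).trans h.le) measureReal_nonneg).symm
  · field_simp

theorem cprob_ae_condExp {μ : Measure X} [IsProbabilityMeasure μ] {A : Set X} (hA : MeasurableSet A)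
    {N : X → β} (hN : Measurable N) :
    (fun x => cprob μ A N (N x)) =ᵐ[μ] μ[A.indicator (fun _ => (1:ℝ)) | MeasurableSpace.comap N inferInstance] := by
  classical
  refine ae_eq_condExp_of_forall_setIntegral_eq hN.comap_le ?_ ?_ ?_ ?_
  · exact (integrable_const 1).indicator hA
  · intro s _ _
    exact (integrable_comp_fin hN _).integrableOn
  · rintro s ⟨T, hT, rfl⟩ _
    rw [integral_comp_fin (μ := μ.restrict (N ⁻¹' T)) hN]
    have h1 : ∫ x in N ⁻¹' T, A.indicator (fun _ => (1:ℝ)) x ∂μ = ∫ x in A, T.indicator (fun _ => (1:ℝ)) (N x) ∂μ := by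
      have e : ∀ x, T.indicator (fun _ => (1:ℝ)) (N x) = (N ⁻¹' T).indicator (fun _ => (1:ℝ)) x := fun x => rfl
      simp_rw [e]
      rw [setIntegral_indicator hA, setIntegral_indicator (hN hT), inter_comm]
    rw [h1, integral_comp_fin (μ := μ.restrict A) hN (T.indicator (fun _ => (1:ℝ)))]
    refine Finset.sum_congr rfl fun w _ => ?_
    have hw := hN (measurableSet_singleton w)
    rw [measureReal_restrict_apply hw, measureReal_restrict_apply hw]
    by_cases hwT : w ∈ T
    · have : N ⁻¹' {w} ∩ N ⁻¹' T = N ⁻¹' {w} := by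
        rw [← preimage_inter, inter_eq_left.2 (singleton_subset_iff.2 hwT)]
      rw [this, mul_cprob, indicator_of_mem hwT, mul_one, inter_comm]
    · have : N ⁻¹' {w} ∩ N ⁻¹' T = ∅ := by
        rw [← preimage_inter, (disjoint_singleton_left.2 hwT).inter_eq, preimage_empty]
      rw [this]; simp [hwT]
  · refine StronglyMeasurable.aestronglyMeasurable ?_
    refine Measurable.stronglyMeasurable ?_
    exact (measurable_of_finite (cprob μ A N)).comp (comap_measurable N)

theorem exp_aux {r K : ℝ} (h0 : 0 ≤ r) : r * (-Real.log r - -Real.log (max r (Real.exp (-K)))) ≤ Real.exp (-K) := by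
  rcases h0.eq_or_lt with h | h
  · rw [← h]; simp [Real.exp_nonneg]
  · rcases le_total (Real.exp (-K)) r with h1 | h1
    · rw [max_eq_left h1]; simp [Real.exp_nonneg]
    · rw [max_eq_right h1, Real.log_exp]
      have h2 := Real.add_one_le_exp (-Real.log r - K)
      have h3 : Real.exp (-K) = r * Real.exp (-Real.log r - K) := by
        rw [← Real.exp_log h, ← Real.exp_add, Real.log_exp]; ring_nf
      rw [h3]
      exact mul_le_mul_of_nonneg_left (by linarith) h0

theorem integral_trunc_le {μ : Measure X} [IsProbabilityMeasure μ] {ξ : X → α} (hξ : Measurable ξ)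
    {N : X → β} (hN : Measurable N) (K : ℝ) :
    ∫ x, (-Real.log (cprob μ (ξ ⁻¹' {ξ x}) N (N x)) -
      -Real.log (max (cprob μ (ξ ⁻¹' {ξ x}) N (N x)) (Real.exp (-K)))) ∂μ ≤ Fintype.card α * Real.exp (-K) := by
  have h := integral_comp_fin (μ := μ) (hξ.prodMk hN) (fun p : α × β => (-Real.log (cprob μ (ξ ⁻¹' {p.1}) N p.2) -
      -Real.log (max (cprob μ (ξ ⁻¹' {p.1}) N p.2) (Real.exp (-K)))))
  simp only at h
  rw [h, Fintype.sum_prod_type]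
  have h1 : ∀ a : α, ∑ w : β, μ.real ((fun a => (ξ a, N a)) ⁻¹' {(a, w)}) *
      (-Real.log (cprob μ (ξ ⁻¹' {a}) N w) -
      -Real.log (max (cprob μ (ξ ⁻¹' {a}) N w) (Real.exp (-K)))) ≤ Real.exp (-K) := by
    intro a
    calc _ ≤ ∑ w : β, μ.real (N ⁻¹' {w}) * Real.exp (-K) := by
          refine Finset.sum_le_sum fun w _ => ?_
          have e : (fun a => (ξ a, N a)) ⁻¹' {(a, w)} = ξ ⁻¹' {a} ∩ N ⁻¹' {w} := by
            ext x; simp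
          rw [e, ← mul_cprob, mul_assoc]
          exact mul_le_mul_of_nonneg_left (exp_aux (cprob_nonneg _ _ _ _)) measureReal_nonneg
      _ = Real.exp (-K) := by
          rw [← integral_comp_fin hN (fun _ => Real.exp (-K))]; simp
  calc _ ≤ ∑ a : α, Real.exp (-K) := Finset.sum_le_sum fun a _ => h1 a
    _ = _ := by simp

theorem ae_pos_fin {μ : Measure X} [IsFiniteMeasure μ] {N : X → β} (hN : Measurable N) :
    ∀ᵐ x ∂μ, 0 < μ.real (N ⁻¹' {N x}) := by
  have : ∀ᵐ x ∂μ, ∀ w : β, μ (N ⁻¹' {w}) = 0 → x ∉ N ⁻¹' {w} := by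
    rw [ae_all_iff]
    intro w
    by_cases h : μ (N ⁻¹' {w}) = 0
    · filter_upwards [measure_eq_zero_iff_ae_notMem.1 h] with x hx _ using hx
    · exact Eventually.of_forall fun x hx => absurd hx h
  filter_upwards [this] with x hx
  refine (measureReal_nonneg).lt_of_ne fun h => ?_
  refine hx (N x) ?_ rfl
  exact (measureReal_eq_zero_iff).1 h.symm

end P4
end Paper


set_option linter.unusedSectionVars false
set_option linter.unusedVariables false
open MeasureTheory Filter Set
open scoped ENNReal NNReal
namespace Paper
section P5
variable {X : Type*} [mX : MeasurableSpace X]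
variable {α : Type*} [Fintype α] [MeasurableSpace α] [MeasurableSingletonClass α]

/-- The `n`-name of a point. -/
def nm (f : X → X) (ξ : X → α) (n : ℕ) (x : X) : Fin n → α := fun i => ξ (f^[(i:ℕ)] x)

theorem measurable_nm {f : X → X} (hf : Measurable f) {ξ : X → α} (hξ : Measurable ξ) (n : ℕ) :
    Measurable (nm f ξ n) :=
  measurable_pi_lambda _ fun i => hξ.comp (hf.iterate i)

/-- The mass of the `n`-cylinder of a point. -/
noncomputable def pn (μ : Measure X) (f : X → X) (ξ : X → α) (n : ℕ) (x : X) : ℝ :=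
  μ.real (nm f ξ n ⁻¹' {nm f ξ n x})

/-- conditional probability of own cell given the future. -/
noncomputable def rk (μ : Measure X) (f : X → X) (ξ : X → α) (k : ℕ) (x : X) : ℝ :=
  cprob μ (ξ ⁻¹' {ξ x}) (fun y => nm f ξ k (f y)) (nm f ξ k (f x))

/-- truncated information function. -/
noncomputable def psi (μ : Measure X) (f : X → X) (ξ : X → α) (K : ℝ) (k : ℕ) (x : X) : ℝ :=
  -Real.log (max (rk μ f ξ k x) (Real.exp (-K)))

theorem nm_succ_preimage (f : X → X) (ξ : X → α) (k : ℕ) (x : X) :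
    nm f ξ (k+1) ⁻¹' {nm f ξ (k+1) x} =
      ξ ⁻¹' {ξ x} ∩ (fun y => nm f ξ k (f y)) ⁻¹' {nm f ξ k (f x)} := by
  ext y
  simp only [mem_preimage, mem_singleton_iff, mem_inter_iff, funext_iff, Fin.forall_fin_succ, nm]
  simp [Function.iterate_succ_apply]

theorem rk_eq {μ : Measure X} {f : X → X} (hf : MeasurePreserving f μ μ) {ξ : X → α} (hξ : Measurable ξ)
    (k : ℕ) (x : X) : rk μ f ξ k x = pn μ f ξ (k+1) x / pn μ f ξ k (f x) := by
  unfold rk cprob pn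
  rw [nm_succ_preimage]
  congr 1
  have : (fun y => nm f ξ k (f y)) ⁻¹' {nm f ξ k (f x)} = f ⁻¹' (nm f ξ k ⁻¹' {nm f ξ k (f x)}) := rfl
  rw [this, measureReal_def, measureReal_def, hf.measure_preimage
    (measurable_nm hf.measurable hξ k (measurableSet_singleton _)).nullMeasurableSet]

theorem psi_nonneg {μ : Measure X} [IsProbabilityMeasure μ] {f : X → X} {ξ : X → α} {K : ℝ} (hK : 0 ≤ K) (k : ℕ) (x : X) :
    0 ≤ psi μ f ξ K k x := by
  unfold psi
  rw [neg_nonneg]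
  refine Real.log_nonpos ((Real.exp_nonneg _).trans (le_max_right _ _)) (max_le (cprob_le_one _ _ _ _) ?_)
  exact Real.exp_le_one_iff.2 (by linarith)

theorem psi_le {μ : Measure X} {f : X → X} {ξ : X → α} {K : ℝ} (k : ℕ) (x : X) :
    psi μ f ξ K k x ≤ K := by
  unfold psi
  have := Real.log_le_log (Real.exp_pos (-K)) (le_max_right (rk μ f ξ k x) (Real.exp (-K)))
  rw [Real.log_exp] at this
  linarith

theorem measurable_psi {μ : Measure X} {f : X → X} (hf : Measurable f) {ξ : X → α} (hξ : Measurable ξ) (K : ℝ) (k : ℕ) :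
    Measurable (psi μ f ξ K k) := by
  have hm : Measurable (fun x => (ξ x, nm f ξ k (f x))) := hξ.prodMk ((measurable_nm hf hξ k).comp hf)
  let G : α × (Fin k → α) → ℝ := fun p =>
    -Real.log (max (cprob μ (ξ ⁻¹' {p.1}) (fun y => nm f ξ k (f y)) p.2) (Real.exp (-K)))
  have h : Measurable G := measurable_of_finite G
  have e : psi μ f ξ K k = fun x => G (ξ x, nm f ξ k (f x)) := by
    funext x
    simp only [psi, rk, G]
  rw [e]
  clear_value G
  exact Measurable.comp h hm

theorem psi_tendsto {μ : Measure X} [IsProbabilityMeasure μ] {f : X → X} (hf : Measurable f) {ξ : X → α}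
    (hξ : Measurable ξ) (K : ℝ) :
    ∃ Ψ : X → ℝ, ∀ᵐ x ∂μ, Tendsto (fun k => psi μ f ξ K k x) atTop (nhds (Ψ x)) := by
  have hN : ∀ k, Measurable (fun x => nm f ξ k (f x)) := fun k => (measurable_nm hf hξ k).comp hf
  let F : Filtration ℕ mX :=
    { seq := fun k => MeasurableSpace.comap (fun x => nm f ξ k (f x)) inferInstance
      mono' := by
        intro k l hkl
        have e : (fun x => nm f ξ k (f x)) = (fun w : Fin l → α => fun i : Fin k => w (Fin.castLE hkl i)) ∘
          (fun x => nm f ξ l (f x)) := by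
          funext x i; rfl
        show MeasurableSpace.comap (fun x => nm f ξ k (f x)) _ ≤ MeasurableSpace.comap (fun x => nm f ξ l (f x)) _
        rw [e, ← MeasurableSpace.comap_comp]
        exact MeasurableSpace.comap_mono (measurable_of_finite _).comap_le
      le' := fun k => (hN k).comap_le }
  let g : α → X → ℝ := fun a => (ξ ⁻¹' {a}).indicator (fun _ => (1:ℝ))
  refine ⟨fun x => -Real.log (max ((μ[g (ξ x) | ⨆ n, F n]) x) (Real.exp (-K))), ?_⟩
  have h1 : ∀ᵐ x ∂μ, ∀ a, Tendsto (fun k => (μ[g a | F k]) x) atTop (nhds ((μ[g a | ⨆ n, F n]) x)) := by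
    rw [ae_all_iff]
    exact fun a => tendsto_ae_condExp (g a)
  have h2 : ∀ᵐ x ∂μ, ∀ a, ∀ k, cprob μ (ξ ⁻¹' {a}) (fun y => nm f ξ k (f y)) (nm f ξ k (f x)) = (μ[g a | F k]) x := by
    rw [ae_all_iff]; intro a
    rw [ae_all_iff]; intro k
    exact cprob_ae_condExp (hξ (measurableSet_singleton a)) (hN k)
  filter_upwards [h1, h2] with x hx1 hx2
  have h3 : Tendsto (fun k => rk μ f ξ k x) atTop (nhds ((μ[g (ξ x) | ⨆ n, F n]) x)) := by
    refine (hx1 (ξ x)).congr fun k => (hx2 (ξ x) k).symm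
  have h4 := h3.max (tendsto_const_nhds (x := Real.exp (-K)))
  have hne : max ((μ[g (ξ x) | ⨆ n, F n]) x) (Real.exp (-K)) ≠ 0 :=
    ((Real.exp_pos _).trans_le (le_max_right _ _)).ne'
  exact (h4.log hne).neg

/-- information function -/
noncomputable def Inf' (μ : Measure X) (f : X → X) (ξ : X → α) (n : ℕ) (x : X) : ℝ := -Real.log (pn μ f ξ n x)

theorem ae_pn_pos {μ : Measure X} [IsProbabilityMeasure μ] {f : X → X} (hf : MeasurePreserving f μ μ) {ξ : X → α}
    (hξ : Measurable ξ) : ∀ᵐ x ∂μ, ∀ j n, 0 < pn μ f ξ n (f^[j] x) := by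
  rw [ae_all_iff]; intro j
  rw [ae_all_iff]; intro n
  exact (hf.iterate j).quasiMeasurePreserving.ae (ae_pos_fin (measurable_nm hf.measurable hξ n))

theorem Inf'_zero (μ : Measure X) [IsProbabilityMeasure μ] (f : X → X) (ξ : X → α) (x : X) : Inf' μ f ξ 0 x = 0 := by
  have : nm f ξ 0 ⁻¹' {nm f ξ 0 x} = univ := by
    ext y; simp [eq_iff_true_of_subsingleton]
  unfold Inf' pn; rw [this]; simp

theorem Inf'_integrable {μ : Measure X} [IsProbabilityMeasure μ] {f : X → X} (hf : Measurable f) {ξ : X → α}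
    (hξ : Measurable ξ) (n : ℕ) : Integrable (Inf' μ f ξ n) μ :=
  integrable_comp_fin (measurable_nm hf hξ n) (fun w => -Real.log (μ.real (nm f ξ n ⁻¹' {w})))

theorem neg_log_rk {μ : Measure X} [IsProbabilityMeasure μ] {f : X → X} (hf : MeasurePreserving f μ μ) {ξ : X → α}
    (hξ : Measurable ξ) {x : X} (hx : ∀ j n, 0 < pn μ f ξ n (f^[j] x)) (k : ℕ) :
    -Real.log (rk μ f ξ k x) = Inf' μ f ξ (k+1) x - Inf' μ f ξ k (f x) := by
  have h0 : 0 < pn μ f ξ (k+1) x := hx 0 (k+1)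
  have h1 : 0 < pn μ f ξ k (f x) := hx 1 k
  rw [rk_eq hf hξ, Real.log_div h0.ne' h1.ne']
  unfold Inf'; ring

theorem psi_le_neg_log_rk {μ : Measure X} [IsProbabilityMeasure μ] {f : X → X} (hf : MeasurePreserving f μ μ) {ξ : X → α}
    (hξ : Measurable ξ) {x : X} (hx : ∀ j n, 0 < pn μ f ξ n (f^[j] x)) (K : ℝ) (k : ℕ) :
    psi μ f ξ K k x ≤ -Real.log (rk μ f ξ k x) := by
  unfold psi
  refine neg_le_neg (Real.log_le_log ?_ (le_max_left _ _))
  rw [rk_eq hf hξ]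
  exact div_pos (hx 0 (k+1)) (hx 1 k)

theorem sum_psi_le {μ : Measure X} [IsProbabilityMeasure μ] {f : X → X} (hf : MeasurePreserving f μ μ) {ξ : X → α}
    (hξ : Measurable ξ) {K : ℝ} (n : ℕ) : ∀ {x : X} (hx : ∀ j n, 0 < pn μ f ξ n (f^[j] x)),
    ∑ j ∈ Finset.range n, psi μ f ξ K (n - 1 - j) (f^[j] x) ≤ Inf' μ f ξ n x := by
  induction n with
  | zero => intro x hx; rw [Inf'_zero]; simp
  | succ n ih =>
    intro x hx
    have hx' : ∀ j n, 0 < pn μ f ξ n (f^[j] (f x)) := fun j n => hx (j+1) n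
    have h1 := ih hx'
    have h2 := psi_le_neg_log_rk hf hξ hx K n
    rw [neg_log_rk hf hξ hx] at h2
    rw [Finset.sum_range_succ']
    have h3 : ∑ j ∈ Finset.range n, psi μ f ξ K (n + 1 - 1 - (j+1)) (f^[j+1] x) =
      ∑ j ∈ Finset.range n, psi μ f ξ K (n - 1 - j) (f^[j] (f x)) := by
      refine Finset.sum_congr rfl fun j hj => ?_
      rw [Function.iterate_succ_apply]
      congr 1; omega
    rw [h3]
    simp only [Function.iterate_zero, id, Nat.sub_zero, Nat.add_sub_cancel]
    linarith

theorem integral_psi_ge {μ : Measure X} [IsProbabilityMeasure μ] {f : X → X} (hf : MeasurePreserving f μ μ) {ξ : X → α}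
    (hξ : Measurable ξ) {K : ℝ} (hK : 0 ≤ K) (k : ℕ) :
    ∫ x, Inf' μ f ξ (k+1) x ∂μ - ∫ x, Inf' μ f ξ k x ∂μ - Fintype.card α * Real.exp (-K) ≤ ∫ x, psi μ f ξ K k x ∂μ := by
  have h := integral_trunc_le (μ := μ) hξ ((measurable_nm hf.measurable hξ k).comp hf.measurable) K
  have h1 : ∫ x, (Inf' μ f ξ (k+1) x - Inf' μ f ξ k (f x) - psi μ f ξ K k x) ∂μ ≤ Fintype.card α * Real.exp (-K) := by
    refine le_trans (le_of_eq ?_) h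
    refine integral_congr_ae ?_
    filter_upwards [ae_pn_pos hf hξ] with x hx
    rw [← neg_log_rk hf hξ hx]; rfl
  have i1 := Inf'_integrable (μ := μ) hf.measurable hξ (k+1)
  have i2 : Integrable (fun x => Inf' μ f ξ k (f x)) μ := hf.integrable_comp_of_integrable (Inf'_integrable (μ := μ) hf.measurable hξ k)
  have i3 : Integrable (psi μ f ξ K k) μ := integrable_of_bdd (C := K) (measurable_psi hf.measurable hξ K k)
    fun x => abs_le.2 ⟨by linarith [psi_nonneg (μ := μ) (f := f) (ξ := ξ) hK k x], psi_le k x⟩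
  have e1 : ∫ x, (Inf' μ f ξ (k+1) x - Inf' μ f ξ k (f x) - psi μ f ξ K k x) ∂μ =
      ∫ x, (Inf' μ f ξ (k+1) x - Inf' μ f ξ k (f x)) ∂μ - ∫ x, psi μ f ξ K k x ∂μ := integral_sub (i1.sub i2) i3
  rw [e1, integral_sub i1 i2] at h1
  have h2 : ∫ x, Inf' μ f ξ k (f x) ∂μ = ∫ x, Inf' μ f ξ k x ∂μ := by
    have h3 := integral_map (μ := μ) hf.measurable.aemeasurable (f := Inf' μ f ξ k)
      (by rw [hf.map_eq]; exact (Inf'_integrable (μ := μ) hf.measurable hξ k).aestronglyMeasurable)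
    rw [hf.map_eq] at h3
    exact h3.symm
  linarith


theorem smb_lower {μ : Measure X} [IsProbabilityMeasure μ] {f : X → X} (hf : Ergodic f μ) {ξ : X → α}
    (hξ : Measurable ξ) {t t' : ℝ} (ht : ∀ᶠ n : ℕ in atTop, t ≤ (∫ x, Inf' μ f ξ n x ∂μ) / n) (htt : t' < t) :
    ∀ᵐ x ∂μ, ∀ᶠ n : ℕ in atTop, pn μ f ξ n x ≤ Real.exp (-t' * n) := by
  have hp := hf.toMeasurePreserving
  -- choice of the truncation level
  obtain ⟨K, hK, hKc⟩ : ∃ K : ℝ, 0 ≤ K ∧ Fintype.card α * Real.exp (-K) < (t - t') / 2 := by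
    have h1 : Tendsto (fun K : ℝ => (Fintype.card α : ℝ) * Real.exp (-K)) atTop (nhds 0) := by
      simpa using (Real.tendsto_exp_neg_atTop_nhds_zero).const_mul (Fintype.card α : ℝ)
    exact ((eventually_ge_atTop 0).and (h1.eventually_lt_const (by linarith))).exists
  obtain ⟨Ψ, hΨ⟩ := psi_tendsto (μ := μ) hp.measurable hξ K
  set c : ℝ := Fintype.card α * Real.exp (-K) with hc
  have habs : ∀ k x, |psi μ f ξ K k x| ≤ K := fun k x =>
    abs_le.2 ⟨by linarith [psi_nonneg (μ := μ) (f := f) (ξ := ξ) hK k x], psi_le k x⟩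
  have hb : Tendsto (fun k => ∫ x, psi μ f ξ K k x ∂μ) atTop (nhds (∫ x, Ψ x ∂μ)) := by
    refine tendsto_integral_of_dominated_convergence (fun _ => K)
      (fun k => (measurable_psi hp.measurable hξ K k).aestronglyMeasurable) (integrable_const K)
      (fun k => ae_of_all _ fun x => by simpa using habs k x) hΨ
  -- the entropy is at most the integral of the limit, plus `c`
  have hge : t ≤ ∫ x, Ψ x ∂μ + c := by
    have h1 := hb.cesaro.add_const c
    refine ge_of_tendsto h1 ?_
    filter_upwards [ht, eventually_gt_atTop 0] with n hn hn0
    have hn0' : (0:ℝ) < n := by exact_mod_cast hn0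
    have h2 : ∫ x, Inf' μ f ξ n x ∂μ - n * c ≤ ∑ k ∈ Finset.range n, ∫ x, psi μ f ξ K k x ∂μ := by
      have h3 := Finset.sum_le_sum (s := Finset.range n) fun k _ => integral_psi_ge (μ := μ) hp hξ hK k
      rw [Finset.sum_sub_distrib, Finset.sum_range_sub (fun k => ∫ x, Inf' μ f ξ k x ∂μ)] at h3
      simp only [Inf'_zero, integral_zero, sub_zero, Finset.sum_const, Finset.card_range, nsmul_eq_mul] at h3
      exact h3
    refine hn.trans ?_
    rw [div_eq_inv_mul]
    have h4 := mul_le_mul_of_nonneg_left h2 (inv_nonneg.2 hn0'.le)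
    have h5 : (n:ℝ)⁻¹ * (n * c) = c := by field_simp
    rw [mul_sub, h5] at h4
    linarith
  -- lower envelopes
  let G : ℕ → X → ℝ := fun M x => ⨅ k : ℕ, psi μ f ξ K (M + k) x
  have hbdd : ∀ M x, BddBelow (range fun k : ℕ => psi μ f ξ K (M + k) x) := fun M x =>
    ⟨0, by rintro _ ⟨k, rfl⟩; exact psi_nonneg hK _ _⟩
  have hGle : ∀ M k x, M ≤ k → G M x ≤ psi μ f ξ K k x := by
    intro M k x h
    have := ciInf_le (hbdd M x) (k - M)
    simpa [Nat.add_sub_cancel' h] using this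
  have hG0 : ∀ M x, 0 ≤ G M x := fun M x => le_ciInf fun k => psi_nonneg hK _ _
  have hGK : ∀ M x, G M x ≤ K := fun M x => (hGle M M x le_rfl).trans (psi_le _ _)
  have hGabs : ∀ M x, |G M x| ≤ K := fun M x => abs_le.2 ⟨by linarith [hG0 M x], hGK M x⟩
  have hGm : ∀ M, Measurable (G M) := fun M => Measurable.iInf fun k => measurable_psi hp.measurable hξ K _
  have hGlim : ∀ᵐ x ∂μ, Tendsto (fun M => G M x) atTop (nhds (Ψ x)) := by
    filter_upwards [hΨ] with x hx
    rw [tendsto_order]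
    constructor
    · intro a ha
      obtain ⟨b, hab, hb'⟩ := exists_between ha
      obtain ⟨M, hM⟩ := eventually_atTop.1 (hx.eventually_const_lt hb')
      filter_upwards [eventually_ge_atTop M] with m hm
      exact hab.trans_le (le_ciInf fun k => (hM (m + k) (by omega)).le)
    · intro a ha
      filter_upwards [hx.eventually_lt_const ha] with m hm
      exact (hGle m m x le_rfl).trans_lt hm
  have hGint : Tendsto (fun M => ∫ x, G M x ∂μ) atTop (nhds (∫ x, Ψ x ∂μ)) :=
    tendsto_integral_of_dominated_convergence (fun _ => K)
      (fun k => (hGm k).aestronglyMeasurable) (integrable_const K)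
      (fun k => ae_of_all _ fun x => by simpa using hGabs k x) hGlim
  obtain ⟨M, hM⟩ := (hGint.eventually_const_lt (u := (t + t') / 2) (by linarith)).exists
  filter_upwards [birkhoff_ergodic hf (hGm M) (hGabs M), ae_pn_pos hp hξ] with x hx hpos
  have h6 : Tendsto (fun n : ℕ => birk f (G M) n x / n - (M * K) / n) atTop (nhds (∫ x, G M x ∂μ - 0)) :=
    hx.sub (tendsto_const_div_atTop_nhds_zero_nat _)
  filter_upwards [h6.eventually_const_lt (u := t') (by linarith), eventually_gt_atTop 0] with n hn hn0
  have hn0' : (0:ℝ) < n := by exact_mod_cast hn0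
  have h7 := sum_psi_le (K := K) hp hξ n hpos
  have h8 : birk f (G M) n x - M * K ≤ ∑ j ∈ Finset.range n, psi μ f ξ K (n - 1 - j) (f^[j] x) := by
    have h9 : ∀ j ∈ Finset.range n, G M (f^[j] x) ≤ psi μ f ξ K (n - 1 - j) (f^[j] x) + (if n - M ≤ j then K else 0) := by
      intro j hj
      have hj' := Finset.mem_range.1 hj
      split_ifs with h
      · linarith [hGK M (f^[j] x), psi_nonneg (μ := μ) (f := f) (ξ := ξ) hK (n-1-j) (f^[j] x)]
      · rw [add_zero]; exact hGle _ _ _ (by omega)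
    have h10 := Finset.sum_le_sum h9
    rw [Finset.sum_add_distrib, ← Finset.sum_filter, Finset.sum_const, nsmul_eq_mul] at h10
    have h11 : ((Finset.range n).filter (fun j => n - M ≤ j)).card ≤ M := by
      have : (Finset.range n).filter (fun j => n - M ≤ j) ⊆ Finset.Ico (n - M) n := by
        intro j hj
        simp only [Finset.mem_filter, Finset.mem_range, Finset.mem_Ico] at hj ⊢
        omega
      refine (Finset.card_le_card this).trans ?_
      simp
      omega
    have h12 : (((Finset.range n).filter (fun j => n - M ≤ j)).card : ℝ) * K ≤ M * K :=
      mul_le_mul_of_nonneg_right (by exact_mod_cast h11) hK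
    unfold birk
    linarith
  have h13 : t' * n < Inf' μ f ξ n x := by
    rw [← sub_div, lt_div_iff₀ hn0'] at hn
    linarith
  have hp0 : 0 < pn μ f ξ n x := hpos 0 n
  rw [← Real.log_le_iff_le_exp hp0]
  unfold Inf' at h13
  linarith

end P5
end Paper


set_option linter.unusedSectionVars false
set_option linter.unusedVariables false
open MeasureTheory Filter Set
open scoped ENNReal NNReal
namespace Paper
section P6

theorem hamming_count {α : Type*} [Fintype α] [DecidableEq α] {n : ℕ} (w0 : Fin n → α) {L D : ℝ} (hL : 0 ≤ L)
    (S : Finset (Fin n → α))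
    (hS : ∀ w ∈ S, ((Finset.univ.filter fun i => w i ≠ w0 i).card : ℝ) ≤ D) :
    (S.card : ℝ) ≤ Real.exp (L * D + n * (Fintype.card α * Real.exp (-L))) := by
  have h1 : ∀ w ∈ S, Real.exp (-(L * D)) ≤ ∏ i, (if w i = w0 i then (1:ℝ) else Real.exp (-L)) := by
    intro w hw
    have e : ∏ i, (if w i = w0 i then (1:ℝ) else Real.exp (-L)) =
        Real.exp (-L) ^ (Finset.univ.filter fun i => w i ≠ w0 i).card := by
      rw [Finset.prod_ite, Finset.prod_const_one, one_mul, Finset.prod_const]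
    rw [e, ← Real.exp_nat_mul]
    refine Real.exp_le_exp.2 ?_
    have := mul_le_mul_of_nonneg_left (hS w hw) hL
    linarith
  have h2 : ∑ w : Fin n → α, ∏ i, (if w i = w0 i then (1:ℝ) else Real.exp (-L)) ≤
      Real.exp (n * (Fintype.card α * Real.exp (-L))) := by
    have e := Finset.prod_univ_sum (fun _ : Fin n => (Finset.univ : Finset α))
      (fun i a => (if a = w0 i then (1:ℝ) else Real.exp (-L)))
    rw [Fintype.piFinset_univ] at e
    rw [← e, Real.exp_nat_mul]
    have h3 : ∀ i : Fin n, ∑ a, (if a = w0 i then (1:ℝ) else Real.exp (-L)) ≤ Real.exp (Fintype.card α * Real.exp (-L)) := by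
      intro i
      have h4 : ∑ a, (if a = w0 i then (1:ℝ) else Real.exp (-L)) ≤ ∑ a, ((if a = w0 i then (1:ℝ) else 0) + Real.exp (-L)) := by
        refine Finset.sum_le_sum fun a _ => ?_
        split_ifs
        · linarith [Real.exp_pos (-L)]
        · linarith
      rw [Finset.sum_add_distrib] at h4
      simp at h4
      linarith [Real.add_one_le_exp (Fintype.card α * Real.exp (-L))]
    calc _ ≤ ∏ i : Fin n, Real.exp (Fintype.card α * Real.exp (-L)) := by
          refine Finset.prod_le_prod (fun i _ => Finset.sum_nonneg fun a _ => ?_) fun i _ => h3 i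
          split_ifs
          · exact zero_le_one
          · exact Real.exp_nonneg _
      _ = _ := by simp
  have h5 : (S.card : ℝ) * Real.exp (-(L * D)) ≤ Real.exp (n * (Fintype.card α * Real.exp (-L))) := by
    calc (S.card : ℝ) * Real.exp (-(L * D)) = ∑ w ∈ S, Real.exp (-(L * D)) := by simp
      _ ≤ ∑ w ∈ S, ∏ i, (if w i = w0 i then (1:ℝ) else Real.exp (-L)) := Finset.sum_le_sum h1
      _ ≤ ∑ w : Fin n → α, ∏ i, (if w i = w0 i then (1:ℝ) else Real.exp (-L)) := by
          refine Finset.sum_le_sum_of_subset_of_nonneg (Finset.subset_univ _) fun w _ _ => Finset.prod_nonneg fun i _ => ?_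
          split_ifs
          · exact zero_le_one
          · exact Real.exp_nonneg _
      _ ≤ _ := h2
  rw [Real.exp_neg, ← div_eq_mul_inv, div_le_iff₀ (Real.exp_pos _), ← Real.exp_add] at h5
  rwa [add_comm]

variable {X : Type*} [MetricSpace X] [CompactSpace X] [MeasurableSpace X] [BorelSpace X]
variable {α : Type*} [Fintype α] [DecidableEq α] [MeasurableSpace α] [MeasurableSingletonClass α]

theorem exists_gap {Kc : α → Set X} (hc : ∀ a, IsClosed (Kc a)) (hd : ∀ a b, a ≠ b → Disjoint (Kc a) (Kc b)) :
    ∃ ε > 0, ∀ a b, a ≠ b → ∀ x ∈ Kc a, ∀ y ∈ Kc b, ε ≤ dist x y := by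
  have h : ∀ p : α × α, ∀ᶠ ε in nhdsWithin (0:ℝ) (Ioi 0), p.1 ≠ p.2 → ∀ x ∈ Kc p.1, ∀ y ∈ Kc p.2, ε ≤ dist x y := by
    rintro ⟨a, b⟩
    by_cases hab : a = b
    · exact Eventually.of_forall fun ε h => absurd hab h
    · obtain ⟨δ, hδ, hdis⟩ := (hd a b hab).exists_thickenings (hc a).isCompact (hc b)
      filter_upwards [Ioo_mem_nhdsGT hδ] with ε hε _ x hx y hy
      by_contra hlt
      refine (Set.disjoint_left.1 hdis : ∀ ⦃z⦄, _ → _) (?_ : y ∈ _) (Metric.self_subset_thickening hδ _ hy)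
      rw [Metric.mem_thickening_iff]
      exact ⟨x, hx, by rw [dist_comm]; linarith [hε.2, not_le.1 hlt]⟩
  obtain ⟨ε, h1, h2⟩ := ((eventually_all.2 h).and self_mem_nhdsWithin).exists
  exact ⟨ε, h2, fun a b hab => h1 (a, b) hab⟩

theorem hamming_lower {f : X → X} {μ : Measure X} [IsProbabilityMeasure μ] (hf : Ergodic f μ)
    {ξ : X → α} (hξ : Measurable ξ) {t η : ℝ} (hη : 0 < η)
    (hp : ∀ᵐ x ∂μ, ∀ᶠ n : ℕ in atTop, pn μ f ξ n x ≤ Real.exp (-t * n)) :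
    ((t - η : ℝ) : EReal) ≤ Pmu f (fun _ => 0) μ := by
  classical
  obtain ⟨L, hL, hLc⟩ : ∃ K : ℝ, 0 ≤ K ∧ Fintype.card α * Real.exp (-K) < η / 2 := by
    have h1 : Tendsto (fun K : ℝ => (Fintype.card α : ℝ) * Real.exp (-K)) atTop (nhds 0) := by
      simpa using (Real.tendsto_exp_neg_atTop_nhds_zero).const_mul (Fintype.card α : ℝ)
    exact ((eventually_ge_atTop 0).and (h1.eventually_lt_const (by linarith))).exists
  obtain ⟨δ, hδ, hδL⟩ : ∃ δ : ℝ, 0 < δ ∧ L * (4 * δ) ≤ η / 2 := by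
    refine ⟨η / (8 * (L + 1)), by positivity, ?_⟩
    rw [show L * (4 * (η / (8 * (L + 1)))) = (L / (L+1)) * (η / 2) by field_simp; ring]
    have : L / (L + 1) ≤ 1 := by rw [div_le_one (by linarith)]; linarith
    nlinarith
  have hcl : ∀ a : α, ∃ C ⊆ ξ ⁻¹' {a}, IsClosed C ∧ μ (ξ ⁻¹' {a} \ C) < ENNReal.ofReal (δ / (Fintype.card α + 1)) := by
    intro a
    exact (hξ (measurableSet_singleton a)).exists_isClosed_sdiff_lt (measure_ne_top _ _)
      (by simp only [ne_eq, ENNReal.ofReal_eq_zero, not_le]; positivity)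
  choose Kc hsub hclosed hlt using hcl
  have hdis : ∀ a b, a ≠ b → Disjoint (Kc a) (Kc b) := by
    intro a b hab
    refine Set.disjoint_left.2 fun x hxa hxb => hab ?_
    rw [← show ξ x = a from hsub a hxa, ← show ξ x = b from hsub b hxb]
  obtain ⟨ε, hε, hgap⟩ := exists_gap hclosed hdis
  set U : Set X := (⋃ a, Kc a)ᶜ with hU
  have hUm : MeasurableSet U := (MeasurableSet.iUnion fun a => (hclosed a).measurableSet).compl
  have hμU : μ.real U ≤ δ := by
    refine ENNReal.toReal_le_of_le_ofReal hδ.le ?_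
    have h1 : U ⊆ ⋃ a, (ξ ⁻¹' {a} \ Kc a) := by
      intro x hx
      refine mem_iUnion.2 ⟨ξ x, rfl, fun h => hx (mem_iUnion.2 ⟨_, h⟩)⟩
    calc μ U ≤ μ (⋃ a, (ξ ⁻¹' {a} \ Kc a)) := measure_mono h1
      _ ≤ ∑ a, μ (ξ ⁻¹' {a} \ Kc a) := measure_iUnion_fintype_le _ _
      _ ≤ ∑ a : α, ENNReal.ofReal (δ / (Fintype.card α + 1)) := Finset.sum_le_sum fun a _ => (hlt a).le
      _ = ENNReal.ofReal (Fintype.card α * (δ / (Fintype.card α + 1))) := by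
          rw [Finset.sum_const, Finset.card_univ, nsmul_eq_mul, ENNReal.ofReal_mul (by positivity), ENNReal.ofReal_natCast]
      _ ≤ ENNReal.ofReal δ := by
          refine ENNReal.ofReal_le_ofReal ?_
          rw [show (Fintype.card α : ℝ) * (δ / (Fintype.card α + 1)) = (Fintype.card α / (Fintype.card α + 1)) * δ by ring]
          have : (Fintype.card α : ℝ) / (Fintype.card α + 1) ≤ 1 := by
            rw [div_le_one (by positivity)]; linarith
          nlinarith
  set φ : X → ℝ := U.indicator (fun _ => (1:ℝ)) with hφ
  have hφm : Measurable φ := measurable_const.indicator hUm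
  have hφ1 : ∀ x, |φ x| ≤ 1 := by
    intro x; rw [hφ]; by_cases h : x ∈ U <;> simp [h]
  have hφ0 : ∀ x, 0 ≤ φ x := fun x => indicator_nonneg (fun _ _ => zero_le_one) x
  have hφint : ∫ x, φ x ∂μ < 2 * δ := by
    rw [hφ, integral_indicator_const _ hUm]; simp; linarith
  let E : ℕ → Set X := fun N => {x | ∀ n ≥ N, pn μ f ξ n x ≤ Real.exp (-t * n) ∧ birk f φ n x ≤ 2 * δ * n}
  have hE : ∃ N, μ (E N) ≠ 0 := by
    by_contra hcon
    push Not at hcon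
    have h0 := measure_iUnion_null hcon
    have h1 : ∀ᵐ x ∂μ, x ∈ ⋃ N, E N := by
      filter_upwards [hp, birkhoff_ergodic hf hφm hφ1] with x hx1 hx2
      obtain ⟨N, hN⟩ := eventually_atTop.1 (hx1.and ((hx2.eventually_lt_const hφint).and (eventually_gt_atTop 0)))
      refine mem_iUnion.2 ⟨N, fun n hn => ⟨(hN n hn).1, ?_⟩⟩
      obtain ⟨_, h2, h3⟩ := hN n hn
      rw [div_lt_iff₀ (by exact_mod_cast h3)] at h2
      exact h2.le
    have h2 : ∀ᵐ x ∂μ, x ∉ ⋃ N, E N := measure_eq_zero_iff_ae_notMem.1 h0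
    obtain ⟨x, hx⟩ := (h1.and h2).exists
    exact hx.2 hx.1
  obtain ⟨N, hN⟩ := hE
  unfold Pmu
  refine le_iSup₂_of_le (ε / 2) (by linarith) (le_iInf₂ fun Z hZ => ?_)
  refine massdist (E := E N) (N := N) ((prob_compl_eq_zero_iff hZ.1).2 hZ.2) hN ?_
  intro x n hn
  rw [birk_zero, add_zero]
  set B := bowenBall f x n (ε/2) ∩ E N with hB
  let S : Finset (Fin n → α) := Finset.univ.filter fun w => w ∈ nm f ξ n '' B
  have hcov : B ⊆ ⋃ w ∈ S, nm f ξ n ⁻¹' {w} := by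
    intro y hy
    refine mem_iUnion₂.2 ⟨nm f ξ n y, ?_, rfl⟩
    exact Finset.mem_filter.2 ⟨Finset.mem_univ _, y, hy, rfl⟩
  have hpw : ∀ w ∈ S, μ (nm f ξ n ⁻¹' {w}) ≤ ENNReal.ofReal (Real.exp (-t * n)) := by
    intro w hw
    obtain ⟨y, hy, rfl⟩ := (Finset.mem_filter.1 hw).2
    have := (hy.2 n hn).1
    rw [ENNReal.le_ofReal_iff_toReal_le (measure_ne_top _ _) (Real.exp_nonneg _)]
    exact this
  have hcard : (S.card : ℝ) ≤ Real.exp (L * (4 * δ * n) + n * (Fintype.card α * Real.exp (-L))) := by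
    rcases S.eq_empty_or_nonempty with h | ⟨w0, hw0⟩
    · rw [h]; simp [Real.exp_nonneg]
    refine hamming_count w0 hL S fun w hw => ?_
    obtain ⟨y, hy, rfl⟩ := (Finset.mem_filter.1 hw0).2
    obtain ⟨z, hz, rfl⟩ := (Finset.mem_filter.1 hw).2
    have h1 : ((Finset.univ.filter fun i => nm f ξ n z i ≠ nm f ξ n y i).card : ℝ) ≤
        ∑ i : Fin n, (φ (f^[(i:ℕ)] z) + φ (f^[(i:ℕ)] y)) := by
      rw [Finset.card_filter]
      push_cast
      refine Finset.sum_le_sum fun i _ => ?_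
      split_ifs with hne
      · by_cases hzU : f^[(i:ℕ)] z ∈ U
        · have : φ (f^[(i:ℕ)] z) = 1 := indicator_of_mem hzU _
          linarith [hφ0 (f^[(i:ℕ)] y)]
        by_cases hyU : f^[(i:ℕ)] y ∈ U
        · have : φ (f^[(i:ℕ)] y) = 1 := indicator_of_mem hyU _
          linarith [hφ0 (f^[(i:ℕ)] z)]
        exfalso
        rw [hU, notMem_compl_iff] at hzU hyU
        obtain ⟨a, ha⟩ := mem_iUnion.1 hzU
        obtain ⟨b, hb⟩ := mem_iUnion.1 hyU
        have hab : a ≠ b := by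
          rw [← show ξ (f^[(i:ℕ)] z) = a from hsub a ha, ← show ξ (f^[(i:ℕ)] y) = b from hsub b hb]
          exact hne
        have h2 := hgap a b hab _ ha _ hb
        have h3 := hz.1 i i.2
        have h4 := hy.1 i i.2
        have h5 := dist_triangle_left (f^[(i:ℕ)] z) (f^[(i:ℕ)] y) (f^[(i:ℕ)] x)
        linarith
      · exact add_nonneg (hφ0 _) (hφ0 _)
    rw [Finset.sum_add_distrib] at h1
    have h6 := (hz.2 n hn).2
    have h7 := (hy.2 n hn).2
    unfold birk at h6 h7
    rw [Finset.sum_range] at h6 h7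
    linarith
  calc μ B ≤ μ (⋃ w ∈ S, nm f ξ n ⁻¹' {w}) := measure_mono hcov
    _ ≤ ∑ w ∈ S, μ (nm f ξ n ⁻¹' {w}) := measure_biUnion_finset_le _ _
    _ ≤ ∑ w ∈ S, ENNReal.ofReal (Real.exp (-t * n)) := Finset.sum_le_sum hpw
    _ = ENNReal.ofReal (S.card * Real.exp (-t * n)) := by
        rw [Finset.sum_const, nsmul_eq_mul, ENNReal.ofReal_mul (by positivity), ENNReal.ofReal_natCast]
    _ ≤ ENNReal.ofReal (Real.exp (-(t - η) * n)) := by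
        refine ENNReal.ofReal_le_ofReal ?_
        refine (mul_le_mul_of_nonneg_right hcard (Real.exp_nonneg _)).trans ?_
        rw [← Real.exp_add]
        refine Real.exp_le_exp.2 ?_
        have hn0 : (0:ℝ) ≤ n := Nat.cast_nonneg n
        nlinarith

end P6
end Paper


set_option linter.unusedSectionVars false
set_option linter.unusedVariables false
open MeasureTheory Filter Set
open scoped ENNReal NNReal
namespace Paper
section P7

theorem exists_cell {X : Type*} [MeasurableSpace X] {s : Finset (Set X)} (hs : IsFinPartition s) :
    ∃ ξ : X → Fin s.card, Measurable ξ ∧ ∀ x a, ξ x = a ↔ x ∈ (s.equivFin.symm a : Set X) := by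
  have h1 : ∀ x, ∃ A : {A // A ∈ s}, x ∈ (A : Set X) := by
    intro x
    have : x ∈ ⋃₀ (s : Set (Set X)) := by rw [hs.2.1]; trivial
    obtain ⟨A, hA, hx⟩ := this
    exact ⟨⟨A, hA⟩, hx⟩
  choose c hc using h1
  have key : ∀ x a, s.equivFin (c x) = a ↔ x ∈ (s.equivFin.symm a : Set X) := by
    intro x a
    constructor
    · rintro rfl
      rw [Equiv.symm_apply_apply]; exact hc x
    · intro hx
      rw [← Equiv.eq_symm_apply]
      by_contra hne
      have := hs.2.2 (c x).2 (s.equivFin.symm a).2 (fun h => hne (Subtype.ext h))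
      exact Set.disjoint_left.1 this (hc x) hx
  refine ⟨fun x => s.equivFin (c x), ?_, key⟩
  refine measurable_to_countable' fun a => ?_
  have : (fun x => s.equivFin (c x)) ⁻¹' {a} = (s.equivFin.symm a : Set X) := by
    ext x; exact key x a
  rw [this]
  exact hs.1 _ (s.equivFin.symm a).2

theorem dynH_eq {X : Type*} [MeasurableSpace X] {s : Finset (Set X)} {f : X → X} (hf : Measurable f)
    {μ : Measure X} [IsProbabilityMeasure μ] {ξ : X → Fin s.card} (hξ : Measurable ξ)
    (h : ∀ x a, ξ x = a ↔ x ∈ (s.equivFin.symm a : Set X)) (n : ℕ) :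
    dynH f μ s n = ∫ x, Inf' μ f ξ n x ∂μ := by
  have e := integral_comp_fin (μ := μ) (measurable_nm hf hξ n) (fun w => -Real.log (μ.real (nm f ξ n ⁻¹' {w})))
  have e2 : ∫ x, Inf' μ f ξ n x ∂μ = ∫ x, (fun w => -Real.log (μ.real (nm f ξ n ⁻¹' {w}))) (nm f ξ n x) ∂μ := rfl
  rw [e2, e]
  unfold dynH
  rw [← Finset.sum_neg_distrib]
  refine Fintype.sum_equiv (Equiv.piCongrRight fun _ : Fin n => s.equivFin) _ _ fun w => ?_
  have hset : (⋂ i : Fin n, f^[(i : ℕ)] ⁻¹' ((w i : Set X))) =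
      nm f ξ n ⁻¹' {(Equiv.piCongrRight fun _ : Fin n => s.equivFin) w} := by
    ext x
    simp only [mem_iInter, mem_preimage, mem_singleton_iff, funext_iff, nm, Equiv.piCongrRight_apply, Pi.map_apply]
    refine forall_congr' fun i => ?_
    rw [h, Equiv.symm_apply_apply]
  rw [hset, measureReal_def]
  ring

variable {X : Type*} [MetricSpace X] [CompactSpace X] [MeasurableSpace X] [BorelSpace X]

theorem ks_le_Pmu {f : X → X} {μ : Measure X} [IsProbabilityMeasure μ] (hf : Ergodic f μ) :
    ksEntropy f μ ≤ Pmu f (fun _ => 0) μ := by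
  unfold ksEntropy
  refine iSup₂_le fun s hs => ?_
  obtain ⟨ξ, hξ, h⟩ := exists_cell hs
  refine le_of_forall_lt fun c hc => ?_
  obtain ⟨t3, hc3, ht3⟩ := EReal.lt_iff_exists_real_btwn.1 hc
  obtain ⟨t, ht3t, ht⟩ := EReal.lt_iff_exists_real_btwn.1 ht3
  have h3 : t3 < t := by exact_mod_cast ht3t
  refine hc3.trans_le ?_
  have hev : ∀ᶠ n : ℕ in atTop, t ≤ (∫ x, Inf' μ f ξ n x ∂μ) / n := by
    filter_upwards [eventually_lt_of_lt_liminf ht] with n hn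
    rw [← dynH_eq hf.measurable hξ h]
    exact_mod_cast hn.le
  have h4 := smb_lower hf hξ hev (t' := (t + t3) / 2) (by linarith)
  have h5 := hamming_lower hf hξ (η := (t - t3) / 2) (by linarith) h4
  have e : (t + t3) / 2 - (t - t3) / 2 = t3 := by ring
  rwa [e] at h5

theorem exists_small_partition (ε : ℝ) (hε : 0 < ε) :
    ∃ s : Finset (Set X), IsFinPartition s ∧ ∀ A ∈ s, ∀ x ∈ A, ∀ y ∈ A, dist x y < ε := by
  classical
  obtain ⟨T, hT⟩ := isCompact_univ.elim_finite_subcover (fun c : X => Metric.ball c (ε/2))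
    (fun c => Metric.isOpen_ball) (fun x _ => mem_iUnion.2 ⟨x, Metric.mem_ball_self (by linarith)⟩)
  let A : ℕ → Set X := fun n => if h : n < T.card then Metric.ball (T.equivFin.symm ⟨n, h⟩ : X) (ε/2) else ∅
  have hAm : ∀ n, MeasurableSet (A n) := by
    intro n; simp only [A]; split_ifs
    · exact Metric.isOpen_ball.measurableSet
    · exact MeasurableSet.empty
  have hAd : ∀ n, ∀ x ∈ A n, ∀ y ∈ A n, dist x y < ε := by
    intro n x hx y hy
    simp only [A] at hx hy
    split_ifs at hx hy with h
    · rw [Metric.mem_ball] at hx hy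
      have := dist_triangle_right x y (T.equivFin.symm ⟨n, h⟩ : X)
      linarith
    · exact absurd hx (notMem_empty _)
  have hAU : ⋃ n, A n = univ := by
    refine eq_univ_of_forall fun x => ?_
    obtain ⟨c, hc, hx⟩ := mem_iUnion₂.1 (hT (mem_univ x))
    refine mem_iUnion.2 ⟨T.equivFin ⟨c, hc⟩, ?_⟩
    simp only [A]
    rw [dif_pos (Fin.is_lt _)]
    simpa using hx
  refine ⟨(Finset.range T.card).image (disjointed A), ⟨?_, ?_, ?_⟩, ?_⟩
  · intro B hB
    obtain ⟨n, _, rfl⟩ := Finset.mem_image.1 hB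
    exact MeasurableSet.disjointed hAm n
  · refine eq_univ_of_forall fun x => ?_
    have hx : x ∈ ⋃ n, disjointed A n := by rw [iUnion_disjointed, hAU]; trivial
    obtain ⟨n, hn⟩ := mem_iUnion.1 hx
    refine ⟨disjointed A n, ?_, hn⟩
    rw [Finset.coe_image]
    refine ⟨n, ?_, rfl⟩
    have hxA : x ∈ A n := disjointed_le A n hn
    simp only [Finset.coe_range, mem_Iio]
    by_contra hlt
    simp only [A] at hxA
    rw [dif_neg hlt] at hxA
    exact hxA
  · rintro B hB C hC hne
    rw [Finset.mem_coe] at hB hC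
    obtain ⟨n, _, rfl⟩ := Finset.mem_image.1 hB
    obtain ⟨m, _, rfl⟩ := Finset.mem_image.1 hC
    exact disjoint_disjointed A (fun h => hne (by rw [h]))
  · intro B hB x hx y hy
    obtain ⟨n, _, rfl⟩ := Finset.mem_image.1 hB
    exact hAd n x (disjointed_le A n hx) y (disjointed_le A n hy)

theorem le_ks {f : X → X} {μ : Measure X} [IsProbabilityMeasure μ] (hf : MeasurePreserving f μ μ) {t ε : ℝ} (hε : 0 < ε)
    (h : ∀ᵐ x ∂μ, (t : EReal) < ptG f (fun _ => 0) μ ε x) : (t : EReal) ≤ ksEntropy f μ := by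
  obtain ⟨s, hs, hdiam⟩ := exists_small_partition (X := X) ε hε
  obtain ⟨ξ, hξ, hcell⟩ := exists_cell hs
  unfold ksEntropy
  refine le_iSup₂_of_le s hs ?_
  have hI : ∀ n, Measurable (Inf' μ f ξ n) := fun n =>
    (measurable_of_finite (fun w => -Real.log (μ.real (nm f ξ n ⁻¹' {w})))).comp (measurable_nm hf.measurable hξ n)
  have hI0 : ∀ n x, 0 ≤ Inf' μ f ξ n x := fun n x =>
    neg_nonneg.2 (Real.log_nonpos measureReal_nonneg measureReal_le_one)
  have hlim : Tendsto (fun n : ℕ => ∫ x, min (Inf' μ f ξ n x / n) t ∂μ) atTop (nhds (∫ x, t ∂μ)) := by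
    refine tendsto_integral_of_dominated_convergence (fun _ => |t|)
      (fun n => (((hI n).div_const _).min measurable_const).aestronglyMeasurable) (integrable_const _) ?_ ?_
    · intro n
      refine ae_of_all _ fun x => ?_
      have h1 : 0 ≤ Inf' μ f ξ n x / n := div_nonneg (hI0 n x) (Nat.cast_nonneg n)
      rw [Real.norm_eq_abs, abs_le]
      constructor
      · exact le_min ((neg_nonpos.2 (abs_nonneg t)).trans h1) (neg_abs_le t)
      · exact (min_le_right _ _).trans (le_abs_self t)
    · filter_upwards [h, ae_pn_pos hf hξ] with x hx hpos
      refine tendsto_const_nhds.congr' ?_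
      filter_upwards [lt_ptG hx, eventually_gt_atTop 0] with n hn hn0
      have hn0' : (0:ℝ) < n := by exact_mod_cast hn0
      rw [birk_zero, add_zero] at hn
      refine (min_eq_right ?_).symm
      have hsub : nm f ξ n ⁻¹' {nm f ξ n x} ⊆ bowenBall f x n ε := by
        intro y hy i hi
        have h1 : ξ (f^[i] y) = ξ (f^[i] x) := congrFun hy ⟨i, hi⟩
        refine hdiam _ (s.equivFin.symm (ξ (f^[i] x))).2 _ ((hcell _ _).1 rfl) _ ((hcell _ _).1 h1)
      have h2 : pn μ f ξ n x ≤ Real.exp (-t * n) := by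
        refine ENNReal.toReal_le_of_le_ofReal (Real.exp_nonneg _) ?_
        exact (measure_mono hsub).trans hn.le
      have hp0 : 0 < pn μ f ξ n x := hpos 0 n
      rw [← Real.log_le_iff_le_exp hp0] at h2
      rw [le_div_iff₀ hn0']
      unfold Inf'
      linarith
  rw [integral_const, probReal_univ, one_smul] at hlim
  have hlim' : Tendsto (fun n : ℕ => ((∫ x, min (Inf' μ f ξ n x / n) t ∂μ : ℝ) : EReal)) atTop (nhds (t : EReal)) :=
    (continuous_coe_real_ereal.tendsto t).comp hlim
  rw [← hlim'.liminf_eq]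
  refine liminf_le_liminf (Eventually.of_forall fun n => ?_)
  rw [dynH_eq hf.measurable hξ hcell, ← integral_div]
  refine EReal.coe_le_coe_iff.2 ?_
  have i1 := (Inf'_integrable (μ := μ) hf.measurable hξ n).div_const (n:ℝ)
  exact integral_mono (i1.inf (integrable_const t)) i1 fun x => min_le_left _ _

theorem ergodic_case {f : X → X} (hc : Continuous f) {μ : Measure X} [IsProbabilityMeasure μ] (hf : Ergodic f μ) :
    ∀ᵐ x ∂μ, localEntropy f μ x = ksEntropy f μ := by
  have hT : essSup (localEntropy f μ) μ = Pmu f (fun _ => 0) μ := by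
    rw [Pmu_eq_essSup hc continuous_const]
    congr 1
    funext x; exact localEntropy_eq f μ x
  have h1 : essSup (localEntropy f μ) μ ≤ ksEntropy f μ := by
    refine le_of_forall_lt fun c hlt => ?_
    obtain ⟨t, hct, ht⟩ := EReal.lt_iff_exists_real_btwn.1 hlt
    obtain ⟨k, hk⟩ := exists_scale hc hf ht
    exact hct.trans_le (le_ks hf.toMeasurePreserving (by positivity) hk)
  have h2 : ksEntropy f μ = essSup (localEntropy f μ) μ := le_antisymm (hT ▸ ks_le_Pmu hf) h1
  have h3 : ∀ᵐ x ∂μ, ∀ q : ℚ, (((q:ℝ)) : EReal) < ksEntropy f μ → ((q:ℝ) : EReal) < localEntropy f μ x := by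
    rw [ae_all_iff]; intro q
    by_cases hq : (((q:ℝ)) : EReal) < ksEntropy f μ
    · rw [h2] at hq
      obtain ⟨k, hk⟩ := exists_scale hc hf hq
      filter_upwards [hk] with x hx _
      rw [localEntropy_eq, ptPressure_eq]
      exact hx.trans_le (le_iSup₂ (f := fun (ε:ℝ) (_ : 0 < ε) => ptG f (fun _ => 0) μ ε x) (1 / ((k:ℝ)+1)) (by positivity))
    · exact Eventually.of_forall fun x h => absurd h hq
  filter_upwards [h3, ae_le_essSup (f := localEntropy f μ) (μ := μ)] with x hx hle
  refine le_antisymm (h2 ▸ hle) (le_of_forall_lt fun c hlt => ?_)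
  obtain ⟨q, hcq, hq⟩ := EReal.lt_iff_exists_rat_btwn.1 hlt
  exact hcq.trans (hx q hq)

end P7
end Paper



/-- Corollary 4.3: `P_μ(f,φ) = ess sup {h_μ(x) + φ*(x)}` (essential supremum w.r.t.
`μ`, where `φ*(x)` is the Birkhoff average, which exists `μ`-a.e.); and if `μ` is
ergodic then `P_μ(f,φ,x) = P_μ(f,φ) = h_μ(f) + ∫φ dμ` for `μ`-a.e. `x`. -/
theorem pressure_eq_essSup_localEntropy_add_birkhoffAvg {X : Type*} [MetricSpace X] [CompactSpace X] [MeasurableSpace X] [BorelSpace X]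
    (f : X → X) (hf : Continuous f) (φ : X → ℝ) (hφ : Continuous φ)
    (μ : Measure X) (hp : IsProbabilityMeasure μ) (hinv : MeasurePreserving f μ μ) :
    Pmu f φ μ = essSup (fun x => localEntropy f μ x +
        ((limUnder Filter.atTop (fun n : ℕ => birk f φ n x / (n : ℝ)) : ℝ) : EReal)) μ ∧
    (Ergodic f μ →
      Pmu f φ μ = ksEntropy f μ + ((∫ x, φ x ∂μ : ℝ) : EReal) ∧
      ∀ᵐ x ∂μ, ptPressure f φ μ x = Pmu f φ μ) := by
  have hφm : Measurable φ := hφ.measurable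
  obtain ⟨C, hC⟩ : ∃ C, ∀ x, |φ x| ≤ C := by
    obtain ⟨C, hC⟩ := isCompact_univ.exists_bound_of_continuousOn hφ.continuousOn
    exact ⟨C, fun x => by simpa using hC x (Set.mem_univ x)⟩
  refine ⟨?_, fun herg => ?_⟩
  · rw [Pmu_eq_essSup hf hφ]
    refine essSup_congr_ae ?_
    filter_upwards [birkhoff_ae_exists hinv hφm hC] with x hx
    obtain ⟨c, hc⟩ := hx
    rw [ptPressure_eq_add hc, hc.limUnder_eq]
  · have h1 : ∀ᵐ x ∂μ, ptPressure f φ μ x = ksEntropy f μ + ((∫ x, φ x ∂μ : ℝ) : EReal) := by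
      filter_upwards [birkhoff_ergodic herg hφm hC, ergodic_case hf herg] with x hx hx2
      rw [ptPressure_eq_add hx, hx2]
    have h2 : Pmu f φ μ = ksEntropy f μ + ((∫ x, φ x ∂μ : ℝ) : EReal) := by
      rw [Pmu_eq_essSup hf hφ, essSup_congr_ae h1]
      exact essSup_const _ (IsProbabilityMeasure.ne_zero μ)
    exact ⟨h2, by rw [h2]; exact h1⟩
end

section
/- Let (X,f) be a TDS and μ ∈ M(X,f). Then E_μ(f) = ess sup{h_μ(x) : x ∈ X}, where h_μ(x) is the Brin–Katok local entropy and the essential supremum is taken with respect to μ. If in addition μ is ergodic, then h_μ(x) = E_μ(f) = h_μ(f) for μ-almost every x ∈ X. -/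
open MeasureTheory Filter Set
open scoped ENNReal NNReal

open Paper

namespace PaperAux

section Basic
variable {X : Type*} [MetricSpace X]

lemma isOpen_bowenBall {f : X → X} (hf : Continuous f) (x : X) (n : ℕ) (ε : ℝ) :
    IsOpen (bowenBall f x n ε) := by
  have : bowenBall f x n ε = ⋂ i ∈ Finset.range n, {y | dist (f^[i] x) (f^[i] y) < ε} := by
    ext y; simp [bowenBall]
  rw [this]
  refine isOpen_biInter_finset fun i _ => ?_
  exact isOpen_lt (continuous_const.dist (hf.iterate i)) continuous_const

lemma mem_bowenBall_self (f : X → X) (x : X) (n : ℕ) {ε : ℝ} (hε : 0 < ε) :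
    x ∈ bowenBall f x n ε := by
  intro i _; simpa using hε

variable [MeasurableSpace X]

/-- the quantity `n⁻¹ * (-log m)` -/
noncomputable def rate (n : ℕ) (m : ℝ≥0∞) : EReal := (((n : ℝ)⁻¹ : ℝ) : EReal) * (-m.log)

/-- lower local entropy at scale `ε`. -/
noncomputable def lowEnt (f : X → X) (μ : Measure X) (ε : ℝ) (x : X) : EReal :=
  Filter.atTop.liminf (fun n : ℕ => rate n (μ (bowenBall f x n ε)))

lemma localEntropy_eq (f : X → X) (μ : Measure X) (x : X) :
    localEntropy f μ x = ⨆ (ε : ℝ) (_ : 0 < ε), lowEnt f μ ε x := rfl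

lemma rate_antitone (n : ℕ) : Antitone (rate n) := by
  intro a b hab
  unfold rate
  apply mul_le_mul_of_nonneg_left
  · rw [EReal.neg_le_neg_iff]
    exact ENNReal.log_monotone hab
  · exact EReal.coe_nonneg.2 (by positivity)

lemma rate_ofReal_exp {n : ℕ} (hn : 1 ≤ n) (a : ℝ) :
    rate n (ENNReal.ofReal (Real.exp (-(n : ℝ) * a))) = (a : EReal) := by
  unfold rate
  rw [ENNReal.log_ofReal_of_pos (Real.exp_pos _), Real.log_exp, ← EReal.coe_neg, ← EReal.coe_mul]
  congr 1
  have : (n : ℝ) ≠ 0 := by positivity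
  field_simp

lemma le_of_lt_rate {n : ℕ} (hn : 1 ≤ n) {a : ℝ} {m : ℝ≥0∞} (h : (a : EReal) < rate n m) :
    m ≤ ENNReal.ofReal (Real.exp (-(n : ℝ) * a)) := by
  by_contra! hc
  have := rate_antitone n hc.le
  rw [rate_ofReal_exp hn] at this
  exact absurd h (not_lt.2 this)

lemma le_of_rate_lt {n : ℕ} (hn : 1 ≤ n) {a : ℝ} {m : ℝ≥0∞} (h : rate n m < (a : EReal)) :
    ENNReal.ofReal (Real.exp (-(n : ℝ) * a)) ≤ m := by
  by_contra! hc
  have := rate_antitone n hc.le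
  rw [rate_ofReal_exp hn] at this
  exact absurd h (not_lt.2 this)

lemma le_rate {n : ℕ} (hn : 1 ≤ n) {a : ℝ} {m : ℝ≥0∞}
    (h : m ≤ ENNReal.ofReal (Real.exp (-(n : ℝ) * a))) : (a : EReal) ≤ rate n m := by
  have := rate_antitone n h
  rwa [rate_ofReal_exp hn] at this

lemma rate_nonneg (n : ℕ) {m : ℝ≥0∞} (h : m ≤ 1) : 0 ≤ rate n m := by
  have := rate_antitone n h
  simpa [rate] using this

lemma lowEnt_nonneg (f : X → X) (μ : Measure X) [IsProbabilityMeasure μ] (ε : ℝ) (x : X) :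
    0 ≤ lowEnt f μ ε x :=
  Filter.le_liminf_of_le (h := Filter.Eventually.of_forall fun n => rate_nonneg n prob_le_one)

lemma localEntropy_nonneg (f : X → X) (μ : Measure X) [IsProbabilityMeasure μ] (x : X) :
    0 ≤ localEntropy f μ x := by
  rw [localEntropy_eq]
  exact le_iSup₂_of_le 1 one_pos (lowEnt_nonneg f μ 1 x)

lemma bowenBall_mono (f : X → X) (x : X) (n : ℕ) {ε ε' : ℝ} (h : ε ≤ ε') :
    bowenBall f x n ε ⊆ bowenBall f x n ε' := fun _ hy i hi => (hy i hi).trans_le h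

lemma lowEnt_anti (f : X → X) (μ : Measure X) (x : X) {ε ε' : ℝ} (h : ε ≤ ε') :
    lowEnt f μ ε' x ≤ lowEnt f μ ε x :=
  Filter.liminf_le_liminf (Filter.Eventually.of_forall fun n =>
    rate_antitone n (measure_mono (bowenBall_mono f x n h)))

lemma localEntropy_eq_iSup_nat (f : X → X) (μ : Measure X) (x : X) :
    localEntropy f μ x = ⨆ k : ℕ, lowEnt f μ (1 / ((k : ℝ) + 1)) x := by
  rw [localEntropy_eq]
  apply le_antisymm
  · refine iSup₂_le fun ε hε => ?_
    obtain ⟨k, hk⟩ := exists_nat_one_div_lt hε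
    exact le_iSup_of_le k (lowEnt_anti f μ x hk.le)
  · refine iSup_le fun k => ?_
    exact le_iSup₂_of_le _ (by positivity) le_rfl

lemma eventually_le_of_lt_lowEnt {f : X → X} {μ : Measure X} {ε : ℝ} {x : X} {a : ℝ}
    (h : (a : EReal) < lowEnt f μ ε x) :
    ∀ᶠ n : ℕ in atTop, μ (bowenBall f x n ε) ≤ ENNReal.ofReal (Real.exp (-(n : ℝ) * a)) := by
  filter_upwards [Filter.eventually_lt_of_lt_liminf h, eventually_ge_atTop 1] with n h1 h2
  exact le_of_lt_rate h2 h1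

lemma le_lowEnt_of_eventually {f : X → X} {μ : Measure X} {ε : ℝ} {x : X} {a : ℝ}
    (h : ∀ᶠ n : ℕ in atTop, μ (bowenBall f x n ε) ≤ ENNReal.ofReal (Real.exp (-(n : ℝ) * a))) :
    (a : EReal) ≤ lowEnt f μ ε x := by
  refine Filter.le_liminf_of_le (h := ?_)
  filter_upwards [h, eventually_ge_atTop 1] with n h1 h2
  exact le_rate h2 h1

lemma frequently_le_of_lowEnt_lt {f : X → X} {μ : Measure X} {ε : ℝ} {x : X} {a : ℝ}
    (h : lowEnt f μ ε x < (a : EReal)) :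
    ∃ᶠ n : ℕ in atTop, ENNReal.ofReal (Real.exp (-(n : ℝ) * a)) ≤ μ (bowenBall f x n ε) := by
  have h1 := Filter.frequently_lt_of_liminf_lt (h := h)
  refine (h1.and_eventually (eventually_ge_atTop 1)).mono ?_
  rintro n ⟨h1, h2⟩
  exact le_of_rate_lt h2 h1

lemma exists_cover {f : X → X} (hf : Continuous f) [BorelSpace X] (μ : Measure X)
    [IsProbabilityMeasure μ] (n : ℕ) {ε : ℝ} (hε : 0 < ε) (a : ℝ) :
    ∃ E : Finset X, (E.card : ℝ) ≤ Real.exp (n * a) ∧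
      ∀ x, ENNReal.ofReal (Real.exp (-(n : ℝ) * a)) ≤ μ (bowenBall f x n (ε / 2)) →
        ∃ y ∈ E, x ∈ bowenBall f y n ε := by
  classical
  set A : Set X := {x | ENNReal.ofReal (Real.exp (-(n : ℝ) * a)) ≤ μ (bowenBall f x n (ε / 2))}
    with hA
  let V : Set (Finset X) := {E | (E : Set X) ⊆ A ∧
    (E : Set X).PairwiseDisjoint (fun y => bowenBall f y n (ε / 2))}
  have hcard : ∀ E ∈ V, (E.card : ℝ) ≤ Real.exp (n * a) := by
    rintro E ⟨h1, h2⟩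
    have h3 : (∑ y ∈ E, μ (bowenBall f y n (ε / 2))) ≤ 1 := by
      rw [← measure_biUnion_finset h2 fun y _ => (isOpen_bowenBall hf y n _).measurableSet]
      exact prob_le_one
    have h4 : (E.card : ℝ≥0∞) * ENNReal.ofReal (Real.exp (-(n : ℝ) * a)) ≤ 1 := by
      refine le_trans ?_ h3
      rw [← nsmul_eq_mul]
      exact Finset.card_nsmul_le_sum _ _ _ fun y hy => h1 hy
    rw [← ENNReal.ofReal_natCast, ← ENNReal.ofReal_mul (by positivity),
      ENNReal.ofReal_le_one] at h4
    have h5 : Real.exp (-(n : ℝ) * a) * Real.exp (n * a) = 1 := by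
      rw [← Real.exp_add]; simp
    have h6 := Real.exp_pos (n * a)
    nlinarith
  have hne : (Set.image Finset.card V).Nonempty := ⟨0, ∅, by simp [V], rfl⟩
  have hbd : BddAbove (Set.image Finset.card V) := by
    refine ⟨⌊Real.exp (n * a)⌋₊, ?_⟩
    rintro _ ⟨E, hE, rfl⟩
    exact Nat.le_floor (hcard E hE)
  obtain ⟨E, hE, hEc⟩ := Nat.sSup_mem hne hbd
  refine ⟨E, hcard E hE, fun x hx => ?_⟩
  by_contra! hcon
  have hxE : x ∉ E := fun h => hcon x h (mem_bowenBall_self f x n hε)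
  have : insert x E ∈ V := by
    refine ⟨?_, ?_⟩
    · rw [Finset.coe_insert]
      exact Set.insert_subset hx hE.1
    · rw [Finset.coe_insert]
      refine hE.2.insert fun y hy _ => ?_
      rw [Set.disjoint_left]
      intro z hz1 hz2
      apply hcon y hy
      intro i hi
      have e1 := hz1 i hi
      have e2 := hz2 i hi
      calc dist (f^[i] y) (f^[i] x) ≤ dist (f^[i] y) (f^[i] z) + dist (f^[i] x) (f^[i] z) :=
            dist_triangle_right _ _ _
        _ < ε := by linarith
  have h7 := le_csSup hbd ⟨_, this, rfl⟩
  rw [Finset.card_insert_of_notMem hxE, ← hEc] at h7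
  omega

end Basic

section PartOne
variable {X : Type*} [MetricSpace X] [MeasurableSpace X]

lemma Mcov_zero (f : X → X) (Z : Set X) (α : ℝ) (N : ℕ) (ε : ℝ) :
    Mcov f (fun _ => 0) Z α N ε = ⨅ (c : ℕ → X × ℕ)
      (_ : (∀ i, N ≤ (c i).2) ∧ Z ⊆ ⋃ i, bowenBall f (c i).1 (c i).2 ε),
      ∑' i, ENNReal.ofReal (Real.exp (-α)) ^ (c i).2 := by
  unfold Mcov
  refine iInf_congr fun c => iInf_congr fun hc => tsum_congr fun i => ?_
  rw [← ENNReal.ofReal_pow (Real.exp_pos _).le, ← Real.exp_nat_mul]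
  simp [birk, mul_comm]

lemma mZ_eq_zero_of_frequently [BorelSpace X] [Nonempty X] {f : X → X} (hf : Continuous f)
    (μ : Measure X) [IsProbabilityMeasure μ] {Z : Set X} {a b ε : ℝ} (hb : 0 < b) (hab : a < b)
    (hε : 0 < ε)
    (hZ : ∀ x ∈ Z, lowEnt f μ (ε / 2) x < (a : EReal)) :
    mZ f (fun _ => 0) Z b ε = 0 := by
  classical
  obtain ⟨x0⟩ := ‹Nonempty X›
  choose E hEcard hEcov using fun n => exists_cover hf μ n hε a
  let e : ∀ n : ℕ, Fin (E n).card ≃ E n := fun n => (E n).equivFin.symm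
  let c0 : ℕ → ℕ → X × ℕ := fun n j =>
    if h : j < (E n).card then ((e n ⟨j, h⟩ : X), n) else (x0, n + j)
  set r : ℝ≥0∞ := ENNReal.ofReal (Real.exp (-b)) with hr
  set r' : ℝ≥0∞ := ENNReal.ofReal (Real.exp (-(b - a))) with hr'
  have hr1 : r < 1 := by
    rw [hr, ENNReal.ofReal_lt_one, Real.exp_lt_one_iff]; linarith
  have hr'1 : r' < 1 := by
    rw [hr', ENNReal.ofReal_lt_one, Real.exp_lt_one_iff]; linarith
  have hg : ∀ t : ℝ≥0∞, t < 1 → (1 - t)⁻¹ ≠ ∞ := by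
    intro t ht
    rw [ENNReal.inv_ne_top]
    exact (tsub_pos_of_lt ht).ne'
  let F : ℕ → ℝ≥0∞ := fun n => ∑' j, r ^ (c0 n j).2
  have hF : ∀ n, F n ≤ r' ^ n + r ^ n * (1 - r)⁻¹ := by
    intro n
    have h1 : F n ≤ ∑' j : ℕ, ((if j < (E n).card then r ^ n else 0) + r ^ n * r ^ j) := by
      refine ENNReal.tsum_le_tsum fun j => ?_
      by_cases h : j < (E n).card
      · simp [c0, h]
      · simp [c0, h, pow_add]
    refine h1.trans ?_
    rw [ENNReal.tsum_add, ENNReal.tsum_mul_left, ENNReal.tsum_geometric]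
    gcongr
    rw [tsum_eq_sum (s := Finset.range (E n).card) (by
      intro j hj; simp at hj; simp [hj]), Finset.sum_congr rfl (g := fun _ => r ^ n) (by
      intro j hj; simp at hj; simp [hj])]
    rw [Finset.sum_const, Finset.card_range, nsmul_eq_mul]
    rw [hr, hr', ← ENNReal.ofReal_pow (Real.exp_pos _).le, ← ENNReal.ofReal_pow (Real.exp_pos _).le,
      ← ENNReal.ofReal_natCast, ← ENNReal.ofReal_mul (by positivity)]
    apply ENNReal.ofReal_le_ofReal
    rw [← Real.exp_nat_mul, ← Real.exp_nat_mul]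
    calc ((E n).card : ℝ) * Real.exp (n * -b) ≤ Real.exp (n * a) * Real.exp (n * -b) := by
          gcongr; exact hEcard n
      _ = _ := by rw [← Real.exp_add]; congr 1; ring
  have hFsum : ∑' n, F n ≠ ∞ := by
    refine ne_top_of_le_ne_top ?_ (ENNReal.tsum_le_tsum hF)
    rw [ENNReal.tsum_add, ENNReal.tsum_mul_right, ENNReal.tsum_geometric, ENNReal.tsum_geometric]
    exact ENNReal.add_ne_top.2 ⟨hg _ hr'1, ENNReal.mul_ne_top (hg _ hr1) (hg _ hr1)⟩
  have htail := ENNReal.tendsto_sum_nat_add F hFsum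
  have key : ∀ N M : ℕ, N ≤ M → Mcov f (fun _ => 0) Z b N ε ≤ ∑' k, F (k + M) := by
    intro N M hNM
    rw [Mcov_zero]
    refine iInf₂_le_of_le (fun i => c0 ((Nat.unpair i).1 + M) (Nat.unpair i).2) ⟨?_, ?_⟩ ?_
    · intro i
      by_cases h : (Nat.unpair i).2 < (E ((Nat.unpair i).1 + M)).card
      · simp [c0, h]; omega
      · simp [c0, h]; omega
    · intro x hx
      have h1 := frequently_le_of_lowEnt_lt (hZ x hx)
      obtain ⟨n, hn, hle⟩ := (Filter.frequently_atTop.1 h1) M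
      obtain ⟨y, hy, hxy⟩ := hEcov n x hle
      rw [Set.mem_iUnion]
      let j := (e n).symm ⟨y, hy⟩
      refine ⟨Nat.pair (n - M) j, ?_⟩
      have h2 : n - M + M = n := by omega
      have h3 : c0 n j = (y, n) := by
        simp [c0, j]
      simp only [Nat.unpair_pair, h2, h3]
      exact hxy
    · have : ∑' i : ℕ, r ^ (c0 ((Nat.unpair i).1 + M) (Nat.unpair i).2).2
          = ∑' p : ℕ × ℕ, r ^ (c0 (p.1 + M) p.2).2 :=
        Nat.pairEquiv.symm.tsum_eq (fun p : ℕ × ℕ => r ^ (c0 (p.1 + M) p.2).2)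
      rw [this, ENNReal.tsum_prod']
  unfold mZ
  simp only [ENNReal.iSup_eq_zero]
  intro N
  have := ge_of_tendsto htail ((eventually_ge_atTop N).mono fun M hM => key N M hM)
  exact le_antisymm this bot_le

lemma Pmu_le [BorelSpace X] {f : X → X} (hf : Continuous f)
    (μ : Measure X) [IsProbabilityMeasure μ] :
    Pmu f (fun _ => 0) μ ≤ essSup (fun x => localEntropy f μ x) μ := by
  have hne : Nonempty X := nonempty_of_isProbabilityMeasure μ
  unfold Pmu
  refine iSup₂_le fun ε hε => ?_
  refine le_of_forall_gt_imp_ge_of_dense fun B hB => ?_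
  obtain ⟨a, ha1, ha2⟩ := EReal.lt_iff_exists_real_btwn.1 hB
  obtain ⟨b, hb1, hb2⟩ := EReal.lt_iff_exists_real_btwn.1 ha2
  have hae : ∀ᵐ x ∂μ, localEntropy f μ x < a := ae_lt_of_essSup_lt ha1
  have ha0 : 0 < a := by
    obtain ⟨x, hx⟩ := hae.exists
    exact EReal.coe_pos.1 ((localEntropy_nonneg f μ x).trans_lt hx)
  have hab : a < b := EReal.coe_lt_coe_iff.1 hb1
  rw [ae_iff] at hae
  set T := toMeasurable μ {x | ¬ localEntropy f μ x < a} with hT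
  have hTm : MeasurableSet T := measurableSet_toMeasurable _ _
  have hT0 : μ T = 0 := by rw [hT, measure_toMeasurable, hae]
  refine iInf₂_le_of_le Tᶜ ⟨hTm.compl, ?_⟩ ?_
  · rw [prob_compl_eq_one_iff hTm, hT0]
  · refine iInf₂_le_of_le b ?_ hb2.le
    refine mZ_eq_zero_of_frequently hf μ (ha0.trans hab) hab hε ?_
    intro x hx
    have h1 : localEntropy f μ x < a := by
      by_contra h
      exact hx (subset_toMeasurable _ _ h)
    refine lt_of_le_of_lt ?_ h1
    rw [localEntropy_eq]
    exact le_iSup₂_of_le (ε / 2) (by positivity) le_rfl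

lemma le_Pmu [BorelSpace X] {f : X → X}
    (μ : Measure X) [IsProbabilityMeasure μ] :
    essSup (fun x => localEntropy f μ x) μ ≤ Pmu f (fun _ => 0) μ := by
  refine le_of_forall_lt_imp_le_of_dense fun B hB => ?_
  obtain ⟨a, ha1, ha2⟩ := EReal.lt_iff_exists_real_btwn.1 hB
  refine ha1.le.trans ?_
  -- a set of positive outer measure
  have h1 : ∃ k : ℕ, μ {x | (a : EReal) < lowEnt f μ (1 / ((k : ℝ) + 1)) x} ≠ 0 := by
    by_contra! hcon
    have : ∀ᵐ x ∂μ, ∀ k : ℕ, ¬ (a : EReal) < lowEnt f μ (1 / ((k : ℝ) + 1)) x := by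
      rw [ae_all_iff]
      intro k
      rw [ae_iff]
      simpa using hcon k
    have h2 : essSup (fun x => localEntropy f μ x) μ ≤ a := by
      refine essSup_le_of_ae_le _ ?_
      filter_upwards [this] with x hx
      rw [localEntropy_eq_iSup_nat]
      exact iSup_le fun k => not_lt.1 (hx k)
    exact absurd ha2 (not_lt.2 h2)
  obtain ⟨k, hk⟩ := h1
  set ε : ℝ := 1 / ((k : ℝ) + 1) with hεdef
  have hε : 0 < ε := by positivity
  have h2 : ∃ N : ℕ, μ {x | ∀ n ≥ N, μ (bowenBall f x n ε) ≤
      ENNReal.ofReal (Real.exp (-(n : ℝ) * a))} ≠ 0 := by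
    by_contra! hcon
    apply hk
    refine measure_mono_null ?_ (measure_iUnion_null hcon)
    intro x hx
    rw [Set.mem_iUnion]
    exact eventually_atTop.1 (eventually_le_of_lt_lowEnt hx)
  obtain ⟨N, hN⟩ := h2
  set D := {x | ∀ n ≥ N, μ (bowenBall f x n ε) ≤ ENNReal.ofReal (Real.exp (-(n : ℝ) * a))} with hD
  unfold Pmu
  refine le_iSup₂_of_le (ε / 2) (by positivity) ?_
  refine le_iInf₂ fun Z hZ => ?_
  refine le_iInf₂ fun b hb => ?_
  rw [EReal.coe_le_coe_iff]
  by_contra! hba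
  have hDZ : μ D ≤ μ (Z ∩ D) := by
    have hzc : μ Zᶜ = 0 := by rw [prob_compl_eq_zero_iff hZ.1]; exact hZ.2
    have : D ⊆ (Z ∩ D) ∪ Zᶜ := by
      intro x hx
      by_cases h : x ∈ Z
      · exact Or.inl ⟨h, hx⟩
      · exact Or.inr h
    calc μ D ≤ μ ((Z ∩ D) ∪ Zᶜ) := measure_mono this
      _ ≤ μ (Z ∩ D) + μ Zᶜ := measure_union_le _ _
      _ = _ := by rw [hzc, add_zero]
  have hM : μ D ≤ Mcov f (fun _ => 0) Z b N (ε / 2) := by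
    rw [Mcov_zero]
    refine le_iInf₂ fun c hc => ?_
    obtain ⟨hc1, hc2⟩ := hc
    calc μ D ≤ μ (Z ∩ D) := hDZ
      _ ≤ μ (⋃ i, bowenBall f (c i).1 (c i).2 (ε / 2) ∩ D) := by
          refine measure_mono ?_
          rw [← Set.iUnion_inter]
          exact Set.inter_subset_inter_left _ hc2
      _ ≤ ∑' i, μ (bowenBall f (c i).1 (c i).2 (ε / 2) ∩ D) := measure_iUnion_le _
      _ ≤ _ := by
          refine ENNReal.tsum_le_tsum fun i => ?_
          by_cases hne : (bowenBall f (c i).1 (c i).2 (ε / 2) ∩ D).Nonempty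
          · obtain ⟨y, hy1, hy2⟩ := hne
            have hsub : bowenBall f (c i).1 (c i).2 (ε / 2) ∩ D ⊆ bowenBall f y (c i).2 ε := by
              rintro z ⟨hz, -⟩ j hj
              have e1 := hy1 j hj
              have e2 := hz j hj
              calc dist (f^[j] y) (f^[j] z)
                  ≤ dist (f^[j] (c i).1) (f^[j] y) + dist (f^[j] (c i).1) (f^[j] z) :=
                    dist_triangle_left _ _ _
                _ < ε := by linarith
            refine (measure_mono hsub).trans ((hy2 _ (hc1 i)).trans ?_)
            rw [← ENNReal.ofReal_pow (Real.exp_pos _).le, ← Real.exp_nat_mul]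
            apply ENNReal.ofReal_le_ofReal
            apply Real.exp_le_exp.2
            have : (0 : ℝ) ≤ (c i).2 := by positivity
            nlinarith
          · rw [Set.not_nonempty_iff_eq_empty.1 hne]; simp
  have hM0 : Mcov f (fun _ => 0) Z b N (ε / 2) = 0 := by
    have := le_iSup (fun N => Mcov f (fun _ => 0) Z b N (ε / 2)) N
    unfold mZ at hb
    rw [hb] at this
    exact le_antisymm this bot_le
  exact hN (le_antisymm (hM.trans hM0.le) bot_le)

end PartOne

section FinInt
variable {X : Type*} [MeasurableSpace X]

lemma lintegral_fin {T : Type*} [Fintype T] (μ : Measure X) (φ : X → T)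
    (hφ : ∀ t, MeasurableSet (φ ⁻¹' {t})) (G : T → ℝ≥0∞) :
    ∫⁻ x, G (φ x) ∂μ = ∑ t, G t * μ (φ ⁻¹' {t}) := by
  let _ : MeasurableSpace T := ⊤
  have hm : Measurable φ := measurable_to_countable' hφ
  have h1 : ∫⁻ x, G (φ x) ∂μ = ∫⁻ t, G t ∂(μ.map φ) :=
    (lintegral_map (measurable_from_top) hm).symm
  rw [h1, lintegral_fintype]
  refine Finset.sum_congr rfl fun t _ => ?_
  rw [Measure.map_apply hm (MeasurableSet.singleton t)]

lemma integral_fin {T : Type*} [Fintype T] (μ : Measure X) [IsFiniteMeasure μ] (φ : X → T)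
    (hφ : ∀ t, MeasurableSet (φ ⁻¹' {t})) (G : T → ℝ) :
    Integrable (fun x => G (φ x)) μ ∧
    ∫ x, G (φ x) ∂μ = ∑ t, (μ (φ ⁻¹' {t})).toReal * G t := by
  let _ : MeasurableSpace T := ⊤
  have hm : Measurable φ := measurable_to_countable' hφ
  have hi : Integrable G (μ.map φ) := Integrable.of_finite
  refine ⟨hi.comp_measurable hm, ?_⟩
  have h1 : ∫ x, G (φ x) ∂μ = ∫ t, G t ∂(μ.map φ) :=
    (integral_map hm.aemeasurable hi.aestronglyMeasurable).symm
  rw [h1, integral_fintype hi]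
  refine Finset.sum_congr rfl fun t _ => ?_
  rw [measureReal_def, Measure.map_apply hm (MeasurableSet.singleton t), smul_eq_mul]

lemma exists_symbol {s : Finset (Set X)} (hs : IsFinPartition s) :
    ∃ σ : X → {A // A ∈ s}, ∀ x (A : {A // A ∈ s}), x ∈ (A : Set X) ↔ σ x = A := by
  have h : ∀ x, ∃ A : {A // A ∈ s}, x ∈ (A : Set X) := by
    intro x
    have hx : x ∈ ⋃₀ (s : Set (Set X)) := by rw [hs.2.1]; trivial
    obtain ⟨A, hA, hxA⟩ := hx
    exact ⟨⟨A, hA⟩, hxA⟩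
  choose σ hσ using h
  refine ⟨σ, fun x A => ⟨fun hx => ?_, fun h => h ▸ hσ x⟩⟩
  by_contra hne
  have hd := hs.2.2 (σ x).2 A.2 (fun h => hne (Subtype.ext h))
  exact Set.disjoint_left.1 hd (hσ x) hx

lemma cell_eq {s : Finset (Set X)} {σ : X → {A // A ∈ s}}
    (hσ : ∀ x (A : {A // A ∈ s}), x ∈ (A : Set X) ↔ σ x = A) (f : X → X) (n : ℕ)
    (w : Fin n → {A // A ∈ s}) :
    (⋂ i : Fin n, f^[(i : ℕ)] ⁻¹' ((w i : Set X))) =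
      (fun x => fun i : Fin n => σ (f^[(i : ℕ)] x)) ⁻¹' {w} := by
  ext x
  simp only [Set.mem_iInter, Set.mem_preimage, Set.mem_singleton_iff, funext_iff, hσ]

lemma cell_meas {s : Finset (Set X)} (hs : IsFinPartition s) {f : X → X} (hf : Measurable f)
    {n : ℕ} (w : Fin n → {A // A ∈ s}) :
    MeasurableSet (⋂ i : Fin n, f^[(i : ℕ)] ⁻¹' ((w i : Set X))) :=
  MeasurableSet.iInter fun i => (hf.iterate i) (hs.1 _ (w i).2)

end FinInt

section Erg
variable {X : Type*} [MetricSpace X] [CompactSpace X] [MeasurableSpace X] [BorelSpace X]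

lemma measurable_rate_ball {f : X → X} (hf : Continuous f) (μ : Measure X)
    [IsProbabilityMeasure μ] (n : ℕ) (ε : ℝ) :
    Measurable (fun x => rate n (μ (bowenBall f x n ε))) := by
  have hsc : SecondCountableTopology X := UniformSpace.secondCountable_of_separable X
  refine (rate_antitone n).measurable.comp ?_
  have hopen : IsOpen {p : X × X | ∀ i < n, dist (f^[i] p.1) (f^[i] p.2) < ε} := by
    have : {p : X × X | ∀ i < n, dist (f^[i] p.1) (f^[i] p.2) < ε} =
        ⋂ i ∈ Finset.range n, {p : X × X | dist (f^[i] p.1) (f^[i] p.2) < ε} := by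
      ext y; simp
    rw [this]
    refine isOpen_biInter_finset fun i _ => ?_
    exact isOpen_lt (((hf.iterate i).comp continuous_fst).dist ((hf.iterate i).comp continuous_snd))
      continuous_const
  exact measurable_measure_prodMk_left hopen.measurableSet

lemma measurable_lowEnt {f : X → X} (hf : Continuous f) (μ : Measure X)
    [IsProbabilityMeasure μ] (ε : ℝ) : Measurable (lowEnt f μ ε) :=
  Measurable.liminf fun n => measurable_rate_ball hf μ n ε

lemma lowEnt_map_le {f : X → X} (hf : Continuous f) {μ : Measure X}
    (hinv : MeasurePreserving f μ μ) (ε : ℝ) (x : X) :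
    lowEnt f μ ε (f x) ≤ lowEnt f μ ε x := by
  refine le_of_forall_lt_imp_le_of_dense fun B hB => ?_
  obtain ⟨a, ha1, ha2⟩ := EReal.lt_iff_exists_real_btwn.1 hB
  obtain ⟨b, hb1, hb2⟩ := EReal.lt_iff_exists_real_btwn.1 ha2
  have hab : a < b := EReal.coe_lt_coe_iff.1 hb1
  refine ha1.le.trans ?_
  apply le_lowEnt_of_eventually
  suffices hsuff : ∀ᶠ n : ℕ in atTop, μ (bowenBall f x (n + 1) ε) ≤
      ENNReal.ofReal (Real.exp (-((n + 1 : ℕ) : ℝ) * a)) by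
    obtain ⟨M, hM⟩ := eventually_atTop.1 hsuff
    refine eventually_atTop.2 ⟨M + 1, fun n hn => ?_⟩
    obtain ⟨m, rfl⟩ : ∃ m, n = m + 1 := ⟨n - 1, by omega⟩
    exact hM m (by omega)
  obtain ⟨M, hM⟩ := exists_nat_gt (a / (b - a))
  filter_upwards [eventually_le_of_lt_lowEnt hb2, eventually_ge_atTop M] with n hn hnM
  have hsub : bowenBall f x (n + 1) ε ⊆ f ⁻¹' bowenBall f (f x) n ε := by
    intro y hy i hi
    have := hy (i + 1) (by omega)
    simpa [Function.iterate_succ_apply] using this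
  calc μ (bowenBall f x (n + 1) ε) ≤ μ (f ⁻¹' bowenBall f (f x) n ε) := measure_mono hsub
    _ = μ (bowenBall f (f x) n ε) :=
        hinv.measure_preimage (isOpen_bowenBall hf _ _ _).measurableSet.nullMeasurableSet
    _ ≤ _ := hn
    _ ≤ _ := by
        apply ENNReal.ofReal_le_ofReal
        apply Real.exp_le_exp.2
        have h1 : (M : ℝ) ≤ n := by exact_mod_cast hnM
        have h2 : a < M * (b - a) := by
          rwa [div_lt_iff₀ (by linarith)] at hM
        push_cast
        nlinarith

lemma lowEnt_dichotomy {f : X → X} (hf : Continuous f) {μ : Measure X} [IsProbabilityMeasure μ]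
    (he : Ergodic f μ) (ε : ℝ) (a : EReal) :
    (∀ᵐ x ∂μ, lowEnt f μ ε x ≤ a) ∨ (∀ᵐ x ∂μ, a < lowEnt f μ ε x) := by
  have hm : MeasurableSet {x | lowEnt f μ ε x ≤ a} :=
    measurableSet_le (measurable_lowEnt hf μ ε) measurable_const
  have hsub : {x | lowEnt f μ ε x ≤ a} ≤ᵐ[μ] f ⁻¹' {x | lowEnt f μ ε x ≤ a} :=
    Filter.Eventually.of_forall fun x (hx : lowEnt f μ ε x ≤ a) =>
      (lowEnt_map_le hf he.toMeasurePreserving ε x).trans hx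
  rcases he.ae_empty_or_univ_of_ae_le_preimage hm.nullMeasurableSet hsub with h | h
  · right
    filter_upwards [h] with x hx
    have hx' : ¬ (lowEnt f μ ε x ≤ a) := fun hh => by
      have : (lowEnt f μ ε x ≤ a) = False := hx
      rwa [this] at hh
    exact not_le.1 hx'
  · left
    filter_upwards [h] with x hx
    have : (lowEnt f μ ε x ≤ a) = True := hx
    rw [this]; trivial

lemma exists_lt_lowEnt {f : X → X} (hf : Continuous f) {μ : Measure X} [IsProbabilityMeasure μ]
    (he : Ergodic f μ) {a : EReal} (ha : a < essSup (fun x => localEntropy f μ x) μ) :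
    ∃ ε : ℝ, 0 < ε ∧ ∀ᵐ x ∂μ, a < lowEnt f μ ε x := by
  by_contra hcon
  have h1 : ∀ᵐ x ∂μ, ∀ k : ℕ, lowEnt f μ (1 / ((k : ℝ) + 1)) x ≤ a := by
    rw [ae_all_iff]
    intro k
    rcases lowEnt_dichotomy hf he (1 / ((k : ℝ) + 1)) a with h | h
    · exact h
    · exact absurd ⟨1 / ((k : ℝ) + 1), by positivity, h⟩ hcon
  have h2 : essSup (fun x => localEntropy f μ x) μ ≤ a := by
    refine essSup_le_of_ae_le _ ?_
    filter_upwards [h1] with x hx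
    rw [localEntropy_eq_iSup_nat]
    exact iSup_le hx
  exact absurd ha (not_lt.2 h2)

lemma localEntropy_ae_eq {f : X → X} (hf : Continuous f) {μ : Measure X} [IsProbabilityMeasure μ]
    (he : Ergodic f μ) :
    ∀ᵐ x ∂μ, localEntropy f μ x = essSup (fun x => localEntropy f μ x) μ := by
  have h1 : ∀ᵐ x ∂μ, ∀ q : ℚ, ((q : ℝ) : EReal) < essSup (fun x => localEntropy f μ x) μ →
      ((q : ℝ) : EReal) ≤ localEntropy f μ x := by
    rw [ae_all_iff]
    intro q
    by_cases hq : ((q : ℝ) : EReal) < essSup (fun x => localEntropy f μ x) μ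
    · obtain ⟨ε, hε, h⟩ := exists_lt_lowEnt hf he hq
      filter_upwards [h] with x hx _
      rw [localEntropy_eq]
      exact le_iSup₂_of_le ε hε hx.le
    · filter_upwards with x hx
      exact absurd hx hq
  have h2 : ∀ᵐ x ∂μ, localEntropy f μ x ≤ essSup (fun x => localEntropy f μ x) μ := ae_le_essSup
  filter_upwards [h1, h2] with x hx1 hx2
  refine le_antisymm hx2 ?_
  refine le_of_forall_lt_imp_le_of_dense fun B hB => ?_
  obtain ⟨q, hq1, hq2⟩ := EReal.lt_iff_exists_rat_btwn.1 hB
  exact hq1.le.trans (hx1 q hq2)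

lemma exists_fine_partition {ε : ℝ} (hε : 0 < ε) [Nonempty X] :
    ∃ s : Finset (Set X), IsFinPartition s ∧ ∀ A ∈ s, ∀ x ∈ A, ∀ y ∈ A, dist x y < ε := by
  classical
  let B : ℕ → Set X := fun n => Metric.ball (TopologicalSpace.denseSeq X n) (ε / 2)
  have hcov : (Set.univ : Set X) ⊆ ⋃ n, B n := by
    intro x _
    obtain ⟨_, hn, ⟨n, rfl⟩⟩ :=
      Metric.dense_iff.1 (TopologicalSpace.denseRange_denseSeq X) x (ε / 2) (by positivity)
    rw [Set.mem_iUnion]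
    refine ⟨n, ?_⟩
    rw [Metric.mem_ball] at hn ⊢
    rwa [dist_comm]
  obtain ⟨t, ht⟩ := isCompact_univ.elim_finite_subcover B (fun n => Metric.isOpen_ball) hcov
  let M := t.sup id
  refine ⟨(Finset.range (M + 1)).image (disjointed B), ⟨?_, ?_, ?_⟩, ?_⟩
  · intro A hA
    obtain ⟨n, _, rfl⟩ := Finset.mem_image.1 hA
    exact MeasurableSet.disjointed (fun n => measurableSet_ball) n
  · rw [Set.eq_univ_iff_forall]
    intro x
    obtain ⟨n, hn, hx⟩ : ∃ n ∈ t, x ∈ B n := by simpa using ht (Set.mem_univ x)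
    have hnM : n ≤ M := Finset.le_sup (f := id) hn
    have hx' : x ∈ partialSups B n := (le_partialSups B n) hx
    rw [← partialSups_disjointed] at hx'
    rw [partialSups_eq_biUnion_range] at hx'
    simp only [Set.mem_iUnion, Finset.mem_range] at hx'
    obtain ⟨i, hi, hxi⟩ := hx'
    exact ⟨disjointed B i, Finset.mem_coe.2 (Finset.mem_image.2 ⟨i, Finset.mem_range.2 (by omega), rfl⟩), hxi⟩
  · intro A hA A' hA' hne
    obtain ⟨n, _, rfl⟩ := Finset.mem_image.1 (Finset.mem_coe.1 hA)
    obtain ⟨m, _, rfl⟩ := Finset.mem_image.1 (Finset.mem_coe.1 hA')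
    exact disjoint_disjointed B (fun h => hne (h ▸ rfl))
  · intro A hA x hx y hy
    obtain ⟨n, _, rfl⟩ := Finset.mem_image.1 hA
    have h1 : x ∈ B n := disjointed_le B n hx
    have h2 : y ∈ B n := disjointed_le B n hy
    calc dist x y ≤ dist x (TopologicalSpace.denseSeq X n) + dist y (TopologicalSpace.denseSeq X n) :=
          dist_triangle_right _ _ _
      _ < ε := by
        rw [Metric.mem_ball] at h1 h2; linarith

lemma lintegral_rate_le {f : X → X} (hf : Continuous f) {μ : Measure X} [IsProbabilityMeasure μ]
    {s : Finset (Set X)} (hs : IsFinPartition s) {ε : ℝ}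
    (hd : ∀ A ∈ s, ∀ x ∈ A, ∀ y ∈ A, dist x y < ε) (n : ℕ) :
    ∫⁻ x, (rate n (μ (bowenBall f x n ε))).toENNReal ∂μ ≤ ENNReal.ofReal (dynH f μ s n / n) := by
  obtain ⟨σ, hσ⟩ := exists_symbol hs
  set φ : X → (Fin n → {A // A ∈ s}) := fun x => fun i : Fin n => σ (f^[(i : ℕ)] x) with hφ
  have hcell := fun w => cell_eq hσ f n w
  have hφm : ∀ w, MeasurableSet (φ ⁻¹' {w}) := fun w => by
    rw [← hcell w]; exact cell_meas hs hf.measurable w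
  have h1 : ∀ x, (rate n (μ (bowenBall f x n ε))).toENNReal ≤
      (rate n (μ (φ ⁻¹' {φ x}))).toENNReal := by
    intro x
    apply EReal.toENNReal_le_toENNReal
    apply rate_antitone
    apply measure_mono
    intro y hy i hi
    have hy' : φ y = φ x := hy
    have h2 : σ (f^[i] y) = σ (f^[i] x) := congrFun hy' ⟨i, hi⟩
    exact hd _ (σ (f^[i] x)).2 _ ((hσ _ _).2 rfl) _ ((hσ _ _).2 h2)
  refine (lintegral_mono h1).trans ?_
  rw [lintegral_fin μ φ hφm (fun w => (rate n (μ (φ ⁻¹' {w}))).toENNReal)]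
  have h3 : ∀ w, (rate n (μ (φ ⁻¹' {w}))).toENNReal * μ (φ ⁻¹' {w}) ≤
      ENNReal.ofReal (-((μ (φ ⁻¹' {w})).toReal * Real.log (μ (φ ⁻¹' {w})).toReal) / n) := by
    intro w
    set m := μ (φ ⁻¹' {w}) with hm
    have hmt : m ≠ ∞ := measure_ne_top _ _
    by_cases h0 : m = 0
    · simp [h0]
    · have hrate : rate n m = (((n : ℝ)⁻¹ * (-Real.log m.toReal) : ℝ) : EReal) := by
        unfold rate
        rw [ENNReal.log_pos_real h0 hmt, ← EReal.coe_neg, ← EReal.coe_mul]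
      rw [hrate, EReal.toENNReal_of_ne_top (EReal.coe_ne_top _), EReal.toReal_coe]
      nth_rewrite 2 [← ENNReal.ofReal_toReal hmt]
      rw [← ENNReal.ofReal_mul' ENNReal.toReal_nonneg]
      apply ENNReal.ofReal_le_ofReal
      apply le_of_eq
      ring
  refine (Finset.sum_le_sum fun w _ => h3 w).trans ?_
  rw [← ENNReal.ofReal_sum_of_nonneg]
  · apply ENNReal.ofReal_le_ofReal
    apply le_of_eq
    unfold dynH
    rw [← Finset.sum_neg_distrib, Finset.sum_div]
    refine Finset.sum_congr rfl fun w _ => ?_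
    rw [hcell w]
  · intro w _
    have hm0 : 0 ≤ (μ (φ ⁻¹' {w})).toReal := ENNReal.toReal_nonneg
    have hm1 : (μ (φ ⁻¹' {w})).toReal ≤ 1 := measureReal_le_one
    have := Real.log_nonpos hm0 hm1
    have : 0 ≤ -((μ (φ ⁻¹' {w})).toReal * Real.log (μ (φ ⁻¹' {w})).toReal) := by nlinarith
    positivity

lemma essSup_le_ks {f : X → X} (hf : Continuous f) {μ : Measure X} [IsProbabilityMeasure μ]
    (he : Ergodic f μ) : essSup (fun x => localEntropy f μ x) μ ≤ ksEntropy f μ := by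
  have hne : Nonempty X := nonempty_of_isProbabilityMeasure μ
  by_contra! hcon
  obtain ⟨a', ha1, ha2⟩ := EReal.lt_iff_exists_real_btwn.1 hcon
  obtain ⟨a, hb1, hb2⟩ := EReal.lt_iff_exists_real_btwn.1 ha2
  have haa : a' < a := EReal.coe_lt_coe_iff.1 hb1
  obtain ⟨ε, hε, hlow⟩ := exists_lt_lowEnt hf he hb2
  obtain ⟨s, hs, hd⟩ := exists_fine_partition (X := X) hε
  have hks : Filter.atTop.liminf (fun n : ℕ => ((dynH f μ s n / n : ℝ) : EReal)) < a' :=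
    lt_of_le_of_lt (le_iSup₂ (f := fun (s : Finset (Set X)) (_ : IsFinPartition s) =>
      Filter.atTop.liminf (fun n : ℕ => ((dynH f μ s n / n : ℝ) : EReal))) s hs) ha1
  have hfreq := Filter.frequently_lt_of_liminf_lt (h := hks)
  -- nonnegativity
  have ha0 : 0 ≤ a' := by
    by_contra! hneg
    obtain ⟨n, hn⟩ := hfreq.exists
    have h1 : dynH f μ s n / n < a' := EReal.coe_lt_coe_iff.1 hn
    have h2 : 0 ≤ dynH f μ s n := by
      unfold dynH
      rw [← Finset.sum_neg_distrib]
      refine Finset.sum_nonneg fun w _ => ?_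
      have hm0 := @ENNReal.toReal_nonneg (μ (⋂ i : Fin n, f^[(i : ℕ)] ⁻¹' ((w i : Set X))))
      have hm1 : (μ (⋂ i : Fin n, f^[(i : ℕ)] ⁻¹' ((w i : Set X)))).toReal ≤ 1 := measureReal_le_one
      have := Real.log_nonpos hm0 hm1
      nlinarith
    have h3 : 0 ≤ dynH f μ s n / n := by positivity
    linarith
  have hF : ENNReal.ofReal a ≤ Filter.atTop.liminf (fun n : ℕ =>
      ∫⁻ x, (rate n (μ (bowenBall f x n ε))).toENNReal ∂μ) := by
    calc ENNReal.ofReal a = ∫⁻ _, ENNReal.ofReal a ∂μ := by simp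
      _ ≤ ∫⁻ x, Filter.atTop.liminf (fun n : ℕ =>
            (rate n (μ (bowenBall f x n ε))).toENNReal) ∂μ := by
          refine lintegral_mono_ae ?_
          filter_upwards [hlow] with x hx
          refine Filter.le_liminf_of_le (h := ?_)
          filter_upwards [Filter.eventually_lt_of_lt_liminf hx] with n hn
          have := EReal.toENNReal_le_toENNReal hn.le
          rwa [EReal.toENNReal_of_ne_top (EReal.coe_ne_top _), EReal.toReal_coe] at this
      _ ≤ _ := lintegral_liminf_le fun n =>
          (measurable_rate_ball hf μ n ε).ereal_toENNReal
  have hG : Filter.atTop.liminf (fun n : ℕ =>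
      ∫⁻ x, (rate n (μ (bowenBall f x n ε))).toENNReal ∂μ) ≤ ENNReal.ofReal a' := by
    refine Filter.liminf_le_of_frequently_le ?_
    refine hfreq.mono fun n hn => ?_
    refine (lintegral_rate_le hf hs hd n).trans ?_
    exact ENNReal.ofReal_le_ofReal (EReal.coe_lt_coe_iff.1 hn).le
  have := hF.trans hG
  rw [ENNReal.ofReal_le_ofReal_iff ha0] at this
  linarith

end Erg

section Coding
variable {S Y : Type*} [Fintype S] [Inhabited S]

open Classical in
/-- weight of the symbol `a` when `b` is predicted. -/
noncomputable def qw (γ : ℝ) (a b : S) : ℝ :=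
  if a = b then 1 - γ else γ / Fintype.card S

/-- prepend a symbol. -/
def scons (a : S) (w : ℕ → S) : ℕ → S := fun i => Nat.casesOn i a w

/-- iterated sum over words of length `n`. -/
noncomputable def wsum : ℕ → ((ℕ → S) → ℝ) → ℝ
  | 0, g => g (fun _ => default)
  | n + 1, g => ∑ a : S, wsum n (fun w => g (scons a w))

/-- extend a finite word by the default symbol. -/
def wext {n : ℕ} (w : Fin n → S) : ℕ → S := fun i => if h : i < n then w ⟨i, h⟩ else default

lemma wsum_eq (n : ℕ) (g : (ℕ → S) → ℝ) : wsum n g = ∑ w : Fin n → S, g (wext w) := by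
  induction n generalizing g with
  | zero =>
    have : ∀ w : Fin 0 → S, wext w = fun _ => default := fun w => by funext i; simp [wext]
    simp [wsum, this]
  | succ n ih =>
    simp only [wsum, ih]
    rw [← (Fin.consEquiv (fun _ : Fin (n + 1) => S)).sum_comp, Fintype.sum_prod_type]
    refine Finset.sum_congr rfl fun a _ => Finset.sum_congr rfl fun w _ => ?_
    congr 1
    funext i
    cases i with
    | zero => simp [wext, scons, Fin.consEquiv]
    | succ i =>
      by_cases h : i < n
      · have hs : scons a (wext w) (i + 1) = wext w i := rfl
        rw [hs]
        unfold wext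
        rw [dif_pos h, dif_pos (by omega : i + 1 < n + 1)]
        rfl
      · simp [wext, scons, h]

lemma wsum_add (n : ℕ) (g h : (ℕ → S) → ℝ) :
    wsum n (fun w => g w + h w) = wsum n g + wsum n h := by
  simp only [wsum_eq, Finset.sum_add_distrib]

lemma wsum_mul (n : ℕ) (c : ℝ) (g : (ℕ → S) → ℝ) :
    wsum n (fun w => c * g w) = c * wsum n g := by
  simp only [wsum_eq, Finset.mul_sum]

lemma wsum_sum {ι : Type*} (n : ℕ) (t : Finset ι) (g : ι → (ℕ → S) → ℝ) :
    wsum n (fun w => ∑ j ∈ t, g j w) = ∑ j ∈ t, wsum n (g j) := by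
  simp only [wsum_eq]
  exact Finset.sum_comm

lemma qw_pos {γ : ℝ} (h0 : 0 < γ) (h1 : γ < 1) (a b : S) : 0 < qw γ a b := by
  unfold qw
  split_ifs
  · linarith
  · have : 0 < Fintype.card S := Fintype.card_pos
    positivity

lemma sum_qw_le {γ : ℝ} (h0 : 0 < γ) (b : S) : ∑ a : S, qw γ a b ≤ 1 := by
  classical
  have hk : (0 : ℝ) < Fintype.card S := by exact_mod_cast Fintype.card_pos
  have h : ∀ a : S, qw γ a b ≤ (if a = b then 1 - γ else 0) + γ / Fintype.card S := by
    intro a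
    have : 0 < γ / Fintype.card S := by positivity
    unfold qw
    split_ifs <;> linarith
  refine (Finset.sum_le_sum fun a _ => h a).trans ?_
  rw [Finset.sum_add_distrib]
  simp only [Finset.sum_ite_eq', Finset.mem_univ, if_true, Finset.sum_const, Finset.card_univ,
    nsmul_eq_mul]
  field_simp
  linarith

lemma wsum_block {γ : ℝ} (h0 : 0 < γ) (h1 : γ < 1) (m r : ℕ) (π : ℕ → S) (G : (ℕ → S) → ℝ)
    (hG : 0 ≤ wsum r G) :
    wsum (m + r) (fun w => (∏ i ∈ Finset.range m, qw γ (w i) (π i)) * G (fun i => w (i + m)))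
      ≤ wsum r G := by
  induction m generalizing π with
  | zero => simp
  | succ m ih =>
    have e : m + 1 + r = (m + r) + 1 := by omega
    rw [e, wsum]
    have h : ∀ a : S, wsum (m + r) (fun w => (∏ i ∈ Finset.range (m + 1),
        qw γ (scons a w i) (π i)) * G (fun i => scons a w (i + (m + 1)))) ≤
        qw γ a (π 0) * wsum r G := by
      intro a
      have h2 : (fun w : ℕ → S => (∏ i ∈ Finset.range (m + 1),
        qw γ (scons a w i) (π i)) * G (fun i => scons a w (i + (m + 1)))) =
        fun w => qw γ a (π 0) * ((∏ i ∈ Finset.range m, qw γ (w i) (π (i + 1))) *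
          G (fun i => w (i + m))) := by
        funext w
        rw [Finset.prod_range_succ']
        have h3 : (fun i => scons a w (i + (m + 1))) = fun i => w (i + m) := rfl
        have h4 : ∀ i, scons a w (i + 1) = w i := fun i => rfl
        have h5 : scons a w 0 = a := rfl
        rw [h3, h5]
        simp only [h4]
        ring
      rw [h2, wsum_mul]
      exact mul_le_mul_of_nonneg_left (ih _) (qw_pos h0 h1 _ _).le
    refine (Finset.sum_le_sum fun a _ => h a).trans ?_
    rw [← Finset.sum_mul]
    have := sum_qw_le (S := S) h0 (π 0)
    nlinarith

/-- the coding sub-probability. -/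
noncomputable def Qc (t : Finset ℕ) (E : ℕ → Finset Y) (p : Y → ℕ → S) (κ : ℕ → ℝ) (γ : ℝ) :
    ℕ → (ℕ → S) → ℝ
  | 0, _ => 1
  | n + 1, w => (1 / (2 * (Fintype.card S : ℝ))) * Qc t E p κ γ n (fun i => w (i + 1)) +
      ∑ m ∈ t, if _h : 1 ≤ m ∧ m ≤ n + 1 then
        ∑ y ∈ E m, κ m * ((∏ i ∈ Finset.range m, qw γ (w i) (p y i)) *
          Qc t E p κ γ (n + 1 - m) (fun i => w (i + m))) else 0
  termination_by n => n
  decreasing_by all_goals omega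

variable {t : Finset ℕ} {E : ℕ → Finset Y} {p : Y → ℕ → S} {κ : ℕ → ℝ} {γ : ℝ}

lemma Qc_pos (hκ : ∀ m, 0 < κ m) (h0 : 0 < γ) (h1 : γ < 1) (n : ℕ) (w : ℕ → S) :
    0 < Qc t E p κ γ n w := by
  induction n using Nat.strong_induction_on generalizing w with
  | _ n ih =>
    have hk : (0 : ℝ) < Fintype.card S := by exact_mod_cast Fintype.card_pos
    cases n with
    | zero => rw [Qc]; exact one_pos
    | succ n =>
      rw [Qc]
      have e1 := ih n (by omega) (fun i => w (i + 1))
      refine add_pos_of_pos_of_nonneg (by positivity) (Finset.sum_nonneg fun m _ => ?_)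
      split_ifs with h
      · refine Finset.sum_nonneg fun y _ => ?_
        have e2 := ih (n + 1 - m) (by omega) (fun i => w (i + m))
        have e3 : 0 < ∏ i ∈ Finset.range m, qw γ (w i) (p y i) :=
          Finset.prod_pos fun i _ => qw_pos h0 h1 _ _
        have := hκ m
        positivity
      · exact le_rfl

lemma wsum_nonneg (n : ℕ) {g : (ℕ → S) → ℝ} (hg : ∀ w, 0 ≤ g w) : 0 ≤ wsum n g := by
  rw [wsum_eq]; exact Finset.sum_nonneg fun w _ => hg _

lemma wsum_Qc_le (hκ : ∀ m, 0 < κ m) (h0 : 0 < γ) (h1 : γ < 1)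
    (hsum : ∑ m ∈ t, κ m * (E m).card ≤ 1 / 2) (n : ℕ) :
    wsum n (Qc t E p κ γ n) ≤ 1 := by
  induction n using Nat.strong_induction_on with
  | _ n ih =>
    have hk : (0 : ℝ) < Fintype.card S := by exact_mod_cast Fintype.card_pos
    cases n with
    | zero => simp [wsum, Qc]
    | succ n =>
      have hQ : Qc t E p κ γ (n + 1) = fun w => (1 / (2 * (Fintype.card S : ℝ))) *
          Qc t E p κ γ n (fun i => w (i + 1)) +
          ∑ m ∈ t, (if _h : 1 ≤ m ∧ m ≤ n + 1 then
            ∑ y ∈ E m, κ m * ((∏ i ∈ Finset.range m, qw γ (w i) (p y i)) *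
          Qc t E p κ γ (n + 1 - m) (fun i => w (i + m))) else 0) := by
        funext w; rw [Qc]
      rw [hQ, wsum_add, wsum_mul, wsum_sum]
      have e1 : wsum (n + 1) (fun w => Qc t E p κ γ n (fun i => w (i + 1))) ≤
          Fintype.card S := by
        rw [wsum]
        have : ∀ a : S, wsum n (fun w => Qc t E p κ γ n (fun i => scons a w (i + 1))) ≤ 1 :=
          fun a => ih n (by omega)
        refine (Finset.sum_le_sum fun a _ => this a).trans ?_
        simp
      have e2 : ∀ m ∈ t, wsum (n + 1) (fun w => (if _h : 1 ≤ m ∧ m ≤ n + 1 then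
            ∑ y ∈ E m, κ m * ((∏ i ∈ Finset.range m, qw γ (w i) (p y i)) *
          Qc t E p κ γ (n + 1 - m) (fun i => w (i + m))) else 0)) ≤ κ m * (E m).card := by
        intro m _
        by_cases h : 1 ≤ m ∧ m ≤ n + 1
        · simp only [h, and_self, dite_true]
          rw [wsum_sum]
          have e3 : ∀ y ∈ E m, wsum (n + 1) (fun w => κ m *
              ((∏ i ∈ Finset.range m, qw γ (w i) (p y i)) *
              Qc t E p κ γ (n + 1 - m) (fun i => w (i + m)))) ≤ κ m := by
            intro y _
            rw [wsum_mul]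
            have e4 := wsum_block h0 h1 m (n + 1 - m) (p y) (Qc t E p κ γ (n + 1 - m))
              (wsum_nonneg _ fun w => (Qc_pos hκ h0 h1 _ _).le)
            have e5 : m + (n + 1 - m) = n + 1 := by omega
            rw [e5] at e4
            have e6 := e4.trans (ih (n + 1 - m) (by omega))
            have := hκ m
            nlinarith
          refine (Finset.sum_le_sum e3).trans ?_
          rw [Finset.sum_const, nsmul_eq_mul, mul_comm]
        · simp only [h, dite_false]
          have : wsum (n + 1) (fun _ : ℕ → S => (0 : ℝ)) = 0 := by rw [wsum_eq]; simp
          rw [this]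
          have := (hκ m).le
          positivity
      have e7 := (Finset.sum_le_sum e2).trans hsum
      have e8 : 1 / (2 * (Fintype.card S : ℝ)) *
          wsum (n + 1) (fun w => Qc t E p κ γ n (fun i => w (i + 1))) ≤ 1 / 2 := by
        calc _ ≤ 1 / (2 * (Fintype.card S : ℝ)) * Fintype.card S := by gcongr
          _ = 1 / 2 := by field_simp
      linarith

lemma Qc_step (hκ : ∀ m, 0 < κ m) (h0 : 0 < γ) (h1 : γ < 1) (n : ℕ) (w : ℕ → S) :
    (1 / (2 * (Fintype.card S : ℝ))) * Qc t E p κ γ n (fun i => w (i + 1)) ≤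
      Qc t E p κ γ (n + 1) w := by
  rw [Qc]
  apply le_add_of_nonneg_right
  refine Finset.sum_nonneg fun m _ => ?_
  split_ifs with h
  · refine Finset.sum_nonneg fun y _ => ?_
    have e2 := Qc_pos (t := t) (E := E) (p := p) hκ h0 h1 (n + 1 - m) (fun i => w (i + m))
    have e3 : 0 < ∏ i ∈ Finset.range m, qw γ (w i) (p y i) :=
      Finset.prod_pos fun i _ => qw_pos h0 h1 _ _
    have := hκ m
    positivity
  · exact le_rfl

lemma Qc_block (hκ : ∀ m, 0 < κ m) (h0 : 0 < γ) (h1 : γ < 1) (m r : ℕ) (hm : m ∈ t) (hm1 : 1 ≤ m)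
    (y : Y) (hy : y ∈ E m) (w : ℕ → S) :
    κ m * ((∏ i ∈ Finset.range m, qw γ (w i) (p y i)) * Qc t E p κ γ r (fun i => w (i + m))) ≤
      Qc t E p κ γ (m + r) w := by
  have hpos : ∀ m' n (y' : Y), 0 ≤ κ m' * ((∏ i ∈ Finset.range m', qw γ (w i) (p y' i)) *
      Qc t E p κ γ n (fun i => w (i + m'))) := by
    intro m' n y'
    have e2 := Qc_pos (t := t) (E := E) (p := p) hκ h0 h1 n (fun i => w (i + m'))
    have e3 : 0 < ∏ i ∈ Finset.range m', qw γ (w i) (p y' i) :=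
      Finset.prod_pos fun i _ => qw_pos h0 h1 _ _
    have := hκ m'
    positivity
  obtain ⟨n, hn⟩ : ∃ n, m + r = n + 1 := ⟨m + r - 1, by omega⟩
  rw [hn, Qc]
  have hk : (0 : ℝ) < Fintype.card S := by exact_mod_cast Fintype.card_pos
  have e1 := Qc_pos (t := t) (E := E) (p := p) hκ h0 h1 n (fun i => w (i + 1))
  have e4 : 0 ≤ (1 / (2 * (Fintype.card S : ℝ))) * Qc t E p κ γ n (fun i => w (i + 1)) := by
    positivity
  refine le_trans ?_ (le_add_of_nonneg_left e4)
  refine le_trans ?_ (Finset.single_le_sum (f := fun m => if _h : 1 ≤ m ∧ m ≤ n + 1 then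
        ∑ y ∈ E m, κ m * ((∏ i ∈ Finset.range m, qw γ (w i) (p y i)) *
          Qc t E p κ γ (n + 1 - m) (fun i => w (i + m))) else 0) ?_ hm)
  · have h : 1 ≤ m ∧ m ≤ n + 1 := by omega
    have e5 : n + 1 - m = r := by omega
    simp only [h, and_self, dite_true, e5]
    exact Finset.single_le_sum (f := fun y => κ m * ((∏ i ∈ Finset.range m, qw γ (w i) (p y i)) *
      Qc t E p κ γ r (fun i => w (i + m)))) (fun y' _ => hpos m r y') hy
  · intro m' _
    split_ifs
    · exact Finset.sum_nonneg fun y' _ => hpos _ _ y'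
    · exact le_rfl

lemma neg_log_Qc_le (hκ : ∀ m, 0 < κ m) (h0 : 0 < γ) (h1 : γ < 1) (n : ℕ) (w : ℕ → S) :
    -Real.log (Qc t E p κ γ (n + 1) w) ≤
      Real.log (2 * Fintype.card S) - Real.log (Qc t E p κ γ n (fun i => w (i + 1))) := by
  have hk : (0 : ℝ) < Fintype.card S := by exact_mod_cast Fintype.card_pos
  have e1 := Qc_pos (t := t) (E := E) (p := p) hκ h0 h1 n (fun i => w (i + 1))
  have := Real.log_le_log (by positivity) (Qc_step (t := t) (E := E) (p := p) hκ h0 h1 n w)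
  rw [Real.log_mul (by positivity) e1.ne', one_div, Real.log_inv] at this
  linarith

lemma neg_log_Qc_crude (hκ : ∀ m, 0 < κ m) (h0 : 0 < γ) (h1 : γ < 1) (n : ℕ) (w : ℕ → S) :
    -Real.log (Qc t E p κ γ n w) ≤ n * Real.log (2 * Fintype.card S) := by
  induction n generalizing w with
  | zero => simp [Qc]
  | succ n ih =>
    have e1 := neg_log_Qc_le (t := t) (E := E) (p := p) hκ h0 h1 n w
    have e2 := ih (fun i => w (i + 1))
    push_cast
    linarith

/-- Gibbs inequality. -/
lemma gibbs {T : Type*} [Fintype T] (P Q : T → ℝ) (hP : ∀ i, 0 ≤ P i) (hP1 : ∑ i, P i = 1)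
    (hQ : ∀ i, 0 < Q i) (hQ1 : ∑ i, Q i ≤ 1) :
    -∑ i, P i * Real.log (P i) ≤ ∑ i, P i * (-Real.log (Q i)) := by
  have h : ∀ i, P i * Real.log (Q i) - P i * Real.log (P i) ≤ Q i - P i := by
    intro i
    rcases (hP i).eq_or_lt with h | h
    · rw [← h]; simpa using (hQ i).le
    · have := Real.log_le_sub_one_of_pos (div_pos (hQ i) h)
      rw [Real.log_div (hQ i).ne' h.ne'] at this
      have h2 := mul_le_mul_of_nonneg_left this h.le
      have h3 : P i * (Q i / P i - 1) = Q i - P i := by field_simp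
      rw [h3] at h2
      linarith
  have h4 := Finset.sum_le_sum fun i (_ : i ∈ Finset.univ) => h i
  rw [Finset.sum_sub_distrib, Finset.sum_sub_distrib] at h4
  simp only [mul_neg, Finset.sum_neg_distrib]
  linarith

end Coding

section Final

lemma pointwise_bound {X S Y : Type*} [Fintype S] [Inhabited S] {f : X → X} {σ : X → S}
    {t : Finset ℕ} {E : ℕ → Finset Y} {p : Y → ℕ → S} {γ β : ℝ} {M : ℕ}
    (h0 : 0 < γ) (h1 : γ < 1) (hβ : 0 ≤ β) (ht : ∀ m ∈ t, 1 ≤ m ∧ m ≤ M) {U D : Set X}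
    (hgood : ∀ x, x ∉ D → ∃ m ∈ t, ∃ y ∈ E m, ∀ i < m, f^[i] x ∉ U → σ (f^[i] x) = p y i)
    (n : ℕ) (x : X) (w : ℕ → S) (hw : ∀ i < n, w i = σ (f^[i] x)) :
    -Real.log (Qc t E p (fun m => Real.exp (-β * m)) γ n w) ≤
      (∑ i ∈ Finset.range n, ((β - Real.log (1 - γ)) +
        U.indicator (fun _ => Real.log (Fintype.card S / γ)) (f^[i] x) +
        D.indicator (fun _ => Real.log (2 * Fintype.card S)) (f^[i] x))) +
      M * Real.log (2 * Fintype.card S) := by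
  have hκ : ∀ m : ℕ, 0 < Real.exp (-β * m) := fun m => Real.exp_pos _
  have hk : (1 : ℝ) ≤ Fintype.card S := by exact_mod_cast Fintype.card_pos
  have hb : 0 ≤ Real.log (Fintype.card S / γ) := by
    apply Real.log_nonneg
    rw [le_div_iff₀ h0]; linarith
  have hd : 0 ≤ Real.log (2 * Fintype.card S) := Real.log_nonneg (by linarith)
  have hl : Real.log (1 - γ) ≤ 0 := Real.log_nonpos (by linarith) (by linarith)
  have hU : ∀ z, 0 ≤ U.indicator (fun _ => Real.log (Fintype.card S / γ)) z :=
    fun z => Set.indicator_nonneg (fun _ _ => hb) z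
  have hD : ∀ z, 0 ≤ D.indicator (fun _ => Real.log (2 * Fintype.card S)) z :=
    fun z => Set.indicator_nonneg (fun _ _ => hd) z
  induction n using Nat.strong_induction_on generalizing x w with
  | _ n ih =>
    by_cases hnM : n ≤ M
    · have e1 := neg_log_Qc_crude (t := t) (E := E) (p := p) hκ h0 h1 n w
      have e2 : (n : ℝ) ≤ M := by exact_mod_cast hnM
      have e3 : (0 : ℝ) ≤ ∑ i ∈ Finset.range n, ((β - Real.log (1 - γ)) +
        U.indicator (fun _ => Real.log (Fintype.card S / γ)) (f^[i] x) +
        D.indicator (fun _ => Real.log (2 * Fintype.card S)) (f^[i] x)) :=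
        Finset.sum_nonneg fun i _ => by
          have := hU (f^[i] x); have := hD (f^[i] x); linarith
      have e4 := mul_le_mul_of_nonneg_right e2 hd
      linarith
    · push Not at hnM
      by_cases hx : x ∈ D
      · obtain ⟨n', rfl⟩ : ∃ n', n = n' + 1 := ⟨n - 1, by omega⟩
        have e1 := neg_log_Qc_le (t := t) (E := E) (p := p) hκ h0 h1 n' w
        have e2 := ih n' (by omega) (f x) (fun i => w (i + 1)) (fun i hi => by
          rw [hw (i + 1) (by omega), Function.iterate_succ_apply])
        rw [Finset.sum_range_succ']
        simp only [Function.iterate_succ_apply, Function.iterate_zero, id_eq]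
        have e3 : D.indicator (fun _ => Real.log (2 * Fintype.card S)) x =
            Real.log (2 * Fintype.card S) := Set.indicator_of_mem hx _
        have e4 := hU x
        linarith
      · obtain ⟨m, hm, y, hy, hpred⟩ := hgood x hx
        obtain ⟨hm1, hmM⟩ := ht m hm
        obtain ⟨r, rfl⟩ : ∃ r, n = m + r := ⟨n - m, by omega⟩
        have e1 := Qc_block (t := t) (E := E) (p := p) hκ h0 h1 m r hm hm1 y hy w
        have e2 := ih r (by omega) (f^[m] x) (fun i => w (i + m)) (fun i hi => by
          rw [hw (i + m) (by omega), Function.iterate_add_apply])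
        have hQ := Qc_pos (t := t) (E := E) (p := p) hκ h0 h1 r (fun i => w (i + m))
        have hq : ∀ i, 0 < qw γ (w i) (p y i) := fun i => qw_pos h0 h1 _ _
        have hprod : 0 < ∏ i ∈ Finset.range m, qw γ (w i) (p y i) :=
          Finset.prod_pos fun i _ => hq i
        have e3 := Real.log_le_log (mul_pos (hκ m) (mul_pos hprod hQ)) e1
        rw [Real.log_mul (hκ m).ne' (mul_pos hprod hQ).ne', Real.log_mul hprod.ne' hQ.ne',
          Real.log_exp, Real.log_prod (fun i _ => (hq i).ne')] at e3
        have e4 : ∀ i ∈ Finset.range m, -Real.log (qw γ (w i) (p y i)) + β ≤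
            (β - Real.log (1 - γ)) +
            U.indicator (fun _ => Real.log (Fintype.card S / γ)) (f^[i] x) +
            D.indicator (fun _ => Real.log (2 * Fintype.card S)) (f^[i] x) := by
          intro i hi
          have hi' : i < m := Finset.mem_range.1 hi
          have f1 := hU (f^[i] x)
          have f2 := hD (f^[i] x)
          by_cases hiU : f^[i] x ∈ U
          · rw [Set.indicator_of_mem hiU]
            unfold qw
            split_ifs
            · linarith
            · have : Real.log (γ / Fintype.card S) = -Real.log (Fintype.card S / γ) := by
                rw [← Real.log_inv, inv_div]
              linarith
          · have : w i = p y i := by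
              rw [hw i (by omega)]; exact hpred i hi' hiU
            unfold qw
            rw [if_pos this]
            linarith
        have e5 := Finset.sum_le_sum e4
        rw [Finset.sum_add_distrib, Finset.sum_neg_distrib, Finset.sum_const, Finset.card_range,
          nsmul_eq_mul] at e5
        rw [Finset.sum_range_add]
        have e6 : ∀ i, f^[m + i] x = f^[i] (f^[m] x) := fun i => by
          rw [add_comm, Function.iterate_add_apply]
        simp only [e6]
        linarith

lemma exists_gamma (k : ℝ) {δ : ℝ} (hδ : 0 < δ) : ∃ γ : ℝ, 0 < γ ∧ γ < 1 ∧
    -Real.log (1 - γ) + γ * (Real.log k - Real.log γ) + γ * Real.log (2 * k) < δ := by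
  have hc : ContinuousAt (fun γ : ℝ => -Real.log (1 - γ) + (γ * Real.log k + Real.negMulLog γ) +
      γ * Real.log (2 * k)) 0 := by
    have h1 : ContinuousAt (fun γ : ℝ => Real.log (1 - γ)) 0 :=
      ContinuousAt.log (by fun_prop) (by norm_num)
    have h2 : ContinuousAt Real.negMulLog 0 := Real.continuous_negMulLog.continuousAt
    have h3 : ContinuousAt (fun γ : ℝ => γ * Real.log k) 0 := by fun_prop
    have h4 : ContinuousAt (fun γ : ℝ => γ * Real.log (2 * k)) 0 := by fun_prop
    exact (h1.neg.add (h3.add h2)).add h4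
  have hev := hc.tendsto.eventually_lt_const (u := δ) (by simpa using hδ)
  have hev2 : ∀ᶠ γ in nhdsWithin (0 : ℝ) (Set.Ioi 0), -Real.log (1 - γ) +
      (γ * Real.log k + Real.negMulLog γ) + γ * Real.log (2 * k) < δ :=
    hev.filter_mono nhdsWithin_le_nhds
  have hev3 : ∀ᶠ γ in nhdsWithin (0 : ℝ) (Set.Ioi 0), γ ∈ Set.Ioo (0 : ℝ) 1 :=
    Ioo_mem_nhdsGT one_pos
  obtain ⟨γ, h1, h2⟩ := (hev2.and hev3).exists
  refine ⟨γ, h2.1, h2.2, ?_⟩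
  unfold Real.negMulLog at h1
  linarith

variable {X : Type*} [MetricSpace X] [CompactSpace X] [MeasurableSpace X] [BorelSpace X]

/-- compact approximation of a partition, separated at scale `2 ε`. -/
lemma exists_pred {μ : Measure X} [IsProbabilityMeasure μ] {s : Finset (Set X)}
    (hs : IsFinPartition s) [Nonempty {A // A ∈ s}] {σ : X → {A // A ∈ s}}
    (hσ : ∀ x (A : {A // A ∈ s}), x ∈ (A : Set X) ↔ σ x = A)
    {γ : ℝ} (hγ : 0 < γ) :
    ∃ (U : Set X) (ε : ℝ) (pr : X → {A // A ∈ s}), MeasurableSet U ∧ (μ U).toReal ≤ γ ∧ 0 < ε ∧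
      ∀ y z, z ∉ U → dist y z < ε → σ z = pr y := by
  classical
  have hcard : (0 : ℝ) < s.card := by
    obtain ⟨A⟩ := ‹Nonempty {A // A ∈ s}›
    exact_mod_cast Finset.card_pos.2 ⟨A.1, A.2⟩
  have h1 : ∀ A : {A // A ∈ s}, ∃ K ⊆ (A : Set X), IsClosed K ∧
      μ ((A : Set X) \ K) < ENNReal.ofReal (γ / s.card) := fun A =>
    (hs.1 A A.2).exists_isClosed_sdiff_lt (measure_ne_top _ _)
      (ENNReal.ofReal_pos.2 (by positivity)).ne'
  choose K hKA hKc hKm using h1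
  have hdisj : ∀ A B, A ≠ B → Disjoint (K A) (K B) := fun A B hAB =>
    (hs.2.2 A.2 B.2 (fun h => hAB (Subtype.ext h))).mono (hKA A) (hKA B)
  have hsep : ∀ A B, ∃ r : ℝ, 0 < r ∧ (A ≠ B → ∀ x ∈ K A, ∀ y ∈ K B, r ≤ dist x y) := by
    intro A B
    by_cases hAB : A = B
    · exact ⟨1, one_pos, fun h => absurd hAB h⟩
    · obtain ⟨r, hr, hrr⟩ := Metric.exists_pos_forall_lt_edist (hKc A).isCompact (hKc B)
        (hdisj A B hAB)
      refine ⟨r, by exact_mod_cast hr, fun _ x hx y hy => ?_⟩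
      have := hrr x hx y hy
      rw [edist_dist, ← ENNReal.ofReal_coe_nnreal] at this
      exact (ENNReal.ofReal_lt_ofReal_iff'.1 this).1.le
  choose r hr0 hr using hsep
  obtain ⟨ρ, hρ0, hρ⟩ : ∃ ρ : ℝ, 0 < ρ ∧ ∀ A B, ρ ≤ r A B := by
    obtain ⟨q, hq⟩ := Finite.exists_min (fun q : {A // A ∈ s} × {A // A ∈ s} => r q.1 q.2)
    exact ⟨r q.1 q.2, hr0 _ _, fun A B => hq (A, B)⟩
  refine ⟨⋃ A : {A // A ∈ s}, ((A : Set X) \ K A), ρ / 2,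
    fun y => if h : ∃ A, ∃ z ∈ K A, dist y z < ρ / 2 then h.choose else Classical.arbitrary _,
    ?_, ?_, by positivity, ?_⟩
  · exact MeasurableSet.iUnion fun A => (hs.1 A A.2).diff (hKc A).measurableSet
  · apply ENNReal.toReal_le_of_le_ofReal hγ.le
    calc μ (⋃ A : {A // A ∈ s}, ((A : Set X) \ K A))
        ≤ ∑ A : {A // A ∈ s}, μ ((A : Set X) \ K A) := measure_iUnion_fintype_le _ _
      _ ≤ ∑ A : {A // A ∈ s}, ENNReal.ofReal (γ / s.card) :=
          Finset.sum_le_sum fun A _ => (hKm A).le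
      _ = ENNReal.ofReal γ := by
          rw [Finset.sum_const, nsmul_eq_mul, ← ENNReal.ofReal_natCast,
            ← ENNReal.ofReal_mul (by positivity)]
          congr 1
          rw [Finset.card_univ, Fintype.card_coe]
          field_simp
  · intro y z hz hyz
    have hzK : z ∈ K (σ z) := by
      by_contra h
      exact hz (Set.mem_iUnion.2 ⟨σ z, (hσ z _).2 rfl, h⟩)
    have hex : ∃ A, ∃ z ∈ K A, dist y z < ρ / 2 := ⟨σ z, z, hzK, hyz⟩
    dsimp only
    rw [dif_pos hex]
    obtain ⟨z', hz', hyz'⟩ := hex.choose_spec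
    by_contra hne
    have e1 := hr _ _ hne z hzK z' hz'
    have e2 := hρ (σ z) hex.choose
    have e3 := dist_triangle_left z z' y
    linarith

lemma dynH_le {f : X → X} (hf : Continuous f) {μ : Measure X} [IsProbabilityMeasure μ]
    (hinv : MeasurePreserving f μ μ) {s : Finset (Set X)} (hs : IsFinPartition s)
    {a b : ℝ} (ha : 0 ≤ a) (hab : a < b)
    (hae : ∀ᵐ x ∂μ, localEntropy f μ x < (a : EReal)) :
    ∃ C : ℝ, ∀ n : ℕ, dynH f μ s n ≤ n * b + C := by
  classical
  obtain ⟨σ, hσ⟩ := exists_symbol hs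
  have hneX : Nonempty X := nonempty_of_isProbabilityMeasure μ
  have hneS : Nonempty {A // A ∈ s} := hneX.map σ
  let _ : Inhabited {A // A ∈ s} := Classical.inhabited_of_nonempty hneS
  set k : ℝ := (Fintype.card {A // A ∈ s} : ℝ) with hk
  have hk1 : (1 : ℝ) ≤ k := by rw [hk]; exact_mod_cast Fintype.card_pos
  set δ := (b - a) / 2 with hδ
  have hδ0 : 0 < δ := by rw [hδ]; linarith
  obtain ⟨γ, hγ0, hγ1, hγ⟩ := exists_gamma k hδ0
  obtain ⟨U, ε, pr, hUm, hUγ, hε, hpr⟩ := exists_pred (μ := μ) hs hσ hγ0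
  choose E hEcard hEcov using fun n => exists_cover hf μ n hε a
  -- choice of `N`
  set r : ℝ := Real.exp (-δ) with hr
  have hr1 : r < 1 := by rw [hr, Real.exp_lt_one_iff]; linarith
  have hr0 : 0 < r := Real.exp_pos _
  have hsummable : Summable (fun m : ℕ => r ^ m) := summable_geometric_of_lt_one hr0.le hr1
  obtain ⟨N, hN, hN1⟩ := (((tendsto_sum_nat_add (fun m : ℕ => r ^ m)).eventually_lt_const
    (show (0 : ℝ) < 1 / 2 by norm_num)).and (eventually_ge_atTop 1)).exists
  -- choice of the final length
  let D : ℕ → Set X := fun j => (⋃ m ∈ Finset.Ico N (N + j), ⋃ y ∈ E m, bowenBall f y m ε)ᶜ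
  have hDm : ∀ j, MeasurableSet (D j) := fun j =>
    (Finset.measurableSet_biUnion _ fun m _ => Finset.measurableSet_biUnion _ fun y _ =>
      (isOpen_bowenBall hf y m ε).measurableSet).compl
  have hDanti : Antitone D := by
    intro i j hij
    apply Set.compl_subset_compl.2
    apply Set.biUnion_subset_biUnion_left
    intro m hm
    have hm' := Finset.mem_Ico.1 hm
    exact Finset.mem_Ico.2 ⟨hm'.1, by omega⟩
  have hD0 : μ (⋂ j, D j) = 0 := by
    refine measure_mono_null ?_ (ae_iff.1 hae)
    intro x hx hlt
    have hlow : lowEnt f μ (ε / 2) x < (a : EReal) := by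
      refine lt_of_le_of_lt ?_ hlt
      rw [localEntropy_eq]
      exact le_iSup₂_of_le (ε / 2) (by positivity) le_rfl
    obtain ⟨m, hm, hle⟩ := (Filter.frequently_atTop.1 (frequently_le_of_lowEnt_lt hlow)) N
    obtain ⟨y, hy, hxy⟩ := hEcov m x hle
    have hxm := Set.mem_iInter.1 hx (m + 1)
    apply hxm
    simp only [Set.mem_iUnion]
    exact ⟨m, Finset.mem_Ico.2 ⟨hm, by omega⟩, y, hy, hxy⟩
  have hDt : Tendsto (fun j => μ (D j)) atTop (nhds 0) := by
    have := tendsto_measure_iInter_atTop (μ := μ) (fun j => (hDm j).nullMeasurableSet) hDanti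
      ⟨0, measure_ne_top _ _⟩
    rwa [hD0] at this
  obtain ⟨j, hj⟩ := (hDt.eventually_lt_const (ENNReal.ofReal_pos.2 hγ0)).exists
  have hDγ : (μ (D j)).toReal ≤ γ := ENNReal.toReal_le_of_le_ofReal hγ0.le hj.le
  -- the code
  set β := a + δ with hβ
  set t := Finset.Ico N (N + j) with ht
  set M := N + j with hM
  set κ : ℕ → ℝ := fun m => Real.exp (-β * m) with hκdef
  have hκ : ∀ m, 0 < κ m := fun m => Real.exp_pos _
  set p : X → ℕ → {A // A ∈ s} := fun y i => pr (f^[i] y) with hp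
  have hsum : ∑ m ∈ t, κ m * (E m).card ≤ 1 / 2 := by
    have e1 : ∀ m ∈ t, κ m * (E m).card ≤ r ^ m := by
      intro m _
      calc κ m * (E m).card ≤ κ m * Real.exp (m * a) :=
            mul_le_mul_of_nonneg_left (hEcard m) (hκ m).le
        _ = r ^ m := by
            rw [hκdef, hr, ← Real.exp_nat_mul, ← Real.exp_add]
            congr 1
            rw [hβ]; ring
    refine (Finset.sum_le_sum e1).trans ?_
    rw [ht, Finset.sum_Ico_eq_sum_range]
    refine le_trans ?_ hN.le
    have e2 : Summable (fun m : ℕ => r ^ (m + N)) := (summable_nat_add_iff N).2 hsummable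
    refine le_trans (le_of_eq ?_) (e2.sum_le_tsum (Finset.range (N + j - N))
      (fun i _ => by positivity))
    exact Finset.sum_congr rfl fun i _ => by rw [add_comm]
  have hgood : ∀ x, x ∉ D j → ∃ m ∈ t, ∃ y ∈ E m, ∀ i < m, f^[i] x ∉ U →
      σ (f^[i] x) = p y i := by
    intro x hx
    have hx' := Set.notMem_compl_iff.1 hx
    simp only [Set.mem_iUnion] at hx'
    obtain ⟨m, hm, y, hy, hxy⟩ := hx'
    exact ⟨m, hm, y, hy, fun i hi hU => hpr _ _ hU (hxy i hi)⟩
  set φ : X → ℝ := fun x => (β - Real.log (1 - γ)) +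
        U.indicator (fun _ => Real.log (k / γ)) x +
        (D j).indicator (fun _ => Real.log (2 * k)) x with hφ
  have hi1 : Integrable (U.indicator (fun _ => Real.log (k / γ))) μ :=
    (integrable_const _).indicator hUm
  have hi2 : Integrable ((D j).indicator (fun _ => Real.log (2 * k))) μ :=
    (integrable_const _).indicator (hDm j)
  have hφi : Integrable φ μ := ((integrable_const _).add hi1).add hi2
  have hφint : ∫ x, φ x ∂μ ≤ b := by
    have e0 : ∫ x, φ x ∂μ = (β - Real.log (1 - γ)) + (μ U).toReal * Real.log (k / γ) +
        (μ (D j)).toReal * Real.log (2 * k) := by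
      have hi3 : Integrable (fun x => (β - Real.log (1 - γ)) +
          U.indicator (fun _ => Real.log (k / γ)) x) μ := (integrable_const _).add hi1
      simp only [hφ]
      rw [integral_add hi3 hi2, integral_add (integrable_const _) hi1,
        integral_indicator_const _ hUm, integral_indicator_const _ (hDm j)]
      simp [measureReal_def]
    rw [e0]
    have e1 : Real.log (k / γ) = Real.log k - Real.log γ :=
      Real.log_div (by linarith) hγ0.ne'
    have e2 : 0 ≤ Real.log (k / γ) := Real.log_nonneg (by rw [le_div_iff₀ hγ0]; linarith)
    have e3 : 0 ≤ Real.log (2 * k) := Real.log_nonneg (by linarith)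
    have e4 := mul_le_mul_of_nonneg_right hUγ e2
    have e5 := mul_le_mul_of_nonneg_right hDγ e3
    rw [e1] at e4 ⊢
    have e6 : a + 2 * δ = b := by rw [hδ]; ring
    linarith
  refine ⟨M * Real.log (2 * k), fun n => ?_⟩
  set nm : X → (Fin n → {A // A ∈ s}) := fun x => fun i : Fin n => σ (f^[(i : ℕ)] x) with hnm
  have hcell := fun w => cell_eq hσ f n w
  have hnmm : ∀ w, MeasurableSet (nm ⁻¹' {w}) := fun w => by
    rw [← hcell w]; exact cell_meas hs hf.measurable w
  set G : (Fin n → {A // A ∈ s}) → ℝ := fun w => -Real.log (Qc t E p κ γ n (wext w)) with hG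
  obtain ⟨hGi, hGint⟩ := integral_fin μ nm hnmm G
  have hP1 : ∑ w, (μ (nm ⁻¹' {w})).toReal = 1 := by
    have := (integral_fin μ nm hnmm (fun _ => 1)).2
    simpa using this.symm
  have hH : dynH f μ s n ≤ ∫ x, G (nm x) ∂μ := by
    rw [hGint]
    unfold dynH
    simp only [hcell]
    refine gibbs (fun w => (μ (nm ⁻¹' {w})).toReal) (fun w => Qc t E p κ γ n (wext w))
      (fun w => ENNReal.toReal_nonneg) hP1 (fun w => Qc_pos hκ hγ0 hγ1 _ _) ?_
    rw [← wsum_eq]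
    exact wsum_Qc_le hκ hγ0 hγ1 hsum n
  have hcompi : ∀ i, Integrable (fun x => φ (f^[i] x)) μ := fun i =>
    (hinv.iterate i).integrable_comp_of_integrable hφi
  have hcomp : ∀ i, ∫ x, φ (f^[i] x) ∂μ = ∫ x, φ x ∂μ := by
    intro i
    have hmp := hinv.iterate i
    have e1 : ∫ y, φ y ∂(μ.map f^[i]) = ∫ x, φ (f^[i] x) ∂μ :=
      integral_map hmp.measurable.aemeasurable (by rw [hmp.map_eq]; exact hφi.aestronglyMeasurable)
    rw [← e1, hmp.map_eq]
  have hsumi : Integrable (fun x => ∑ i ∈ Finset.range n, φ (f^[i] x)) μ :=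
    integrable_finsetSum _ fun i _ => hcompi i
  calc dynH f μ s n ≤ ∫ x, G (nm x) ∂μ := hH
    _ ≤ ∫ x, ((∑ i ∈ Finset.range n, φ (f^[i] x)) + M * Real.log (2 * k)) ∂μ := by
        refine integral_mono hGi (hsumi.add (integrable_const _)) fun x => ?_
        refine pointwise_bound hγ0 hγ1 (by linarith) ?_ hgood n x (wext (nm x)) ?_
        · intro m hm
          have := Finset.mem_Ico.1 hm
          omega
        · intro i hi
          simp [wext, hi, hnm]
    _ = n * (∫ x, φ x ∂μ) + M * Real.log (2 * k) := by
        rw [integral_add hsumi (integrable_const _), integral_finsetSum _ fun i _ => hcompi i]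
        simp [hcomp]
    _ ≤ n * b + M * Real.log (2 * k) := by gcongr

lemma ks_le_essSup {f : X → X} (hf : Continuous f) {μ : Measure X} [IsProbabilityMeasure μ]
    (hinv : MeasurePreserving f μ μ) :
    ksEntropy f μ ≤ essSup (fun x => localEntropy f μ x) μ := by
  refine iSup₂_le fun s hs => ?_
  refine le_of_forall_gt_imp_ge_of_dense fun B hB => ?_
  obtain ⟨a, ha1, ha2⟩ := EReal.lt_iff_exists_real_btwn.1 hB
  obtain ⟨b, hb1, hb2⟩ := EReal.lt_iff_exists_real_btwn.1 ha2
  obtain ⟨b', hc1, hc2⟩ := EReal.lt_iff_exists_real_btwn.1 hb2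
  have hae : ∀ᵐ x ∂μ, localEntropy f μ x < a := ae_lt_of_essSup_lt ha1
  have ha0 : 0 < a := by
    obtain ⟨x, hx⟩ := hae.exists
    exact EReal.coe_pos.1 ((localEntropy_nonneg f μ x).trans_lt hx)
  have hab : a < b := EReal.coe_lt_coe_iff.1 hb1
  have hbb : b < b' := EReal.coe_lt_coe_iff.1 hc1
  obtain ⟨C, hC⟩ := dynH_le hf hinv hs ha0.le hab hae
  refine le_trans ?_ hc2.le
  refine Filter.liminf_le_of_frequently_le ?_
  refine Filter.Eventually.frequently ?_
  obtain ⟨M, hM⟩ := exists_nat_gt (C / (b' - b))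
  filter_upwards [eventually_ge_atTop (M + 1)] with n hn
  rw [EReal.coe_le_coe_iff]
  have hn0 : (0 : ℝ) < n := by
    have : 0 < n := by omega
    exact_mod_cast this
  rw [div_le_iff₀ hn0]
  rw [div_lt_iff₀ (by linarith)] at hM
  have h1 : (M : ℝ) ≤ n := by exact_mod_cast (by omega : M ≤ n)
  have := hC n
  nlinarith

end Final

end PaperAux

theorem entropyPressure_eq_essSup_localEntropy {X : Type*} [MetricSpace X] [CompactSpace X] [MeasurableSpace X] [BorelSpace X]
    (f : X → X) (hf : Continuous f)
    (μ : Measure X) (hp : IsProbabilityMeasure μ) (hinv : MeasurePreserving f μ μ) :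
    Pmu f (fun _ => 0) μ = essSup (fun x => localEntropy f μ x) μ ∧
    (Ergodic f μ →
      Pmu f (fun _ => 0) μ = ksEntropy f μ ∧
      ∀ᵐ x ∂μ, localEntropy f μ x = Pmu f (fun _ => 0) μ) := by
  have h1 : Pmu f (fun _ => 0) μ = essSup (fun x => localEntropy f μ x) μ :=
    le_antisymm (PaperAux.Pmu_le hf μ) (PaperAux.le_Pmu μ)
  refine ⟨h1, fun he => ⟨?_, ?_⟩⟩
  · rw [h1]
    exact le_antisymm (PaperAux.essSup_le_ks hf he) (PaperAux.ks_le_essSup hf hinv)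
  · rw [h1]
    exact PaperAux.localEntropy_ae_eq hf he
end
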